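/- In the fixed setup at parameter t0 with m = ⌊β+3⌋ (possibly enlarged by an absolute amount): if dim μ_{t0} < min(1, sd μ_{t0}), then there exist δ3 > 0 and ε0 > 0 such that for every t ∈ (B(t0, ε0) ∩ J) \ {t0} and every n ∈ ℕ with 2^{−nm−m} ≤ |t − t0| ≤ 2^{−nm+m}, one has (1/(3nm))·H(μ_t, D_{3nm}) ≥ dim μ_{t0} + δ3. -/

import Mathlib

/-!
Write `α = dim μ_{t₀}`, `h` for the entropy of `p` and `χ_t` for the Lyapunov exponent, both in base
2, so that `α < sd μ_{t₀} = h / χ_{t₀}`. Suppose that `H(μ_t, D_{3nm}) < (α + δ) 3nm` for a parameter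
`t` with `|t - t₀| ≈ 2^{-nm}`, and let `I` be a random word of length `n` with law `p^n`.

*Little entropy beyond the cylinder scale.* Up to bounded errors `μ_t` at scale `2^{-3nm}` is an
average, over the contraction ratio `τ` of `I`, of convolutions of the law of `f_{I,t}` given `τ` with
`τ μ_t` (`Good.Z_eq`). The measure `μ_t` has scale entropy at least about `α` on windows of a fixed
length, since this holds at `t₀` and depends on finitely many scales only. If the law of `f_{I,t}`
had entropy linear in `n` between the scale `2^{-nχ_t}` of the cylinders and `2^{-3nm}`, the
convolution would have more entropy than `μ_t` is assumed to have. Hence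
(`asymptotic`, from `Good.main_bound`) that entropy is `o(n)`. At `t₀` the same holds, and moreover
the entropy of `f_{I,t₀}` at scale `2^{-nχ_{t₀}}` is at most `α χ_{t₀} n + o(n)`, since
`H(μ_{t₀}, D_k) ~ α k` (`ent1_tendsto`).

*Entropy growth under convolution.* The step just used is an elementary form of an inverse theorem
for the entropy of convolutions (`core_step`, `core_sum`). A law which is spread at some scale is a
mixture of fair coins, many of them with well separated sides; its large convolution powers are nearly
uniform over the scales above by an anticoncentration estimate of Sperner type
(`coins_coeff_le`, `exists_pow_DD`). By the submodularity inequality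
`H(a * b * c) + H(a) ≤ H(a * b) + H(a * c)` (`HZ_submod`), each of the `k` factors of such a power
adds at most as much entropy as the first one, so already one factor has to add a definite amount.

*Transversality.* If two different words of length `n` have their points in a common cell of size
`2^{-3nm}` at `t₀`, then the distance of these points moves at speed at least `Cβ 2^{-nβ}` between
`t₀` and `t`, and since `m ≥ β + 3` the points are in different cells at `t` (`Loc.separation`). Hence
the cells at `t₀` and at `t` together determine `I`. On the other hand all points move by `O(2^{-nm})`
only, so the coarse cell at `t`, of size `2^{-nχ_t} ≥ 2^{-nm}`, is known from the cell at `t₀` up to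
boundedly many possibilities. By submodularity of entropy (`ent_le_of_pair`)
`n h ≤ α χ_{t₀} n + o(n)`, contradicting `α χ_{t₀} < h` for large `n`.

All laws are finitely supported: the measure `μ_t` enters only through its dyadic entropies, which are
compared with those of `f_{I,t}` for very long words `I` (`Link`, `Good.link`). Laws on `ℤ` are
elements of the group algebra of `ℤ`, whose product is convolution.
-/


open MeasureTheory Set Filter
open scoped ENNReal Classical

noncomputable section

/-- A measure is exact dimensional with dimension `d`: at a.e. point the local dimension
exists and equals `d`. -/
def ExactDim {X : Type*} [PseudoMetricSpace X] [MeasurableSpace X]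
    (μ : Measure X) (d : ℝ) : Prop :=
  ∀ᵐ x ∂μ, Tendsto (fun r : ℝ => Real.log (μ (Metric.ball x r)).toReal / Real.log r)
    (nhdsWithin 0 (Set.Ioi 0)) (nhds d)

/-- `f_{x,t}(0) = lim_n f_{x_1,t} ∘ ⋯ ∘ f_{x_n,t}(0)` for the IFS
`{y ↦ r i t · y + s i t}_{i}`, written as a series. -/
def codingPoint {Λ : Type*} (r s : Λ → ℝ → ℝ) (x : ℕ → Λ) (t : ℝ) : ℝ :=
  ∑' n : ℕ, (∏ k ∈ Finset.range n, r (x k) t) * s (x n) t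

/-- The metric `d(x,y) = 2^{-|x∧y|}` on `Λ^ℕ`, where `|x∧y|` is the length of the longest
common initial segment. -/
def seqDist {Λ : Type*} (x y : ℕ → Λ) : ℝ :=
  if x = y then 0 else (2 : ℝ) ^ (-((sInf {k : ℕ | x k ≠ y k} : ℕ) : ℤ))

/-- The similarity dimension `(Σ_i p_i log p_i) / (Σ_i p_i log |r_{i,t}|)`. -/
def simDim {Λ : Type*} [Fintype Λ] (p : Λ → ℝ) (r : Λ → ℝ → ℝ) (t : ℝ) : ℝ :=
  (∑ i : Λ, p i * Real.log (p i)) / (∑ i : Λ, p i * Real.log |r i t|)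

/-- `μ` is the self-similar measure associated to the IFS `{y ↦ r i t · y + s i t}_i` and the
probability vector `p`. -/
def IsSelfSimilarMeasure {Λ : Type*} [Fintype Λ] (r s : Λ → ℝ → ℝ) (p : Λ → ℝ) (t : ℝ)
    (μ : Measure ℝ) : Prop :=
  IsProbabilityMeasure μ ∧
    μ = ∑ i : Λ, ENNReal.ofReal (p i) • μ.map (fun x => r i t * x + s i t)

/-- The summand `-(m · log₂ m)` of base-2 Shannon entropy. -/
def negMulLog2 (m : ℝ≥0∞) : ℝ := -(m.toReal * Real.logb 2 m.toReal)

/-- Base-2 Shannon entropy of a measure on `ℝ` with respect to the generation-`k`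
dyadic partition. -/
def ent1 (μ : Measure ℝ) (k : ℕ) : ℝ :=
  ∑' j : ℤ, negMulLog2 (μ {y : ℝ | ⌊(2 : ℝ) ^ k * y⌋ = j})

/-- The composition `f_{I,t} = f_{i₁,t} ∘ ⋯ ∘ f_{i_k,t}` for a word `I = i₁…i_k`. -/
def wordFun {Λ : Type*} (r s : Λ → ℝ → ℝ) (I : List Λ) (t : ℝ) (x : ℝ) : ℝ :=
  I.foldr (fun i y => r i t * y + s i t) x

/-- The contraction ratio `r_{I,t}` of `f_{I,t}`. -/
def wordRatio {Λ : Type*} (r : Λ → ℝ → ℝ) (I : List Λ) (t : ℝ) : ℝ :=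
  (I.map fun i => r i t).prod

/-- The weight `p_I = p_{i₁} ⋯ p_{i_k}`. -/
def wordP {Λ : Type*} (p : Λ → ℝ) (I : List Λ) : ℝ := (I.map p).prod

/-- The generation `Λ_n = {I : |r_{I,t₀}| ≤ 2^{-n} < |r_{I⁻,t₀}|}`. -/
def genIdx {Λ : Type*} (r : Λ → ℝ → ℝ) (t0 : ℝ) (n : ℕ) : Set (List Λ) :=
  {I | I ≠ [] ∧ |wordRatio r I t0| ≤ (2 : ℝ) ^ (-(n : ℝ)) ∧
    (2 : ℝ) ^ (-(n : ℝ)) < |wordRatio r I.dropLast t0|}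

/-! ### Entropy of finitely supported weights -/

section

/-- Expectation of `φ` under the finitely supported signed measure `a`, as a linear map in `a`. -/
def Ex {ι : Type*} (φ : ι → ℝ) : (ι →₀ ℝ) →ₗ[ℝ] ℝ := Finsupp.linearCombination ℝ φ

/-- Total mass of a finitely supported weight. -/
def mass {ι : Type*} : (ι →₀ ℝ) →ₗ[ℝ] ℝ := Ex (fun _ => 1)

/-- Base-2 Shannon entropy `-∑ a_i log₂ a_i` of a finitely supported weight. The weight is not
normalised, so the same formula applies to pieces of a probability law. -/
def ent {ι : Type*} (a : ι →₀ ℝ) : ℝ := (a.sum fun _ x => Real.negMulLog x) / Real.log 2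

/-- `a` is a finitely supported probability law. -/
def IsP {ι : Type*} (a : ι →₀ ℝ) : Prop := (∀ i, 0 ≤ a i) ∧ mass a = 1

/-- `L` is a stochastic map (Markov kernel): it sends point masses to probability laws. -/
def IsStoch {ι κ : Type*} (L : (ι →₀ ℝ) →ₗ[ℝ] (κ →₀ ℝ)) : Prop :=
  ∀ x, IsP (L (Finsupp.single x 1))

lemma log2_pos : 0 < Real.log 2 := Real.log_pos (by norm_num)

section basics
variable {ι κ : Type*}

lemma Ex_eq_sum (φ : ι → ℝ) (a : ι →₀ ℝ) : Ex φ a = ∑ x ∈ a.support, a x * φ x := by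
  simp [Ex, Finsupp.linearCombination_apply, Finsupp.sum]

lemma Ex_eq_sum_of_subset (φ : ι → ℝ) (a : ι →₀ ℝ) {S : Finset ι} (h : a.support ⊆ S) :
    Ex φ a = ∑ x ∈ S, a x * φ x := by
  rw [Ex_eq_sum]
  refine Finset.sum_subset h ?_
  intro x _ hx
  simp [Finsupp.notMem_support_iff.mp hx]

lemma mass_eq_sum (a : ι →₀ ℝ) : mass a = ∑ x ∈ a.support, a x := by
  simp [mass, Ex_eq_sum]

lemma mass_eq_sum_of_subset (a : ι →₀ ℝ) {S : Finset ι} (h : a.support ⊆ S) :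
    mass a = ∑ x ∈ S, a x := by
  rw [mass, Ex_eq_sum_of_subset _ _ h]; simp

@[simp] lemma Ex_single (φ : ι → ℝ) (x : ι) (c : ℝ) : Ex φ (Finsupp.single x c) = c * φ x := by
  simp [Ex]

@[simp] lemma mass_single (x : ι) (c : ℝ) : mass (Finsupp.single x c) = c := by
  simp [mass]

lemma Ex_mapDomain (φ : κ → ℝ) (f : ι → κ) (a : ι →₀ ℝ) :
    Ex φ (a.mapDomain f) = Ex (fun x => φ (f x)) a := by
  simp only [Ex, Finsupp.linearCombination_mapDomain]; rfl

@[simp] lemma mass_mapDomain (f : ι → κ) (a : ι →₀ ℝ) : mass (a.mapDomain f) = mass a := by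
  simp [mass, Ex_mapDomain]

lemma Ex_mono {φ ψ : ι → ℝ} {a : ι →₀ ℝ} (ha : ∀ i, 0 ≤ a i)
    (h : ∀ x, a x ≠ 0 → φ x ≤ ψ x) : Ex φ a ≤ Ex ψ a := by
  rw [Ex_eq_sum, Ex_eq_sum]
  refine Finset.sum_le_sum fun x hx => mul_le_mul_of_nonneg_left (h x ?_) (ha x)
  exact Finsupp.mem_support_iff.mp hx

lemma Ex_nonneg {φ : ι → ℝ} {a : ι →₀ ℝ} (ha : ∀ i, 0 ≤ a i)
    (h : ∀ x, a x ≠ 0 → 0 ≤ φ x) : 0 ≤ Ex φ a := by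
  rw [Ex_eq_sum]
  refine Finset.sum_nonneg fun x hx => mul_nonneg (ha x) (h x ?_)
  exact Finsupp.mem_support_iff.mp hx

lemma Ex_add_fun (φ ψ : ι → ℝ) (a : ι →₀ ℝ) : Ex (fun x => φ x + ψ x) a = Ex φ a + Ex ψ a := by
  simp [Ex_eq_sum, mul_add, Finset.sum_add_distrib]

lemma Ex_smul_fun (c : ℝ) (φ : ι → ℝ) (a : ι →₀ ℝ) : Ex (fun x => c * φ x) a = c * Ex φ a := by
  simp only [Ex_eq_sum, Finset.mul_sum]
  exact Finset.sum_congr rfl fun x _ => by ring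

lemma Ex_const (c : ℝ) (a : ι →₀ ℝ) : Ex (fun _ => c) a = c * mass a := by
  rw [mass, ← Ex_smul_fun]; simp

lemma mapDomain_nonneg {a : ι →₀ ℝ} (ha : ∀ i, 0 ≤ a i) (f : ι → κ) (y : κ) :
    0 ≤ a.mapDomain f y := by
  rw [Finsupp.mapDomain, Finsupp.sum_apply]
  refine Finset.sum_nonneg fun x _ => ?_
  show 0 ≤ (Finsupp.single (f x) (a x)) y
  rw [Finsupp.single_apply]; split_ifs; exacts [ha x, le_rfl]

lemma IsP.mapDomain {a : ι →₀ ℝ} (ha : IsP a) (f : ι → κ) : IsP (a.mapDomain f) :=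
  ⟨mapDomain_nonneg ha.1 f, by rw [mass_mapDomain, ha.2]⟩

lemma isP_single (x : ι) : IsP (Finsupp.single x (1 : ℝ)) :=
  ⟨fun i => by rw [Finsupp.single_apply]; split_ifs <;> norm_num, by simp⟩

lemma isP_mix {W : Type*} {S : Finset W} {p : W → ℝ} {A : W → ι →₀ ℝ}
    (hp : ∀ w ∈ S, 0 ≤ p w) (hp1 : ∑ w ∈ S, p w = 1) (hA : ∀ w ∈ S, IsP (A w)) :
    IsP (∑ w ∈ S, p w • A w) := by
  refine ⟨fun i => ?_, ?_⟩
  · rw [Finsupp.finsetSum_apply]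
    exact Finset.sum_nonneg fun w hw => mul_nonneg (hp w hw) ((hA w hw).1 i)
  · rw [map_sum, ← hp1]
    refine Finset.sum_congr rfl fun w hw => ?_
    rw [map_smul, (hA w hw).2]; simp

lemma IsP.le_one {a : ι →₀ ℝ} (ha : IsP a) (i : ι) : a i ≤ 1 := by
  by_cases h : a i = 0
  · rw [h]; norm_num
  · rw [← ha.2, mass_eq_sum]
    exact Finset.single_le_sum (f := fun x => a x) (fun x _ => ha.1 x) (Finsupp.mem_support_iff.mpr h)

lemma ent_eq_of_subset (a : ι →₀ ℝ) {S : Finset ι} (h : a.support ⊆ S) :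
    ent a = (∑ x ∈ S, Real.negMulLog (a x)) / Real.log 2 := by
  rw [ent, Finsupp.sum_of_support_subset a h _ (by simp)]

lemma IsP.ent_nonneg {a : ι →₀ ℝ} (ha : IsP a) : 0 ≤ ent a := by
  refine div_nonneg (Finset.sum_nonneg fun x _ => ?_) log2_pos.le
  exact Real.negMulLog_nonneg (ha.1 x) (ha.le_one x)

@[simp] lemma ent_single (x : ι) : ent (Finsupp.single x (1 : ℝ)) = 0 := by
  simp [ent]

/-- Every linear map is determined by its values on point masses. -/
lemma lin_apply (L : (ι →₀ ℝ) →ₗ[ℝ] (κ →₀ ℝ)) (a : ι →₀ ℝ) {S : Finset ι} (h : a.support ⊆ S)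
    (y : κ) : L a y = ∑ x ∈ S, a x * L (Finsupp.single x 1) y := by
  have : a = ∑ x ∈ S, a x • Finsupp.single x (1 : ℝ) := by
    conv_lhs => rw [← Finsupp.sum_single a]
    rw [Finsupp.sum_of_support_subset a h _ (by simp)]
    simp
  conv_lhs => rw [this]
  rw [map_sum, Finsupp.finsetSum_apply]
  refine Finset.sum_congr rfl fun x _ => ?_
  rw [map_smul]; rfl

lemma IsStoch.nonneg {L : (ι →₀ ℝ) →ₗ[ℝ] (κ →₀ ℝ)} (hL : IsStoch L) {a : ι →₀ ℝ}
    (ha : ∀ i, 0 ≤ a i) (y : κ) : 0 ≤ L a y := by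
  rw [lin_apply L a subset_rfl]
  exact Finset.sum_nonneg fun x _ => mul_nonneg (ha x) ((hL x).1 y)

lemma IsStoch.mass {L : (ι →₀ ℝ) →ₗ[ℝ] (κ →₀ ℝ)} (hL : IsStoch L) (a : ι →₀ ℝ) :
    mass (L a) = mass a := by
  have : (_root_.mass).comp L = (_root_.mass : (ι →₀ ℝ) →ₗ[ℝ] ℝ) := by
    refine Finsupp.lhom_ext' fun x => LinearMap.ext_ring ?_
    simpa using (hL x).2
  exact congrArg (fun F => F a) this

lemma IsStoch.isP {L : (ι →₀ ℝ) →ₗ[ℝ] (κ →₀ ℝ)} (hL : IsStoch L) {a : ι →₀ ℝ} (ha : IsP a) :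
    IsP (L a) := ⟨hL.nonneg ha.1, by rw [hL.mass, ha.2]⟩

lemma stoch_lmapDomain (f : ι → κ) : IsStoch (Finsupp.lmapDomain ℝ ℝ f) := by
  intro x
  simpa using isP_single (f x)

lemma log_sum_aux {a A s S : ℝ} (ha : 0 ≤ a) (haA : a ≤ A) (hs : 0 < s) (hS : 0 < S) :
    a - A * s / S ≤ a * (Real.log a - Real.log A) - a * (Real.log s - Real.log S) := by
  rcases ha.eq_or_lt with h | h
  · subst h
    simp only [zero_mul, sub_zero, zero_sub]
    have : 0 ≤ A * s / S := by positivity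
    linarith
  · have hA : 0 < A := lt_of_lt_of_le h haA
    have h1 := Real.log_le_sub_one_of_pos (show 0 < A * s / (a * S) by positivity)
    rw [Real.log_div (by positivity) (by positivity), Real.log_mul hA.ne' hs.ne',
      Real.log_mul h.ne' hS.ne'] at h1
    have h2 := mul_le_mul_of_nonneg_left h1 h.le
    have h3 : a * (A * s / (a * S) - 1) = A * s / S - a := by field_simp
    rw [h3] at h2
    linarith

lemma log_sum_two {a A a' A' : ℝ} (ha : 0 ≤ a) (haA : a ≤ A) (ha' : 0 ≤ a') (haA' : a' ≤ A') :
    (a + a') * (Real.log (a + a') - Real.log (A + A')) ≤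
      a * (Real.log a - Real.log A) + a' * (Real.log a' - Real.log A') := by
  rcases (add_nonneg ha ha').eq_or_lt with h | h
  · have h1 : a = 0 := by linarith
    have h2 : a' = 0 := by linarith
    simp [h1, h2]
  · have hS : 0 < A + A' := by linarith
    have h1 := log_sum_aux ha haA h hS
    have h2 := log_sum_aux ha' haA' h hS
    have h3 : A * (a + a') / (A + A') + A' * (a + a') / (A + A') = a + a' := by field_simp
    linarith

/-- The entropy defect `η(a+b) - η(a) - η(b)`, a convex function homogeneous of degree one. -/
def phi (a b : ℝ) : ℝ := Real.negMulLog (a + b) - Real.negMulLog a - Real.negMulLog b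

/-- Subadditivity of `phi`, a form of the log-sum inequality. -/
lemma phi_add_le {a b a' b' : ℝ} (ha : 0 ≤ a) (hb : 0 ≤ b) (ha' : 0 ≤ a') (hb' : 0 ≤ b') :
    phi (a + a') (b + b') ≤ phi a b + phi a' b' := by
  have h1 := log_sum_two (A := a + b) (A' := a' + b') ha (by linarith) ha' (by linarith)
  have h2 := log_sum_two (A := a + b) (A' := a' + b') hb (by linarith) hb' (by linarith)
  have e : a + a' + (b + b') = a + b + (a' + b') := by ring
  simp only [phi, Real.negMulLog_def, e]
  linarith

lemma phi_zero : phi 0 0 = 0 := by simp [phi]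

lemma phi_mul (c a b : ℝ) : phi (c * a) (c * b) = c * phi a b := by
  simp only [phi, ← mul_add, Real.negMulLog_mul]; ring

lemma phi_sum_le {S : Finset ι} {f g : ι → ℝ} (hf : ∀ x ∈ S, 0 ≤ f x) (hg : ∀ x ∈ S, 0 ≤ g x) :
    phi (∑ x ∈ S, f x) (∑ x ∈ S, g x) ≤ ∑ x ∈ S, phi (f x) (g x) := by
  induction S using Finset.induction_on with
  | empty => simp [phi_zero]
  | insert x S hx ih =>
    rw [Finset.sum_insert hx, Finset.sum_insert hx, Finset.sum_insert hx]
    have h := phi_add_le (hf x (by simp)) (hg x (by simp))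
      (Finset.sum_nonneg fun y hy => hf y (Finset.mem_insert_of_mem hy))
      (Finset.sum_nonneg fun y hy => hg y (Finset.mem_insert_of_mem hy))
    have := ih (fun y hy => hf y (Finset.mem_insert_of_mem hy)) (fun y hy => hg y (Finset.mem_insert_of_mem hy))
    linarith

lemma phi_nonpos {a b : ℝ} (ha : 0 ≤ a) (hb : 0 ≤ b) : phi a b ≤ 0 := by
  -- comparison with the two pure splittings, where the defect vanishes
  have := phi_add_le ha le_rfl le_rfl hb
  simpa [phi] using this

lemma negMulLog_sum_le {S : Finset ι} {f : ι → ℝ} (hf : ∀ x ∈ S, 0 ≤ f x) :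
    Real.negMulLog (∑ x ∈ S, f x) ≤ ∑ x ∈ S, Real.negMulLog (f x) := by
  induction S using Finset.induction_on with
  | empty => simp
  | insert x S hx ih =>
    rw [Finset.sum_insert hx, Finset.sum_insert hx]
    have h := phi_nonpos (hf x (by simp)) (Finset.sum_nonneg fun y hy => hf y (Finset.mem_insert_of_mem hy))
    have := ih (fun y hy => hf y (Finset.mem_insert_of_mem hy))
    simp only [phi] at h
    linarith

/-- Data processing for a mixture of two weights: a stochastic map decreases the difference between
the entropy of the mixture and the entropies of its parts. -/
lemma ent_two_processing {L : (ι →₀ ℝ) →ₗ[ℝ] (κ →₀ ℝ)} (hL : IsStoch L) {a b : ι →₀ ℝ}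
    (ha : ∀ i, 0 ≤ a i) (hb : ∀ i, 0 ≤ b i) :
    ent (L (a + b)) - ent (L a) - ent (L b) ≤ ent (a + b) - ent a - ent b := by
  set S := a.support ∪ b.support ∪ (a + b).support with hS
  set T := (L a).support ∪ (L b).support ∪ (L (a + b)).support ∪
    S.biUnion (fun x => (L (Finsupp.single x 1)).support) with hT
  have sa : a.support ⊆ S := fun x hx => by simp only [hS, Finset.mem_union]; tauto
  have sb : b.support ⊆ S := fun x hx => by simp only [hS, Finset.mem_union]; tauto
  have sab : (a + b).support ⊆ S := fun x hx => by simp only [hS, Finset.mem_union]; tauto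
  have ta : (L a).support ⊆ T := fun x hx => by simp only [hT, Finset.mem_union]; tauto
  have tb : (L b).support ⊆ T := fun x hx => by simp only [hT, Finset.mem_union]; tauto
  have tab : (L (a + b)).support ⊆ T := fun x hx => by simp only [hT, Finset.mem_union]; tauto
  have tx : ∀ x ∈ S, (L (Finsupp.single x 1)).support ⊆ T := fun x hx y hy => by
    simp only [hT, Finset.mem_union, Finset.mem_biUnion]
    exact Or.inr ⟨x, hx, hy⟩
  rw [ent_eq_of_subset _ sa, ent_eq_of_subset _ sb, ent_eq_of_subset _ sab,
    ent_eq_of_subset _ ta, ent_eq_of_subset _ tb, ent_eq_of_subset _ tab,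
    ← sub_div, ← sub_div, ← sub_div, ← sub_div]
  refine div_le_div_of_nonneg_right ?_ log2_pos.le
  rw [← Finset.sum_sub_distrib, ← Finset.sum_sub_distrib, ← Finset.sum_sub_distrib,
    ← Finset.sum_sub_distrib]
  have e1 : ∀ y ∈ T, Real.negMulLog (L (a + b) y) - Real.negMulLog (L a y)
      - Real.negMulLog (L b y) ≤ ∑ x ∈ S, L (Finsupp.single x 1) y * phi (a x) (b x) := by
    intro y _
    rw [map_add, Finsupp.add_apply]
    change phi (L a y) (L b y) ≤ _
    rw [lin_apply L a sa, lin_apply L b sb]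
    refine (phi_sum_le (fun x _ => mul_nonneg (ha x) ((hL x).1 y))
      (fun x _ => mul_nonneg (hb x) ((hL x).1 y))).trans (le_of_eq ?_)
    refine Finset.sum_congr rfl fun x _ => ?_
    rw [mul_comm (a x), mul_comm (b x), phi_mul]
  refine (Finset.sum_le_sum e1).trans (le_of_eq ?_)
  rw [Finset.sum_comm]
  refine Finset.sum_congr rfl fun x hx => ?_
  rw [← Finset.sum_mul, ← mass_eq_sum_of_subset _ (tx x hx), (hL x).2, one_mul]
  rfl

@[simp] lemma ent_zero : ent (0 : ι →₀ ℝ) = 0 := by simp [ent]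

/-- Data processing: a stochastic map does not increase the gap between the entropy of a sum
and the sum of the entropies. -/
lemma ent_processing {L : (ι →₀ ℝ) →ₗ[ℝ] (κ →₀ ℝ)} (hL : IsStoch L) {W : Type*} {S : Finset W}
    {A : W → ι →₀ ℝ} (hA : ∀ w ∈ S, ∀ i, 0 ≤ A w i) :
    ent (L (∑ w ∈ S, A w)) - ∑ w ∈ S, ent (L (A w)) ≤
      ent (∑ w ∈ S, A w) - ∑ w ∈ S, ent (A w) := by
  induction S using Finset.induction_on with
  | empty => simp
  | insert x S hx ih =>
    rw [Finset.sum_insert hx, Finset.sum_insert hx, Finset.sum_insert hx]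
    have h := ent_two_processing hL (hA x (by simp)) (b := ∑ w ∈ S, A w) (fun i => by
      rw [Finsupp.finsetSum_apply]
      exact Finset.sum_nonneg fun y hy => hA y (Finset.mem_insert_of_mem hy) i)
    have := ih (fun y hy => hA y (Finset.mem_insert_of_mem hy))
    linarith

lemma ent_smul (c : ℝ) (a : ι →₀ ℝ) :
    ent (c • a) = c * ent a + Real.negMulLog c / Real.log 2 * mass a := by
  rw [ent_eq_of_subset (c • a) (Finsupp.support_smul : _ ⊆ a.support),
    ent_eq_of_subset a subset_rfl, mass_eq_sum]
  simp only [Finsupp.smul_apply, smul_eq_mul, Real.negMulLog_mul, Finset.sum_add_distrib,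
    ← Finset.sum_mul, ← Finset.mul_sum]
  ring

/-- Data processing for mixtures of probability laws. -/
lemma ent_mix_processing {L : (ι →₀ ℝ) →ₗ[ℝ] (κ →₀ ℝ)} (hL : IsStoch L) {W : Type*} {S : Finset W}
    {p : W → ℝ} {A : W → ι →₀ ℝ} (hp : ∀ w ∈ S, 0 ≤ p w) (hA : ∀ w ∈ S, IsP (A w)) :
    ent (L (∑ w ∈ S, p w • A w)) - ∑ w ∈ S, p w * ent (L (A w)) ≤
      ent (∑ w ∈ S, p w • A w) - ∑ w ∈ S, p w * ent (A w) := by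
  have h := ent_processing hL (S := S) (A := fun w => p w • A w)
    (fun w hw i => mul_nonneg (hp w hw) ((hA w hw).1 i))
  have e1 : ∑ w ∈ S, ent (L (p w • A w)) = ∑ w ∈ S, p w * ent (L (A w))
      + ∑ w ∈ S, Real.negMulLog (p w) / Real.log 2 := by
    rw [← Finset.sum_add_distrib]
    refine Finset.sum_congr rfl fun w hw => ?_
    rw [map_smul, ent_smul, hL.mass, (hA w hw).2, mul_one]
  have e2 : ∑ w ∈ S, ent (p w • A w) = ∑ w ∈ S, p w * ent (A w)
      + ∑ w ∈ S, Real.negMulLog (p w) / Real.log 2 := by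
    rw [← Finset.sum_add_distrib]
    refine Finset.sum_congr rfl fun w hw => ?_
    rw [ent_smul, (hA w hw).2, mul_one]
  rw [e1, e2] at h
  linarith

/-- Concavity of entropy. -/
lemma ent_mix_ge {W : Type*} {S : Finset W} {p : W → ℝ} {A : W → ι →₀ ℝ}
    (hp : ∀ w ∈ S, 0 ≤ p w) (hp1 : ∑ w ∈ S, p w = 1) (hA : ∀ w ∈ S, IsP (A w)) :
    ∑ w ∈ S, p w * ent (A w) ≤ ent (∑ w ∈ S, p w • A w) := by
  -- process by the map to a single point
  have h := ent_mix_processing (stoch_lmapDomain (fun _ : ι => ())) hp hA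
  have e : ∀ a : ι →₀ ℝ, IsP a → ent (Finsupp.lmapDomain ℝ ℝ (fun _ : ι => ()) a) = 0 := by
    intro a ha
    have hm := (stoch_lmapDomain (fun _ : ι => ())).isP ha
    set b := Finsupp.lmapDomain ℝ ℝ (fun _ : ι => ()) a
    have : b = Finsupp.single () 1 := by
      have h2 := hm.2
      rw [mass_eq_sum_of_subset b (S := {()}) (fun x _ => by simp)] at h2
      ext; simpa using h2
    rw [this, ent_single]
  rw [e _ (isP_mix hp hp1 hA), Finset.sum_eq_zero (fun w hw => by rw [e _ (hA w hw), mul_zero])] at h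
  linarith

lemma ent_sum_le {W : Type*} {S : Finset W} {A : W → ι →₀ ℝ} (hA : ∀ w ∈ S, ∀ i, 0 ≤ A w i) :
    ent (∑ w ∈ S, A w) ≤ ∑ w ∈ S, ent (A w) := by
  set T := S.biUnion (fun w => (A w).support) ∪ (∑ w ∈ S, A w).support with hT
  have t1 : (∑ w ∈ S, A w).support ⊆ T := Finset.subset_union_right
  have t2 : ∀ w ∈ S, (A w).support ⊆ T := fun w hw x hx => by
    simp only [hT, Finset.mem_union, Finset.mem_biUnion]
    exact Or.inl ⟨w, hw, hx⟩
  rw [ent_eq_of_subset _ t1, Finset.sum_congr rfl fun w hw => ent_eq_of_subset _ (t2 w hw),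
    ← Finset.sum_div, Finset.sum_comm]
  refine div_le_div_of_nonneg_right (Finset.sum_le_sum fun x _ => ?_) log2_pos.le
  rw [Finsupp.finsetSum_apply]
  exact negMulLog_sum_le fun w hw => hA w hw x

/-- The entropy of a mixture exceeds the mean entropy by at most that of the mixing law. -/
lemma ent_mix_le {W : Type*} {p : W →₀ ℝ} {A : W → ι →₀ ℝ}
    (hp : IsP p) (hA : ∀ w ∈ p.support, IsP (A w)) :
    ent (∑ w ∈ p.support, p w • A w) ≤ ∑ w ∈ p.support, p w * ent (A w) + ent p := by
  refine (ent_sum_le fun w hw i => mul_nonneg (hp.1 w) ((hA w hw).1 i)).trans (le_of_eq ?_)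
  rw [ent_eq_of_subset p subset_rfl, Finset.sum_div, ← Finset.sum_add_distrib]
  refine Finset.sum_congr rfl fun w hw => ?_
  rw [ent_smul, (hA w hw).2, mul_one]

end basics

end

/-! ### Conditioning and submodularity -/

section

section laws
variable {Ω ι κ γ : Type*}

/-- Gibbs' inequality against an arbitrary positive weight. -/
lemma ent_gibbs {a : ι →₀ ℝ} (ha : IsP a) {S : Finset ι} (hS : a.support ⊆ S) {q : ι → ℝ}
    (hq : ∀ x ∈ S, 0 < q x) (hq1 : ∑ x ∈ S, q x ≤ 1) :
    ent a ≤ ∑ x ∈ S, a x * (-Real.logb 2 (q x)) := by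
  rw [ent_eq_of_subset a hS, div_le_iff₀ log2_pos, Finset.sum_mul]
  have h : ∀ x ∈ S, Real.negMulLog (a x) - a x * (-Real.logb 2 (q x)) * Real.log 2 ≤
      q x - a x := by
    intro x hx
    have e : a x * (-Real.logb 2 (q x)) * Real.log 2 = - a x * Real.log (q x) := by
      rw [Real.logb]; field_simp [log2_pos.ne']
    rw [e, Real.negMulLog_def]
    rcases (ha.1 x).eq_or_lt with h0 | h0
    · rw [← h0]; simpa using (hq x hx).le
    · have h1 := Real.log_le_sub_one_of_pos (div_pos (hq x hx) h0)
      rw [Real.log_div (hq x hx).ne' h0.ne'] at h1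
      have h2 := mul_le_mul_of_nonneg_left h1 h0.le
      have h3 : a x * (q x / a x - 1) = q x - a x := by field_simp
      rw [h3] at h2
      linarith
  have h2 := Finset.sum_le_sum h
  rw [Finset.sum_sub_distrib, Finset.sum_sub_distrib, ← mass_eq_sum_of_subset a hS, ha.2] at h2
  linarith

lemma IsP.support_nonempty {a : ι →₀ ℝ} (ha : IsP a) : a.support.Nonempty := by
  by_contra h
  have := ha.2
  rw [mass_eq_sum, Finset.not_nonempty_iff_eq_empty.mp h] at this
  simp at this

lemma ent_le_logb_card {a : ι →₀ ℝ} (ha : IsP a) {S : Finset ι} (hS : a.support ⊆ S) {N : ℝ}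
    (hN : (S.card : ℝ) ≤ N) : ent a ≤ Real.logb 2 N := by
  have hc : 0 < (S.card : ℝ) := by
    exact_mod_cast Finset.card_pos.mpr (ha.support_nonempty.mono hS)
  have h0 : 0 < N := hc.trans_le hN
  have := ent_gibbs ha hS (q := fun _ => N⁻¹) (fun _ _ => by positivity) (by
    rw [Finset.sum_const, nsmul_eq_mul, mul_inv_le_iff₀ h0]; linarith)
  rw [← Finset.sum_mul, ← mass_eq_sum_of_subset a hS, ha.2, Real.logb_inv] at this
  linarith

lemma neg_logb_le_ent {a : ι →₀ ℝ} (ha : IsP a) {c : ℝ} (h : ∀ x, a x ≤ c) :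
    -Real.logb 2 c ≤ ent a := by
  rw [ent_eq_of_subset a subset_rfl, Finset.sum_div]
  have : ∀ x ∈ a.support, a x * (-Real.logb 2 c) ≤ Real.negMulLog (a x) / Real.log 2 := by
    intro x hx
    have hx : 0 < a x := lt_of_le_of_ne (ha.1 x) (Finsupp.mem_support_iff.mp hx).symm
    have h1 : Real.logb 2 (a x) ≤ Real.logb 2 c :=
      Real.logb_le_logb_of_le (by norm_num) hx (h x)
    have e : Real.negMulLog (a x) / Real.log 2 = a x * (-Real.logb 2 (a x)) := by
      rw [Real.negMulLog_def, Real.logb]; ring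
    rw [e]
    exact mul_le_mul_of_nonneg_left (by linarith) hx.le
  refine le_trans (le_of_eq ?_) (Finset.sum_le_sum this)
  rw [← Finset.sum_mul, ← mass_eq_sum, ha.2, one_mul]

/-- The conditional law of `a` given `F = w`. -/
def condLaw (a : Ω →₀ ℝ) (F : Ω → κ) (w : κ) : Ω →₀ ℝ :=
  (a.mapDomain F w)⁻¹ • a.filter (fun x => F x = w)

lemma mapDomain_apply_eq_sum (a : Ω →₀ ℝ) (F : Ω → κ) (w : κ) :
    a.mapDomain F w = ∑ x ∈ a.support, if F x = w then a x else 0 := by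
  rw [Finsupp.mapDomain, Finsupp.sum_apply]
  refine Finset.sum_congr rfl fun x _ => ?_
  show (Finsupp.single (F x) (a x)) w = _
  rw [Finsupp.single_apply]

lemma mass_filter (a : Ω →₀ ℝ) (F : Ω → κ) (w : κ) :
    mass (a.filter (fun x => F x = w)) = a.mapDomain F w := by
  rw [mass_eq_sum_of_subset _ (S := a.support) (by
    intro x hx; rw [Finsupp.support_filter] at hx; exact (Finset.mem_filter.mp hx).1),
    mapDomain_apply_eq_sum]
  exact Finset.sum_congr rfl fun x _ => Finsupp.filter_apply _ _ _

lemma filter_nonneg {a : Ω →₀ ℝ} (ha : ∀ i, 0 ≤ a i) (P : Ω → Prop) (x : Ω) :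
    0 ≤ a.filter P x := by
  rw [Finsupp.filter_apply]; split_ifs; exacts [ha x, le_rfl]

lemma isP_condLaw {a : Ω →₀ ℝ} (ha : IsP a) {F : Ω → κ} {w : κ}
    (hw : w ∈ (a.mapDomain F).support) : IsP (condLaw a F w) := by
  have hw := Finsupp.mem_support_iff.mp hw
  refine ⟨fun x => mul_nonneg (inv_nonneg.mpr ((ha.mapDomain F).1 w)) (filter_nonneg ha.1 _ x), ?_⟩
  rw [condLaw, map_smul, mass_filter, smul_eq_mul, inv_mul_cancel₀ hw]

lemma condLaw_ne_zero {a : Ω →₀ ℝ} {F : Ω → κ} {w : κ} {x : Ω} (h : condLaw a F w x ≠ 0) :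
    a x ≠ 0 ∧ F x = w := by
  rw [condLaw, Finsupp.smul_apply, Finsupp.filter_apply] at h
  split_ifs at h with h1
  · exact ⟨fun h0 => h (by simp [h0]), h1⟩
  · simp at h

lemma mem_support_map {a : Ω →₀ ℝ} (ha : ∀ i, 0 ≤ a i) {F : Ω → κ} {x : Ω} (hx : a x ≠ 0) :
    F x ∈ (a.mapDomain F).support := by
  rw [Finsupp.mem_support_iff, mapDomain_apply_eq_sum]
  have hpos : 0 < a x := lt_of_le_of_ne (ha x) hx.symm
  have := Finset.single_le_sum (f := fun y => if F y = F x then a y else 0)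
    (fun y _ => by split_ifs; exacts [ha y, le_rfl]) (Finsupp.mem_support_iff.mpr hx)
  simp only [if_true] at this
  linarith

lemma exists_of_mem_support_map {a : Ω →₀ ℝ} {F : Ω → κ} {w : κ}
    (h : w ∈ (a.mapDomain F).support) : ∃ x, a x ≠ 0 ∧ F x = w := by
  rw [Finsupp.mem_support_iff, mapDomain_apply_eq_sum] at h
  obtain ⟨x, hx, hne⟩ := Finset.exists_ne_zero_of_sum_ne_zero h
  split_ifs at hne with h1
  · exact ⟨x, hne, h1⟩
  · exact absurd rfl hne

lemma sum_filter_eq {a : Ω →₀ ℝ} (ha : ∀ i, 0 ≤ a i) (F : Ω → κ) :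
    a = ∑ w ∈ (a.mapDomain F).support, a.filter (fun x => F x = w) := by
  ext x
  rw [Finsupp.finsetSum_apply]
  by_cases hx : a x = 0
  · rw [hx, Finset.sum_eq_zero]
    intro w _
    rw [Finsupp.filter_apply, hx, ite_self]
  · rw [Finset.sum_eq_single (F x)]
    · rw [Finsupp.filter_apply_pos]; rfl
    · intro w _ hw
      rw [Finsupp.filter_apply_neg]; exact fun h => hw h.symm
    · intro h; exact absurd (mem_support_map ha hx) h

lemma condLaw_smul {a : Ω →₀ ℝ} {F : Ω → κ} {w : κ} (hw : w ∈ (a.mapDomain F).support) :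
    a.mapDomain F w • condLaw a F w = a.filter (fun x => F x = w) := by
  rw [condLaw, smul_smul, mul_inv_cancel₀ (Finsupp.mem_support_iff.mp hw), one_smul]

lemma eq_sum_condLaw {a : Ω →₀ ℝ} (ha : ∀ i, 0 ≤ a i) (F : Ω → κ) :
    a = ∑ w ∈ (a.mapDomain F).support, a.mapDomain F w • condLaw a F w := by
  conv_lhs => rw [sum_filter_eq ha F]
  exact Finset.sum_congr rfl fun w hw => (condLaw_smul hw).symm

lemma mapDomain_eq_sum_condLaw {a : Ω →₀ ℝ} (ha : ∀ i, 0 ≤ a i) (F : Ω → κ) (G : Ω → γ) :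
    a.mapDomain G = ∑ w ∈ (a.mapDomain F).support,
      a.mapDomain F w • (condLaw a F w).mapDomain G := by
  have := congrArg (Finsupp.lmapDomain ℝ ℝ G) (eq_sum_condLaw ha F)
  rw [map_sum] at this
  simpa only [map_smul, Finsupp.lmapDomain_apply] using this

lemma ent_mapDomain_le {a : Ω →₀ ℝ} (ha : IsP a) (F : Ω → κ) : ent (a.mapDomain F) ≤ ent a := by
  have h := ent_mix_le (A := fun x => Finsupp.single (F x) (1 : ℝ)) ha (fun w _ => isP_single _)
  have e : ∑ w ∈ a.support, a w • Finsupp.single (F w) (1 : ℝ) = a.mapDomain F := by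
    rw [Finsupp.mapDomain, Finsupp.sum]
    exact Finset.sum_congr rfl fun x _ => by simp
  rw [e] at h
  simpa using h

/-- If `F` takes at most `N` values given `G`, then `H(F) ≤ H(G) + log₂ N`. -/
lemma ent_map_le_of_fiber {a : Ω →₀ ℝ} (ha : IsP a) (F : Ω → ι) (G : Ω → κ) {N : ℝ}
    (h : ∀ w, ∃ S : Finset ι, (S.card : ℝ) ≤ N ∧ ∀ x, a x ≠ 0 → G x = w → F x ∈ S) :
    ent (a.mapDomain F) ≤ ent (a.mapDomain G) + Real.logb 2 N := by
  rw [mapDomain_eq_sum_condLaw ha.1 G F]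
  have hG := ha.mapDomain G
  refine (ent_mix_le hG fun w hw => (isP_condLaw ha hw).mapDomain F).trans ?_
  have : ∑ w ∈ (a.mapDomain G).support, a.mapDomain G w * ent ((condLaw a G w).mapDomain F) ≤
      ∑ w ∈ (a.mapDomain G).support, a.mapDomain G w * Real.logb 2 N := by
    refine Finset.sum_le_sum fun w hw => mul_le_mul_of_nonneg_left ?_ (hG.1 w)
    obtain ⟨S, hS, h2⟩ := h w
    refine ent_le_logb_card ((isP_condLaw ha hw).mapDomain F) (S := S) ?_ hS
    intro y hy
    obtain ⟨x, hx, rfl⟩ := exists_of_mem_support_map hy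
    obtain ⟨h3, h4⟩ := condLaw_ne_zero hx
    exact h2 x h3 h4
  rw [← Finset.sum_mul, ← mass_eq_sum, hG.2, one_mul] at this
  linarith

/-- `F` is determined by `G` up to an additive integer error at most `k`. -/
lemma ent_map_le_of_near {a : Ω →₀ ℝ} (ha : IsP a) (F : Ω → ℤ) (G : Ω → κ) (φ : κ → ℤ) (k : ℕ)
    (h : ∀ x, a x ≠ 0 → |F x - φ (G x)| ≤ k) :
    ent (a.mapDomain F) ≤ ent (a.mapDomain G) + Real.logb 2 (2 * k + 1) := by
  refine ent_map_le_of_fiber ha F G fun w => ⟨Finset.Icc (φ w - k) (φ w + k), ?_, ?_⟩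
  · have : (φ w + k + 1 - (φ w - k)).toNat = 2 * k + 1 := by omega
    rw [Int.card_Icc, this]; push_cast; exact le_rfl
  · rintro x hx rfl
    have := abs_le.mp (h x hx)
    rw [Finset.mem_Icc]; constructor <;> linarith [this.1, this.2]

lemma ent_map_le_of_comp {a : Ω →₀ ℝ} (ha : IsP a) (F : Ω → ι) (G : Ω → κ) (φ : κ → ι)
    (h : ∀ x, a x ≠ 0 → F x = φ (G x)) :
    ent (a.mapDomain F) ≤ ent (a.mapDomain G) := by
  have := ent_map_le_of_fiber ha F G (N := 1) fun w => ⟨{φ w}, by simp, fun x hx hw => by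
    rw [Finset.mem_singleton, h x hx, hw]⟩
  simpa using this

lemma ent_le_of_inj {a : Ω →₀ ℝ} (ha : IsP a) (G : Ω → κ)
    (h : ∀ x y, a x ≠ 0 → a y ≠ 0 → G x = G y → x = y) : ent a ≤ ent (a.mapDomain G) := by
  have := ent_map_le_of_fiber ha id G (N := 1) fun w => by
    by_cases hw : ∃ x, a x ≠ 0 ∧ G x = w
    · obtain ⟨x, hx, rfl⟩ := hw
      exact ⟨{x}, by simp, fun y hy e => by simpa using h y x hy hx e⟩
    · exact ⟨∅, by simp, fun x hx e => absurd ⟨x, hx, e⟩ hw⟩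
  simpa using this

lemma ent_pair {a : Ω →₀ ℝ} (ha : ∀ i, 0 ≤ a i) (F : Ω → ι) (G : Ω → κ) :
    ent (a.mapDomain (fun x => (F x, G x))) =
      ∑ w ∈ (a.mapDomain F).support, ent ((a.filter (fun x => F x = w)).mapDomain G) := by
  have s1 : (a.mapDomain (fun x => (F x, G x))).support ⊆
      (a.mapDomain F).support ×ˢ (a.mapDomain G).support := by
    intro y hy
    obtain ⟨x, hx, rfl⟩ := exists_of_mem_support_map hy
    exact Finset.mem_product.mpr ⟨mem_support_map ha hx, mem_support_map ha hx⟩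
  have s2 : ∀ w, ((a.filter (fun x => F x = w)).mapDomain G).support ⊆
      (a.mapDomain G).support := by
    intro w y hy
    obtain ⟨x, hx, rfl⟩ := exists_of_mem_support_map hy
    rw [Finsupp.filter_apply] at hx
    refine mem_support_map ha fun h => hx ?_
    rw [h, ite_self]
  rw [ent_eq_of_subset _ s1, Finset.sum_product, Finset.sum_div]
  refine Finset.sum_congr rfl fun w _ => ?_
  rw [ent_eq_of_subset _ (s2 w)]
  congr 1
  refine Finset.sum_congr rfl fun y _ => ?_
  congr 1
  rw [mapDomain_apply_eq_sum, mapDomain_apply_eq_sum, Finsupp.support_filter, Finset.sum_filter]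
  refine Finset.sum_congr rfl fun x _ => ?_
  rw [Finsupp.filter_apply]
  simp only [Prod.mk.injEq]
  split_ifs <;> tauto

/-- Submodularity of entropy: coarsening `G` changes `H(G)` at least as much as it changes
`H(F, G)`. -/
lemma ent_submod {a : Ω →₀ ℝ} (ha : IsP a) (F : Ω → ι) (G : Ω → κ) (g : κ → γ) :
    ent (a.mapDomain (fun x => (F x, G x))) + ent (a.mapDomain (fun x => g (G x))) ≤
      ent (a.mapDomain (fun x => (F x, g (G x)))) + ent (a.mapDomain G) := by
  rw [ent_pair ha.1, ent_pair ha.1]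
  have h := ent_processing (stoch_lmapDomain g) (S := (a.mapDomain F).support)
    (A := fun w => (a.filter (fun x => F x = w)).mapDomain G)
    (fun w _ i => mapDomain_nonneg (filter_nonneg ha.1 _) G i)
  have e : ∑ w ∈ (a.mapDomain F).support, (a.filter (fun x => F x = w)).mapDomain G =
      a.mapDomain G := by
    have := congrArg (Finsupp.lmapDomain ℝ ℝ G) (sum_filter_eq ha.1 F)
    rw [map_sum] at this
    exact this.symm
  simp only [e, Finsupp.lmapDomain_apply, ← Finsupp.mapDomain_comp, Function.comp_def] at h
  linarith

end laws

end

/-! ### Laws on the integers, convolution and scale entropy -/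

section

/-- Finitely supported signed measures on `ℤ` with convolution as multiplication. -/
abbrev ZA := AddMonoidAlgebra ℝ ℤ

/-- The point mass at `n`. -/
def dlt (n : ℤ) : ZA := AddMonoidAlgebra.single n 1

/-- Entropy of a law on `ℤ`. -/
def HZ (a : ZA) : ℝ := ent a.coeff

/-- `a` is a probability law on `ℤ`. -/
def PZ (a : ZA) : Prop := IsP a.coeff

/-- The distribution of the integer random variable `F` under `a`. -/
def law {Ω : Type*} (a : Ω →₀ ℝ) (F : Ω → ℤ) : ZA := AddMonoidAlgebra.ofCoeff (a.mapDomain F)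

section conv
variable {Ω W : Type*}

lemma ZA_eq_sum (a : ZA) : a = ∑ n ∈ a.coeff.support, a.coeff n • dlt n := by
  apply AddMonoidAlgebra.coeff_injective
  rw [AddMonoidAlgebra.coeff_sum]
  conv_lhs => rw [← Finsupp.sum_single a.coeff]
  refine Finset.sum_congr rfl fun n _ => ?_
  rw [AddMonoidAlgebra.coeff_smul, dlt, AddMonoidAlgebra.coeff_single]; simp

lemma law_eq_sum (a : Ω →₀ ℝ) (F : Ω → ℤ) : law a F = ∑ x ∈ a.support, a x • dlt (F x) := by
  apply AddMonoidAlgebra.coeff_injective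
  rw [AddMonoidAlgebra.coeff_sum]
  show a.mapDomain F = _
  rw [Finsupp.mapDomain, Finsupp.sum]
  refine Finset.sum_congr rfl fun n _ => ?_
  rw [AddMonoidAlgebra.coeff_smul, dlt, AddMonoidAlgebra.coeff_single]; simp

lemma coeff_law (a : Ω →₀ ℝ) (F : Ω → ℤ) : (law a F).coeff = a.mapDomain F := rfl

lemma HZ_law (a : Ω →₀ ℝ) (F : Ω → ℤ) : HZ (law a F) = ent (a.mapDomain F) := rfl

lemma PZ_law {a : Ω →₀ ℝ} (ha : IsP a) (F : Ω → ℤ) : PZ (law a F) := ha.mapDomain F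

lemma dlt_mul (m n : ℤ) : dlt m * dlt n = dlt (m + n) := by
  rw [dlt, dlt, AddMonoidAlgebra.single_mul_single, mul_one]; rfl

lemma dlt_zero : dlt 0 = 1 := rfl

lemma PZ_dlt (n : ℤ) : PZ (dlt n) := isP_single n

lemma PZ_one : PZ 1 := PZ_dlt 0

lemma PZ_mix {S : Finset W} {p : W → ℝ} {A : W → ZA} (hp : ∀ w ∈ S, 0 ≤ p w)
    (hp1 : ∑ w ∈ S, p w = 1) (hA : ∀ w ∈ S, PZ (A w)) : PZ (∑ w ∈ S, p w • A w) := by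
  unfold PZ
  rw [AddMonoidAlgebra.coeff_sum]
  exact isP_mix (A := fun w => (A w).coeff) hp hp1 hA

lemma coeff_dlt_mul (n : ℤ) (a : ZA) : (dlt n * a).coeff = a.coeff.mapDomain (fun m => n + m) := by
  conv_lhs => rw [ZA_eq_sum a]
  rw [Finset.mul_sum, AddMonoidAlgebra.coeff_sum, Finsupp.mapDomain, Finsupp.sum]
  refine Finset.sum_congr rfl fun m _ => ?_
  rw [mul_smul_comm, dlt_mul, AddMonoidAlgebra.coeff_smul, dlt, AddMonoidAlgebra.coeff_single]
  simp

lemma PZ_dlt_mul (n : ℤ) {a : ZA} (ha : PZ a) : PZ (dlt n * a) := by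
  unfold PZ; rw [coeff_dlt_mul]; exact ha.mapDomain _

lemma PZ.sum_coeff {a : ZA} (ha : PZ a) : ∑ n ∈ a.coeff.support, a.coeff n = 1 := by
  rw [← mass_eq_sum, ha.2]

lemma mul_eq_sum (a b : ZA) : a * b = ∑ n ∈ a.coeff.support, a.coeff n • (dlt n * b) := by
  conv_lhs => rw [ZA_eq_sum a]
  rw [Finset.sum_mul]
  exact Finset.sum_congr rfl fun n _ => by rw [smul_mul_assoc]

lemma PZ.mul {a b : ZA} (ha : PZ a) (hb : PZ b) : PZ (a * b) := by
  rw [mul_eq_sum]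
  exact PZ_mix (fun n _ => ha.1 n) ha.sum_coeff fun n _ => PZ_dlt_mul n hb

lemma PZ.pow {a : ZA} (ha : PZ a) (k : ℕ) : PZ (a ^ k) := by
  induction k with
  | zero => rw [pow_zero]; exact PZ_one
  | succ k ih => rw [pow_succ]; exact ih.mul ha

lemma PZ_prod {S : Finset W} {A : W → ZA} (hA : ∀ w ∈ S, PZ (A w)) : PZ (∏ w ∈ S, A w) := by
  induction S using Finset.induction_on with
  | empty => simpa using PZ_one
  | insert x S hx ih =>
    rw [Finset.prod_insert hx]
    exact (hA x (Finset.mem_insert_self x S)).mul (ih fun w hw => hA w (Finset.mem_insert_of_mem hw))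

lemma HZ_dlt_mul (n : ℤ) {a : ZA} (ha : PZ a) : HZ (dlt n * a) = HZ a := by
  unfold HZ
  rw [coeff_dlt_mul]
  refine le_antisymm (ent_mapDomain_le ha _) (ent_le_of_inj ha _ fun x y _ _ h => ?_)
  simpa using h

lemma PZ.HZ_nonneg {a : ZA} (ha : PZ a) : 0 ≤ HZ a := IsP.ent_nonneg ha

lemma HZ_one : HZ 1 = 0 := ent_single (0 : ℤ)

lemma HZ_mix_ge {S : Finset W} {p : W → ℝ} {A : W → ZA} (hp : ∀ w ∈ S, 0 ≤ p w)
    (hp1 : ∑ w ∈ S, p w = 1) (hA : ∀ w ∈ S, PZ (A w)) :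
    ∑ w ∈ S, p w * HZ (A w) ≤ HZ (∑ w ∈ S, p w • A w) := by
  unfold HZ
  rw [AddMonoidAlgebra.coeff_sum]
  exact ent_mix_ge (A := fun w => (A w).coeff) hp hp1 hA

lemma HZ_mix_le {p : W →₀ ℝ} {A : W → ZA} (hp : IsP p) (hA : ∀ w ∈ p.support, PZ (A w)) :
    HZ (∑ w ∈ p.support, p w • A w) ≤ ∑ w ∈ p.support, p w * HZ (A w) + ent p := by
  unfold HZ
  rw [AddMonoidAlgebra.coeff_sum]
  exact ent_mix_le (A := fun w => (A w).coeff) hp hA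

/-- Convolution with `c`, as a linear map on finitely supported functions. -/
def convMap (c : ZA) : (ℤ →₀ ℝ) →ₗ[ℝ] (ℤ →₀ ℝ) where
  toFun b := (AddMonoidAlgebra.ofCoeff b * c).coeff
  map_add' x y := by rw [AddMonoidAlgebra.ofCoeff_add, add_mul, AddMonoidAlgebra.coeff_add]
  map_smul' t x := by
    rw [AddMonoidAlgebra.ofCoeff_smul, smul_mul_assoc, AddMonoidAlgebra.coeff_smul]; rfl

lemma stoch_convMap {c : ZA} (hc : PZ c) : IsStoch (convMap c) := fun n => PZ_dlt_mul n hc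

/-- Convolving all components with a fixed law does not increase the mutual information
between the component label and the value. -/
lemma HZ_mix_processing {S : Finset W} {p : W → ℝ} {A : W → ZA} {c : ZA} (hc : PZ c)
    (hp : ∀ w ∈ S, 0 ≤ p w) (hA : ∀ w ∈ S, PZ (A w)) :
    HZ ((∑ w ∈ S, p w • A w) * c) - ∑ w ∈ S, p w * HZ (A w * c) ≤
      HZ (∑ w ∈ S, p w • A w) - ∑ w ∈ S, p w * HZ (A w) := by
  have h := ent_mix_processing (stoch_convMap hc) (A := fun w => (A w).coeff) hp hA
  have e : ∑ w ∈ S, p w • (A w).coeff = (∑ w ∈ S, p w • A w).coeff := by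
    rw [AddMonoidAlgebra.coeff_sum]; rfl
  rw [e] at h
  exact h

lemma HZ_le_mul {a c : ZA} (ha : PZ a) (hc : PZ c) : HZ a ≤ HZ (c * a) := by
  rw [mul_eq_sum]
  refine le_trans (le_of_eq ?_) (HZ_mix_ge (fun n _ => hc.1 n) hc.sum_coeff
    fun n _ => PZ_dlt_mul n ha)
  rw [Finset.sum_congr rfl fun n _ => by rw [HZ_dlt_mul n ha], ← Finset.sum_mul, hc.sum_coeff,
    one_mul]

/-- Submodularity for sums of independent variables (Kaimanovich–Vershik). -/
lemma HZ_submod {a b c : ZA} (ha : PZ a) (hb : PZ b) (hc : PZ c) :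
    HZ (a * b * c) + HZ a ≤ HZ (a * b) + HZ (a * c) := by
  have h := HZ_mix_processing hc (S := b.coeff.support) (p := b.coeff) (A := fun n => dlt n * a)
    (fun n _ => hb.1 n) (fun n _ => PZ_dlt_mul n ha)
  rw [← mul_eq_sum] at h
  rw [Finset.sum_congr rfl fun n _ => by rw [mul_assoc, HZ_dlt_mul n (ha.mul hc)], ← Finset.sum_mul,
    hb.sum_coeff, Finset.sum_congr rfl fun n _ => by rw [HZ_dlt_mul n ha], ← Finset.sum_mul,
    hb.sum_coeff, mul_comm b a] at h
  linarith

lemma HZ_mul_pow_le {a b : ZA} (ha : PZ a) (hb : PZ b) (k : ℕ) :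
    HZ (a * b ^ k) ≤ HZ a + k * (HZ (a * b) - HZ a) := by
  induction k with
  | zero => simp
  | succ k ih =>
    have h := HZ_submod ha (hb.pow k) hb
    rw [pow_succ, ← mul_assoc]
    push_cast
    linarith

/-- The uniform law on `{0, …, 2^i - 1}`. -/
def UU (i : ℕ) : ZA := ∑ j ∈ Finset.range (2 ^ i), ((2 : ℝ) ^ i)⁻¹ • dlt j

/-- The uniform law on `{2^i j : 0 ≤ j < 2^v}`. -/
def VV (i v : ℕ) : ZA := ∑ j ∈ Finset.range (2 ^ v), ((2 : ℝ) ^ v)⁻¹ • dlt (2 ^ i * j)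

lemma sum_unif (i : ℕ) : ∑ _j ∈ Finset.range (2 ^ i), ((2 : ℝ) ^ i)⁻¹ = 1 := by simp

lemma PZ_UU (i : ℕ) : PZ (UU i) := PZ_mix (fun _ _ => by positivity) (sum_unif i) fun _ _ => PZ_dlt _

lemma PZ_VV (i v : ℕ) : PZ (VV i v) :=
  PZ_mix (fun _ _ => by positivity) (sum_unif v) fun _ _ => PZ_dlt _

lemma UU_add (i v : ℕ) : UU (i + v) = UU i * VV i v := by
  rw [UU, UU, VV, Finset.sum_mul_sum, ← Finset.sum_product']
  have h : ∀ x ∈ Finset.range (2 ^ i) ×ˢ Finset.range (2 ^ v),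
      ((2 : ℝ) ^ i)⁻¹ • dlt (x.1 : ℤ) * ((2 : ℝ) ^ v)⁻¹ • dlt (2 ^ i * (x.2 : ℤ)) =
        ((2 : ℝ) ^ (i + v))⁻¹ • dlt ((x.1 + 2 ^ i * x.2 : ℕ) : ℤ) := by
    intro x _
    rw [smul_mul_smul_comm, dlt_mul, pow_add, mul_inv]
    push_cast; rfl
  rw [Finset.sum_congr rfl h]
  symm
  refine Finset.sum_bij (fun x _ => x.1 + 2 ^ i * x.2) ?_ ?_ ?_ ?_
  · rintro ⟨x, y⟩ hx
    simp only [Finset.mem_product, Finset.mem_range] at hx ⊢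
    rw [pow_add]
    nlinarith [hx.1, hx.2]
  · rintro ⟨x, y⟩ hx ⟨x', y'⟩ hx' h
    simp only [Finset.mem_product, Finset.mem_range] at hx hx' h
    have h1 := congrArg (fun n => n % 2 ^ i) h
    have h2 := congrArg (fun n => n / 2 ^ i) h
    simp only [Nat.add_mul_mod_self_left, Nat.mod_eq_of_lt hx.1, Nat.mod_eq_of_lt hx'.1] at h1
    simp only [Nat.add_mul_div_left _ _ (show 0 < 2 ^ i by positivity), Nat.div_eq_of_lt hx.1,
      Nat.div_eq_of_lt hx'.1, zero_add] at h2
    rw [h1, h2]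
  · intro n hn
    rw [Finset.mem_range] at hn
    refine ⟨(n % 2 ^ i, n / 2 ^ i), ?_, Nat.mod_add_div n _⟩
    simp only [Finset.mem_product, Finset.mem_range]
    refine ⟨Nat.mod_lt _ (by positivity), ?_⟩
    rw [Nat.div_lt_iff_lt_mul (by positivity), ← pow_add, add_comm]; exact hn
  · intro x _; rfl

lemma UU_coeff (i : ℕ) (n : ℤ) :
    (UU i).coeff n = if 0 ≤ n ∧ n < 2 ^ i then ((2 : ℝ) ^ i)⁻¹ else 0 := by
  rw [UU, AddMonoidAlgebra.coeff_sum, Finsupp.finsetSum_apply]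
  have : ∀ j ∈ Finset.range (2 ^ i), (((2 : ℝ) ^ i)⁻¹ • dlt (j : ℤ)).coeff n =
      if (j : ℤ) = n then ((2 : ℝ) ^ i)⁻¹ else 0 := by
    intro j _
    rw [AddMonoidAlgebra.coeff_smul, dlt, AddMonoidAlgebra.coeff_single, Finsupp.smul_apply,
      Finsupp.single_apply]
    simp
  rw [Finset.sum_congr rfl this]
  split_ifs with h
  · obtain ⟨m, rfl⟩ := Int.eq_ofNat_of_zero_le h.1
    rw [Finset.sum_eq_single m]
    · simp
    · intro b _ hb; rw [if_neg]; exact_mod_cast hb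
    · intro hm; exfalso; apply hm; rw [Finset.mem_range]; exact_mod_cast h.2
  · refine Finset.sum_eq_zero fun j hj => if_neg ?_
    rintro rfl
    exact h ⟨by positivity, by exact_mod_cast Finset.mem_range.mp hj⟩

lemma UU_coeff_le (i : ℕ) (n : ℤ) : (UU i).coeff n ≤ ((2 : ℝ) ^ i)⁻¹ := by
  rw [UU_coeff]; split_ifs; exacts [le_rfl, by positivity]

lemma logb_two_pow (i : ℕ) : Real.logb 2 ((2 : ℝ) ^ i) = i := by
  rw [Real.logb_pow, Real.logb_self_eq_one (by norm_num), mul_one]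

lemma HZ_UU (i : ℕ) : HZ (UU i) = i := by
  apply le_antisymm
  · have := ent_le_logb_card (PZ_UU i) (S := Finset.Ico (0 : ℤ) (2 ^ i)) (N := (2 : ℝ) ^ i) (by
      intro n hn
      rw [Finsupp.mem_support_iff, UU_coeff] at hn
      rw [Finset.mem_Ico]
      by_contra h; exact hn (if_neg h)) (by
        have : ((2 : ℤ) ^ i - 0).toNat = 2 ^ i := by
          rw [sub_zero]; exact_mod_cast Int.toNat_natCast (2 ^ i)
        rw [Int.card_Ico, this]; push_cast; exact le_rfl)
    rwa [logb_two_pow] at this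
  · have := neg_logb_le_ent (PZ_UU i) (UU_coeff_le i)
    rwa [Real.logb_inv, logb_two_pow, neg_neg] at this

/-- The deficit `v - (H(a U_{i+v}) - H(a U_i))`, the entropy of `a` between scales `2^i` and
`2^(i+v)` up to a bounded error. -/
def DD (a : ZA) (i v : ℕ) : ℝ := HZ (a * UU i) - HZ (a * UU (i + v)) + v

lemma DD_add (a : ZA) (i v w : ℕ) : DD a i (v + w) = DD a i v + DD a (i + v) w := by
  simp only [DD, ← add_assoc]; push_cast; ring

/-- The scale-entropy of a convolution dominates that of either factor. -/
lemma DD_le_mul {a c : ZA} (ha : PZ a) (hc : PZ c) (i v : ℕ) : DD a i v ≤ DD (a * c) i v := by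
  have h := HZ_submod (ha.mul (PZ_UU i)) hc (PZ_VV i v)
  have e1 : a * UU i * c * VV i v = a * c * (UU i * VV i v) := by ring
  have e2 : a * UU i * c = a * c * UU i := by ring
  rw [e1, e2, mul_assoc a (UU i), ← UU_add] at h
  simp only [DD]; linarith

lemma DD_one (i v : ℕ) : DD 1 i v = 0 := by
  simp [DD, HZ_UU]

lemma DD_nonneg {a : ZA} (ha : PZ a) (i v : ℕ) : 0 ≤ DD a i v := by
  have := DD_le_mul PZ_one ha i v
  rwa [DD_one, one_mul] at this

lemma DD_le {a : ZA} (ha : PZ a) (i v : ℕ) : DD a i v ≤ v := by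
  have := HZ_le_mul (ha.mul (PZ_UU i)) (PZ_VV i v)
  rw [mul_comm (VV i v), mul_assoc, ← UU_add] at this
  simp only [DD]; linarith

/-- Concavity of the scale-entropy. -/
lemma DD_concave {S : Finset W} {p : W → ℝ} {A : W → ZA} (hp : ∀ w ∈ S, 0 ≤ p w)
    (hp1 : ∑ w ∈ S, p w = 1) (hA : ∀ w ∈ S, PZ (A w)) (i v : ℕ) :
    ∑ w ∈ S, p w * DD (A w) i v ≤ DD (∑ w ∈ S, p w • A w) i v := by
  have h := HZ_mix_processing (PZ_VV i v) (A := fun w => A w * UU i) hp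
    (fun w hw => (hA w hw).mul (PZ_UU i))
  have e : ∑ w ∈ S, p w • (A w * UU i) = (∑ w ∈ S, p w • A w) * UU i := by
    rw [Finset.sum_mul]; exact Finset.sum_congr rfl fun w _ => by rw [smul_mul_assoc]
  simp only [mul_assoc, ← UU_add, e] at h
  have e2 : ∑ w ∈ S, p w * DD (A w) i v = ∑ w ∈ S, p w * HZ (A w * UU i)
      - ∑ w ∈ S, p w * HZ (A w * UU (i + v)) + v := by
    have : (v : ℝ) = ∑ w ∈ S, p w * v := by rw [← Finset.sum_mul, hp1, one_mul]
    conv_rhs => rw [this]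
    rw [← Finset.sum_sub_distrib, ← Finset.sum_add_distrib]
    exact Finset.sum_congr rfl fun w _ => by rw [DD]; ring
  rw [e2, DD]; linarith

lemma DD_dlt_mul (n : ℤ) {a : ZA} (ha : PZ a) (i v : ℕ) : DD (dlt n * a) i v = DD a i v := by
  simp only [DD, mul_assoc, HZ_dlt_mul n (ha.mul (PZ_UU _))]

end conv

end

/-! ### Entropy of coarsened laws -/

section

section floors
variable {κ Ω : Type*}

lemma coeff_mul_ne_zero {a b : ZA} {n : ℤ} (h : (a * b).coeff n ≠ 0) :
    ∃ x y, a.coeff x ≠ 0 ∧ b.coeff y ≠ 0 ∧ x + y = n := by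
  rw [mul_eq_sum, AddMonoidAlgebra.coeff_sum, Finsupp.finsetSum_apply] at h
  obtain ⟨x, hx, h2⟩ := Finset.exists_ne_zero_of_sum_ne_zero h
  rw [AddMonoidAlgebra.coeff_smul, coeff_dlt_mul, Finsupp.smul_apply] at h2
  have h3 := right_ne_zero_of_smul h2
  obtain ⟨y, hy, h4⟩ := exists_of_mem_support_map (Finsupp.mem_support_iff.mpr h3)
  exact ⟨x, y, Finsupp.mem_support_iff.mp hx, hy, h4⟩

/-- The law `c` conditioned on `f = w`. -/
def cell (c : ZA) (f : ℤ → κ) (w : κ) : ZA := AddMonoidAlgebra.ofCoeff (condLaw c.coeff f w)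

lemma PZ_cell {c : ZA} (hc : PZ c) {f : ℤ → κ} {w : κ} (hw : w ∈ (c.coeff.mapDomain f).support) :
    PZ (cell c f w) := isP_condLaw hc hw

lemma cell_ne_zero {c : ZA} {f : ℤ → κ} {w : κ} {n : ℤ} (h : (cell c f w).coeff n ≠ 0) :
    c.coeff n ≠ 0 ∧ f n = w := condLaw_ne_zero h

lemma eq_sum_cell {c : ZA} (hc : PZ c) (f : ℤ → κ) :
    c = ∑ w ∈ (c.coeff.mapDomain f).support, c.coeff.mapDomain f w • cell c f w := by
  apply AddMonoidAlgebra.coeff_injective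
  rw [AddMonoidAlgebra.coeff_sum]
  exact eq_sum_condLaw hc.1 f

/-- Entropy of the law of `⌊n / 2^i⌋`. -/
def QZ (i : ℕ) (c : ZA) : ℝ := ent (c.coeff.mapDomain (fun n => n / 2 ^ i))

lemma QZ_zero (c : ZA) : QZ 0 c = HZ c := by
  have : (fun n : ℤ => n / 2 ^ 0) = id := by ext n; simp
  rw [QZ, this, Finsupp.mapDomain_id, HZ]

lemma QZ_law (a : Ω →₀ ℝ) (F : Ω → ℤ) (i : ℕ) :
    QZ i (law a F) = ent (a.mapDomain (fun x => F x / 2 ^ i)) := by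
  rw [QZ, coeff_law, ← Finsupp.mapDomain_comp]; rfl

lemma support_cell_UU {c : ZA} {i : ℕ} {w n : ℤ}
    (h : (cell c (fun n => n / 2 ^ i) w * UU i).coeff n ≠ 0) :
    2 ^ i * w ≤ n ∧ n < 2 ^ i * w + 2 ^ (i + 1) := by
  obtain ⟨x, y, hx, hy, rfl⟩ := coeff_mul_ne_zero h
  have h1 := (cell_ne_zero hx).2
  have hpos : (0 : ℤ) < 2 ^ i := by positivity
  have h2 : 0 ≤ y ∧ y < 2 ^ i := by
    rw [UU_coeff] at hy
    by_contra h; exact hy (if_neg h)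
  have h3 := Int.emod_add_mul_ediv x (2 ^ i)
  have h4 := Int.emod_nonneg x hpos.ne'
  have h5 := Int.emod_lt_of_pos x hpos
  rw [h1] at h3
  rw [pow_succ]
  constructor <;> linarith [h2.1, h2.2]

lemma HZ_UU_le {c : ZA} (hc : PZ c) (i : ℕ) : HZ (c * UU i) ≤ QZ i c + i + 1 := by
  set p := c.coeff.mapDomain (fun n => n / 2 ^ i) with hp
  have hpP : IsP p := IsP.mapDomain hc _
  have e : c * UU i = ∑ w ∈ p.support, p w • (cell c (fun n => n / 2 ^ i) w * UU i) := by
    conv_lhs => rw [eq_sum_cell hc (fun n => n / 2 ^ i)]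
    rw [Finset.sum_mul]; exact Finset.sum_congr rfl fun w _ => by rw [smul_mul_assoc]
  rw [e]
  refine (HZ_mix_le hpP fun w hw => (PZ_cell hc hw).mul (PZ_UU i)).trans ?_
  have h1 : ∑ w ∈ p.support, p w * HZ (cell c (fun n => n / 2 ^ i) w * UU i) ≤
      ∑ w ∈ p.support, p w * (i + 1) := by
    refine Finset.sum_le_sum fun w hw => mul_le_mul_of_nonneg_left ?_ (hpP.1 w)
    have := ent_le_logb_card ((PZ_cell hc hw).mul (PZ_UU i))
      (S := Finset.Ico (2 ^ i * w) (2 ^ i * w + 2 ^ (i + 1))) (N := (2 : ℝ) ^ (i + 1))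
      (fun n hn => Finset.mem_Ico.mpr (support_cell_UU (Finsupp.mem_support_iff.mp hn))) (by
        have : (2 ^ i * w + 2 ^ (i + 1) - 2 ^ i * w : ℤ).toNat = 2 ^ (i + 1) := by
          rw [add_sub_cancel_left]; exact_mod_cast Int.toNat_natCast (2 ^ (i + 1))
        rw [Int.card_Ico, this]; push_cast; exact le_rfl)
    rw [logb_two_pow] at this
    push_cast at this
    exact this
  rw [← Finset.sum_mul, ← mass_eq_sum, hpP.2, one_mul] at h1
  have : QZ i c = ent p := rfl
  linarith

lemma logb_three_le : Real.logb 2 3 ≤ 2 := by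
  have : Real.logb 2 3 ≤ Real.logb 2 ((2 : ℝ) ^ 2) :=
    Real.logb_le_logb_of_le (by norm_num) (by norm_num) (by norm_num)
  rw [logb_two_pow] at this
  exact_mod_cast this

lemma ediv_add_near {i : ℕ} {u m : ℤ} (h0 : 0 ≤ u) (h1 : u < 2 ^ i) :
    |m / 2 ^ i - (u + m) / 2 ^ i| ≤ (1 : ℕ) := by
  have hpos : (0 : ℤ) < 2 ^ i := by positivity
  have a1 : m / 2 ^ i ≤ (u + m) / 2 ^ i := Int.ediv_le_ediv hpos (by linarith)
  have a2 : (u + m) / 2 ^ i ≤ (m + 1 * 2 ^ i) / 2 ^ i := Int.ediv_le_ediv hpos (by linarith)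
  rw [Int.add_mul_ediv_right _ _ hpos.ne'] at a2
  rw [abs_le]; push_cast; constructor <;> linarith

lemma le_HZ_UU {c : ZA} (hc : PZ c) (i : ℕ) : QZ i c + i - 3 ≤ HZ (c * UU i) := by
  set f : ℤ → ℤ := fun n => n / 2 ^ i with hf
  set p := c.coeff.mapDomain f with hp
  have hpP : IsP p := IsP.mapDomain hc _
  have hpos : (0 : ℤ) < 2 ^ i := by positivity
  have e : c * UU i = ∑ w ∈ p.support, p w • (cell c f w * UU i) := by
    conv_lhs => rw [eq_sum_cell hc f]
    rw [Finset.sum_mul]; exact Finset.sum_congr rfl fun w _ => by rw [smul_mul_assoc]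
  have h := ent_mix_processing (stoch_lmapDomain f) (S := p.support) (p := p)
    (A := fun w => (cell c f w * UU i).coeff) (fun w _ => hpP.1 w)
    (fun w hw => (PZ_cell hc hw).mul (PZ_UU i))
  have e' : ∑ w ∈ p.support, p w • (cell c f w * UU i).coeff = (c * UU i).coeff := by
    rw [e, AddMonoidAlgebra.coeff_sum]; rfl
  rw [e'] at h
  have h1 : ∑ w ∈ p.support, p w * ent (Finsupp.lmapDomain ℝ ℝ f (cell c f w * UU i).coeff) ≤
      ∑ w ∈ p.support, p w * 1 := by
    refine Finset.sum_le_sum fun w hw => mul_le_mul_of_nonneg_left ?_ (hpP.1 w)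
    have := ent_le_logb_card (((PZ_cell hc hw).mul (PZ_UU i)).mapDomain f)
      (S := {w, w + 1}) (N := (2 : ℝ) ^ 1) (by
        intro y hy
        obtain ⟨x, hx, rfl⟩ := exists_of_mem_support_map hy
        obtain ⟨h1, h2⟩ := support_cell_UU hx
        rw [pow_succ] at h2
        have h3 : w ≤ x / 2 ^ i := by rw [Int.le_ediv_iff_mul_le hpos]; linarith
        have h4 : x / 2 ^ i < w + 2 := by rw [Int.ediv_lt_iff_lt_mul hpos]; linarith
        simp only [hf, Finset.mem_insert, Finset.mem_singleton]
        omega) (by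
        have := Finset.card_le_two (a := w) (b := w + 1)
        rw [pow_one]; exact_mod_cast this)
    rw [logb_two_pow] at this
    simpa using this
  have h2 : ∑ w ∈ p.support, p w * (i : ℝ) ≤
      ∑ w ∈ p.support, p w * ent ((cell c f w * UU i).coeff) := by
    refine Finset.sum_le_sum fun w hw => mul_le_mul_of_nonneg_left ?_ (hpP.1 w)
    have := HZ_le_mul (PZ_UU i) (PZ_cell hc hw)
    rwa [HZ_UU] at this
  have h3 : QZ i c - 2 ≤ ent (Finsupp.lmapDomain ℝ ℝ f (c * UU i).coeff) := by
    have e3 : Finsupp.lmapDomain ℝ ℝ f (c * UU i).coeff = ∑ u ∈ (UU i).coeff.support,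
        (UU i).coeff u • c.coeff.mapDomain (fun m => f (u + m)) := by
      rw [mul_comm, mul_eq_sum, AddMonoidAlgebra.coeff_sum, map_sum]
      refine Finset.sum_congr rfl fun u _ => ?_
      rw [AddMonoidAlgebra.coeff_smul, coeff_dlt_mul, map_smul, Finsupp.lmapDomain_apply,
        ← Finsupp.mapDomain_comp]; rfl
    rw [e3]
    refine le_trans ?_ (ent_mix_ge (fun u _ => (PZ_UU i).1 u) (PZ_UU i).sum_coeff
      fun u _ => IsP.mapDomain hc _)
    have : ∑ u ∈ (UU i).coeff.support, (UU i).coeff u * (QZ i c - 2) ≤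
        ∑ u ∈ (UU i).coeff.support, (UU i).coeff u *
          ent (c.coeff.mapDomain (fun m => f (u + m))) := by
      refine Finset.sum_le_sum fun u hu => mul_le_mul_of_nonneg_left ?_ ((PZ_UU i).1 u)
      have hu2 : 0 ≤ u ∧ u < 2 ^ i := by
        rw [Finsupp.mem_support_iff, UU_coeff] at hu
        by_contra h; exact hu (if_neg h)
      have := ent_map_le_of_near hc (fun m => m / 2 ^ i) (fun m => f (u + m)) id 1
        (fun x _ => ediv_add_near hu2.1 hu2.2)
      norm_num at this
      have h3 := logb_three_le
      simp only [QZ]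
      linarith
    rwa [← Finset.sum_mul, (PZ_UU i).sum_coeff, one_mul] at this
  rw [← Finset.sum_mul, ← mass_eq_sum, hpP.2] at h1 h2
  simp only [HZ]
  linarith

/-- An integer variable with bounded first absolute moment about `c` has bounded entropy. -/
lemma ent_le_moment {a : ℤ →₀ ℝ} (ha : IsP a) (c : ℤ) :
    ent a ≤ 2 + Ex (fun n : ℤ => |(n : ℝ) - c|) a := by
  obtain ⟨N, hN⟩ : ∃ N : ℕ, ∀ n ∈ a.support, (n - c).natAbs < N := by
    refine ⟨(a.support.sup fun n => (n - c).natAbs) + 1, fun n hn => ?_⟩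
    exact Nat.lt_succ_of_le (Finset.le_sup (f := fun n => (n - c).natAbs) hn)
  set S : Finset ℤ := (Finset.range N).image (fun k : ℕ => c + k) ∪
    (Finset.range N).image (fun k : ℕ => c - k) with hS
  have hsub : a.support ⊆ S := by
    intro n hn
    have h1 := hN n hn
    rw [hS, Finset.mem_union, Finset.mem_image, Finset.mem_image]
    rcases le_total c n with h | h
    · exact Or.inl ⟨(n - c).natAbs, Finset.mem_range.mpr h1, by omega⟩
    · exact Or.inr ⟨(n - c).natAbs, Finset.mem_range.mpr h1, by omega⟩
  have hg : ∀ N : ℕ, ∑ k ∈ Finset.range N, ((1 : ℝ) / 2) ^ k ≤ 2 := fun N => sum_geometric_two_le N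
  have h := ent_gibbs ha hsub (q := fun n => (1 / 2 : ℝ) ^ (n - c).natAbs / 4)
    (fun _ _ => by positivity) (by
      rw [← Finset.sum_div]
      have h1 : ∑ n ∈ S, (1 / 2 : ℝ) ^ (n - c).natAbs ≤
          ∑ n ∈ (Finset.range N).image (fun k : ℕ => c + k), (1 / 2 : ℝ) ^ (n - c).natAbs +
          ∑ n ∈ (Finset.range N).image (fun k : ℕ => c - k), (1 / 2 : ℝ) ^ (n - c).natAbs := by
        rw [← Finset.sum_union_inter]
        have : 0 ≤ ∑ n ∈ (Finset.range N).image (fun k : ℕ => c + (k : ℤ)) ∩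
          (Finset.range N).image (fun k : ℕ => c - (k : ℤ)), (1 / 2 : ℝ) ^ (n - c).natAbs :=
          Finset.sum_nonneg fun _ _ => by positivity
        linarith
      rw [Finset.sum_image (by intro x _ y _ h; simpa using h),
        Finset.sum_image (by intro x _ y _ h; simpa using h)] at h1
      simp only [add_sub_cancel_left, sub_sub_cancel_left, Int.natAbs_natCast, Int.natAbs_neg] at h1
      have := hg N
      linarith)
  refine h.trans (le_of_eq ?_)
  rw [Ex_eq_sum_of_subset _ _ hsub]
  have h2 : (2 : ℝ) = ∑ x ∈ S, a x * 2 := by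
    rw [← Finset.sum_mul, ← mass_eq_sum_of_subset a hsub, ha.2, one_mul]
  conv_rhs => rw [h2]
  rw [← Finset.sum_add_distrib]
  refine Finset.sum_congr rfl fun n _ => ?_
  have e4 : Real.logb 2 4 = 2 := by
    have := logb_two_pow 2
    norm_num at this; exact this
  have e5 : (((n - c).natAbs : ℕ) : ℝ) = |(n : ℝ) - c| := by
    rw [Nat.cast_natAbs]; push_cast; rfl
  rw [Real.logb_div (by positivity) (by norm_num), one_div, inv_pow, Real.logb_inv, logb_two_pow,
    e4, e5]
  ring

end floors

end

/-! ### Convolution powers of spread laws -/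

section

lemma floor_div_pow (x : ℝ) (i : ℕ) : ⌊x⌋ / 2 ^ i = ⌊x / 2 ^ i⌋ := by
  have := Int.floor_div_natCast x (2 ^ i)
  push_cast at this
  exact this.symm

/-- The uniform law on the two points `e.1`, `e.2` (a point mass if they coincide). -/
def coin (e : ℤ × ℤ) : ZA := (1 / 2 : ℝ) • dlt e.1 + (1 / 2 : ℝ) • dlt e.2

lemma PZ_coin (e : ℤ × ℤ) : PZ (coin e) := by
  have : coin e = ∑ j : Fin 2, (1 / 2 : ℝ) • dlt (if j = 0 then e.1 else e.2) := by
    simp [coin, Fin.sum_univ_two]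
  rw [this]
  exact PZ_mix (fun _ _ => by norm_num) (by norm_num) fun _ _ => PZ_dlt _

lemma coin_swap (e : ℤ × ℤ) : coin e.swap = coin e := by
  simp only [coin, Prod.fst_swap, Prod.snd_swap]; rw [add_comm]

lemma Ex_dlt_mul (φ : ℤ → ℝ) (n : ℤ) (a : ZA) :
    Ex φ (dlt n * a).coeff = Ex (fun m => φ (n + m)) a.coeff := by
  rw [coeff_dlt_mul, Ex_mapDomain]

lemma Ex_coin_mul (φ : ℤ → ℝ) (e : ℤ × ℤ) (a : ZA) :
    Ex φ (coin e * a).coeff =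
      Ex (fun m => (φ (e.1 + m) + φ (e.2 + m)) / 2) a.coeff := by
  rw [coin, add_mul, smul_mul_assoc, smul_mul_assoc, AddMonoidAlgebra.coeff_add,
    AddMonoidAlgebra.coeff_smul, AddMonoidAlgebra.coeff_smul, map_add, map_smul, map_smul,
    Ex_dlt_mul, Ex_dlt_mul, smul_eq_mul, smul_eq_mul, ← Ex_smul_fun, ← Ex_smul_fun, ← Ex_add_fun]
  congr 2; ext m; ring

lemma PZ_coins (l : List (ℤ × ℤ)) : PZ (l.map coin).prod := by
  induction l with
  | nil => exact PZ_one
  | cons e l ih => rw [List.map_cons, List.prod_cons]; exact (PZ_coin e).mul ih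

/-- Variance bound for a sum of independent two-point variables. -/
lemma coins_variance {R : ℝ} (l : List (ℤ × ℤ)) (h : ∀ e ∈ l, |(e.1 : ℝ) - e.2| ≤ R) :
    ∃ m : ℝ, Ex (fun n : ℤ => ((n : ℝ) - m) ^ 2) (l.map coin).prod.coeff ≤
      l.length * (R ^ 2 / 4) := by
  induction l with
  | nil =>
    refine ⟨0, le_of_eq ?_⟩
    have : ((List.map coin []).prod).coeff = Finsupp.single (0 : ℤ) (1 : ℝ) := rfl
    rw [this, Ex_single]; simp
  | cons e l ih =>
    obtain ⟨m, hm⟩ := ih fun e he => h e (List.mem_cons_of_mem _ he)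
    refine ⟨m + ((e.1 : ℝ) + e.2) / 2, ?_⟩
    rw [List.map_cons, List.prod_cons, Ex_coin_mul]
    have e1 : (fun n : ℤ => ((((e.1 + n : ℤ) : ℝ) - (m + ((e.1 : ℝ) + e.2) / 2)) ^ 2 +
        (((e.2 + n : ℤ) : ℝ) - (m + ((e.1 : ℝ) + e.2) / 2)) ^ 2) / 2) =
        fun n : ℤ => ((n : ℝ) - m) ^ 2 + ((e.1 : ℝ) - e.2) ^ 2 / 4 := by
      ext n; push_cast; ring
    rw [e1, Ex_add_fun, Ex_const, (PZ_coins l).2, List.length_cons]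
    have h1 := h e List.mem_cons_self
    have h2 : ((e.1 : ℝ) - e.2) ^ 2 ≤ R ^ 2 := sq_le_sq' (abs_le.mp h1).1 (abs_le.mp h1).2
    push_cast
    linarith

lemma centralBinom_sq_le (n : ℕ) : n.centralBinom ^ 2 * (2 * n + 1) ≤ 16 ^ n := by
  induction n with
  | zero => simp
  | succ n ih =>
    have h := Nat.succ_mul_centralBinom_succ n
    have h2 : (n + 1) ^ 2 * ((n + 1).centralBinom ^ 2 * (2 * (n + 1) + 1)) ≤
        (n + 1) ^ 2 * 16 ^ (n + 1) := by
      calc (n + 1) ^ 2 * ((n + 1).centralBinom ^ 2 * (2 * (n + 1) + 1))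
          = ((n + 1) * (n + 1).centralBinom) ^ 2 * (2 * n + 3) := by ring
        _ = (n.centralBinom ^ 2 * (2 * n + 1)) * (4 * (2 * n + 1) * (2 * n + 3)) := by rw [h]; ring
        _ ≤ 16 ^ n * (16 * (n + 1) ^ 2) := Nat.mul_le_mul ih (by nlinarith)
        _ = _ := by ring
    exact Nat.le_of_mul_le_mul_left h2 (by positivity)

/-- Littlewood–Offord for well separated coins, through Sperner's theorem. -/
lemma coins_coeff_le {N i : ℕ} (x y : Fin N → ℤ) (h : ∀ j, x j + 2 ^ i ≤ y j) (n : ℤ) :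
    ((∏ j, coin (x j, y j)) * UU i).coeff n ≤
      (N.choose (N / 2) : ℝ) / 2 ^ N * ((2 : ℝ) ^ i)⁻¹ := by
  set σ : Finset (Fin N) → ℤ := fun A => ∑ j ∈ A, x j + ∑ j ∈ Finset.univ \ A, y j with hσ
  have hd : ∀ (A : Finset (Fin N)) (f : Fin N → ℤ), ∏ j ∈ A, dlt (f j) = dlt (∑ j ∈ A, f j) := by
    intro A f
    induction A using Finset.induction_on with
    | empty => simp [dlt_zero]
    | insert a A ha ih => rw [Finset.prod_insert ha, Finset.sum_insert ha, ih, dlt_mul]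
  have e1 : ∏ j, coin (x j, y j) = ∑ A ∈ (Finset.univ : Finset (Fin N)).powerset,
      ((2 : ℝ) ^ N)⁻¹ • dlt (σ A) := by
    have : ∀ j, coin (x j, y j) = (1 / 2 : ℝ) • (dlt (x j) + dlt (y j)) := fun j => by
      rw [coin, smul_add]
    rw [Finset.prod_congr rfl fun j _ => this j, Finset.prod_smul, Finset.prod_const, Finset.prod_add,
      Finset.smul_sum]
    refine Finset.sum_congr rfl fun A _ => ?_
    rw [hd, hd, dlt_mul, hσ]
    simp
  rw [e1, Finset.sum_mul, AddMonoidAlgebra.coeff_sum, Finsupp.finsetSum_apply]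
  have e2 : ∀ A, ((((2 : ℝ) ^ N)⁻¹ • dlt (σ A)) * UU i).coeff n =
      if (0 ≤ n - σ A ∧ n - σ A < 2 ^ i) then ((2 : ℝ) ^ N)⁻¹ * ((2 : ℝ) ^ i)⁻¹ else 0 := by
    intro A
    rw [smul_mul_assoc, AddMonoidAlgebra.coeff_smul, Finsupp.smul_apply, coeff_dlt_mul, smul_eq_mul]
    have : (Finsupp.mapDomain (fun m => σ A + m) (UU i).coeff) n = (UU i).coeff (n - σ A) := by
      have := Finsupp.mapDomain_apply (f := fun m => σ A + m) (add_right_injective (σ A))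
        (UU i).coeff (n - σ A)
      simpa using this
    rw [this, UU_coeff, mul_ite, mul_zero]
  rw [Finset.sum_congr rfl fun A _ => e2 A, ← Finset.sum_filter, Finset.sum_const, nsmul_eq_mul]
  set 𝒜 := (Finset.univ : Finset (Fin N)).powerset.filter
    (fun A => 0 ≤ n - σ A ∧ n - σ A < 2 ^ i) with h𝒜
  have hanti : IsAntichain (· ⊆ ·) (𝒜 : Set (Finset (Fin N))) := by
    intro A hA B hB hne hsub
    have hA : 0 ≤ n - σ A ∧ n - σ A < 2 ^ i := (Finset.mem_filter.mp hA).2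
    have hB : 0 ≤ n - σ B ∧ n - σ B < 2 ^ i := (Finset.mem_filter.mp hB).2
    obtain ⟨j, hjB, hjA⟩ := Finset.exists_of_ssubset (Finset.ssubset_iff_subset_ne.mpr ⟨hsub, hne⟩)
    -- moving `j` (and the rest of `B \ A`) from `y` to `x` lowers the sum by at least `2^i`
    have hdiff : σ A - σ B = ∑ j ∈ B \ A, (y j - x j) := by
      have a1 : ∑ j ∈ B, x j = ∑ j ∈ B \ A, x j + ∑ j ∈ A, x j := (Finset.sum_sdiff hsub).symm
      have a2 : ∑ j ∈ Finset.univ \ A, y j = ∑ j ∈ B \ A, y j + ∑ j ∈ Finset.univ \ B, y j := by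
        have : Finset.univ \ A = (B \ A) ∪ (Finset.univ \ B) := by
          ext k; simp only [Finset.mem_sdiff, Finset.mem_union, Finset.mem_univ, true_and]
          constructor
          · intro hk; by_cases hkB : k ∈ B
            · exact Or.inl ⟨hkB, hk⟩
            · exact Or.inr hkB
          · rintro (hk | hk)
            · exact hk.2
            · exact fun hkA => hk (hsub hkA)
        rw [this, Finset.sum_union]
        rw [Finset.disjoint_left]
        intro k hk hk2
        exact (Finset.mem_sdiff.mp hk2).2 (Finset.mem_sdiff.mp hk).1
      simp only [hσ, Finset.sum_sub_distrib]
      rw [a1, a2]; ring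
    have hge : (2 : ℤ) ^ i ≤ ∑ j ∈ B \ A, (y j - x j) := by
      have hj : j ∈ B \ A := Finset.mem_sdiff.mpr ⟨hjB, hjA⟩
      have hpos : (0 : ℤ) ≤ 2 ^ i := by positivity
      refine le_trans ?_ (Finset.single_le_sum (f := fun j => y j - x j)
        (fun k _ => by linarith [h k]) hj)
      linarith [h j]
    linarith [hA.1, hA.2, hB.1, hB.2]
  have hcard : 𝒜.card ≤ N.choose (N / 2) := by
    have := hanti.sperner
    simpa using this
  have : (𝒜.card : ℝ) ≤ (N.choose (N / 2) : ℝ) := by exact_mod_cast hcard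
  rw [div_eq_mul_inv, mul_assoc]
  exact mul_le_mul_of_nonneg_right this (by positivity)

/-- Number of coins needed to fill `u` binary digits. -/
def coinNum (u : ℕ) : ℕ := 2 * 4 ^ u

lemma coins_entropy_ge {i u : ℕ} (l : List (ℤ × ℤ)) (hl : l.length = coinNum u)
    (h : ∀ e ∈ l, 2 ^ i ≤ |e.1 - e.2|) : (i + u : ℝ) ≤ HZ ((l.map coin).prod * UU i) := by
  set x : Fin l.length → ℤ := fun j => min (l[j]).1 (l[j]).2
  set y : Fin l.length → ℤ := fun j => max (l[j]).1 (l[j]).2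
  have e1 : (l.map coin).prod = ∏ j, coin (x j, y j) := by
    rw [← Fin.prod_univ_fun_getElem]
    refine Finset.prod_congr rfl fun j _ => ?_
    rcases le_total (l[j]).1 (l[j]).2 with hj | hj
    · simp only [x, y, min_eq_left hj, max_eq_right hj]; rfl
    · simp only [x, y, min_eq_right hj, max_eq_left hj]
      exact (coin_swap _).symm
  have hxy : ∀ j, x j + 2 ^ i ≤ y j := by
    intro j
    have := h l[j] (List.getElem_mem _)
    have h2 := max_sub_min_eq_abs (l[j]).2 (l[j]).1
    rw [max_comm, min_comm] at h2
    simp only [x, y]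
    linarith
  have hc := coins_coeff_le x y hxy
  rw [← e1] at hc
  have hb : (l.length.choose (l.length / 2) : ℝ) / 2 ^ l.length ≤ ((2 : ℝ) ^ u)⁻¹ := by
    have e2 : l.length = 2 * 4 ^ u := hl
    have e3 : l.length.choose (l.length / 2) = (4 ^ u).centralBinom := by
      rw [e2, Nat.mul_div_cancel_left _ (by norm_num)]; rfl
    rw [e3, e2]
    have h1 := centralBinom_sq_le (4 ^ u)
    have h2 : (((4 ^ u).centralBinom : ℝ) * 2 ^ u) ^ 2 ≤ ((2 : ℝ) ^ (2 * 4 ^ u)) ^ 2 := by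
      have h3 : (((4 ^ u).centralBinom : ℝ)) ^ 2 * (2 * 4 ^ u + 1) ≤ 16 ^ (4 ^ u) := by
        exact_mod_cast h1
      have h4 : ((2 : ℝ) ^ (2 * 4 ^ u)) ^ 2 = 16 ^ (4 ^ u) := by
        rw [← pow_mul, show 2 * 4 ^ u * 2 = 4 * 4 ^ u by ring, pow_mul]; norm_num
      have h5 : ((2 : ℝ) ^ u) ^ 2 = 4 ^ u := by rw [← pow_mul, mul_comm, pow_mul]; norm_num
      rw [h4, mul_pow, h5]
      refine le_trans (mul_le_mul_of_nonneg_left ?_ (by positivity)) h3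
      have : (0 : ℝ) < 4 ^ u := by positivity
      linarith
    have h6 := abs_le_of_sq_le_sq h2 (by positivity)
    rw [div_le_iff₀ (by positivity), ← div_eq_inv_mul, le_div_iff₀ (by positivity)]
    exact (le_abs_self _).trans h6
  have := neg_logb_le_ent ((PZ_coins l).mul (PZ_UU i)) (c := ((2 : ℝ) ^ (i + u))⁻¹) (fun n => by
    refine (hc n).trans ?_
    rw [pow_add, mul_inv, mul_comm]
    exact mul_le_mul_of_nonneg_left hb (by positivity))
  rw [Real.logb_inv, logb_two_pow, neg_neg] at this
  push_cast at this
  exact this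

lemma coins_entropy_le {i s u : ℕ} (l : List (ℤ × ℤ)) (hl : l.length = coinNum u)
    (h : ∀ e ∈ l, |(e.1 : ℝ) - e.2| ≤ 2 ^ (i + s)) :
    HZ ((l.map coin).prod * UU (i + u)) ≤ i + u + s + 5 := by
  set G := (l.map coin).prod with hG
  have hGP : PZ G := PZ_coins l
  obtain ⟨m, hm⟩ := coins_variance l h
  rw [← hG, hl] at hm
  set M : ℝ := 2 ^ (i + u + s) with hM
  have hMpos : 0 < M := by positivity
  have h1 : HZ (G * UU (i + u)) ≤ HZ (G * UU (i + u + s)) := by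
    rw [UU_add (i + u) s, ← mul_assoc, mul_comm _ (VV _ _)]
    exact HZ_le_mul (hGP.mul (PZ_UU _)) (PZ_VV _ _)
  have h2 := HZ_UU_le hGP (i + u + s)
  have h3 : QZ (i + u + s) G ≤ 4 := by
    refine (ent_le_moment (hGP.mapDomain _) ⌊m / M⌋).trans ?_
    rw [Ex_mapDomain]
    have h4 : Ex (fun n : ℤ => |((n / 2 ^ (i + u + s) : ℤ) : ℝ) - ⌊m / M⌋|) G.coeff ≤
        Ex (fun n : ℤ => 3 / 2 + 1 / (2 * M ^ 2) * ((n : ℝ) - m) ^ 2) G.coeff := by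
      refine Ex_mono hGP.1 fun n _ => ?_
      have e : (n / 2 ^ (i + u + s) : ℤ) = ⌊(n : ℝ) / M⌋ := by
        have := floor_div_pow (n : ℝ) (i + u + s)
        rwa [Int.floor_intCast] at this
      rw [e]
      have a1 : |((⌊(n : ℝ) / M⌋ : ℤ) : ℝ) - ⌊m / M⌋| ≤ |(n : ℝ) / M - m / M| + 1 := by
        have b1 := Int.floor_le ((n : ℝ) / M)
        have b2 := Int.lt_floor_add_one ((n : ℝ) / M)
        have b3 := Int.floor_le (m / M)
        have b4 := Int.lt_floor_add_one (m / M)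
        have b5 := le_abs_self ((n : ℝ) / M - m / M)
        have b6 := neg_abs_le ((n : ℝ) / M - m / M)
        rw [abs_le]; constructor <;> linarith
      have a2 : |(n : ℝ) / M - m / M| ≤ 1 / 2 + ((n : ℝ) / M - m / M) ^ 2 / 2 := by
        have := sq_nonneg (|(n : ℝ) / M - m / M| - 1)
        rw [sub_sq, sq_abs] at this
        linarith
      have a3 : ((n : ℝ) / M - m / M) ^ 2 / 2 = 1 / (2 * M ^ 2) * ((n : ℝ) - m) ^ 2 := by
        field_simp
      linarith
    rw [Ex_add_fun, Ex_const, Ex_smul_fun, hGP.2] at h4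
    have h5 : 1 / (2 * M ^ 2) * Ex (fun n : ℤ => ((n : ℝ) - m) ^ 2) G.coeff ≤ 1 / 4 := by
      refine (mul_le_mul_of_nonneg_left hm (by positivity)).trans (le_of_eq ?_)
      have e5 : M ^ 2 = (2 ^ (i + s)) ^ 2 * 4 ^ u := by
        rw [hM, show i + u + s = i + s + u by ring, pow_add _ (i + s) u, mul_pow]
        congr 1
        rw [← pow_mul, mul_comm, pow_mul]; norm_num
      rw [e5, coinNum]; push_cast
      field_simp
    linarith
  push_cast at h2
  linarith

lemma coins_DD_ge {i s u : ℕ} (l : List (ℤ × ℤ)) (hl : l.length = coinNum u)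
    (h : ∀ e ∈ l, 2 ^ i ≤ |e.1 - e.2| ∧ |(e.1 : ℝ) - e.2| ≤ 2 ^ (i + s)) :
    (u : ℝ) - s - 5 ≤ DD (l.map coin).prod i u := by
  have h1 := coins_entropy_ge l hl fun e he => (h e he).1
  have h2 := coins_entropy_le l hl fun e he => (h e he).2
  rw [DD]; linarith

/-- Probability that two independent samples of `b` lie in cells of level `i` at distance at
least two. -/
def spread (b : ZA) (i : ℕ) : ℝ :=
  ∑ e ∈ b.coeff.support ×ˢ b.coeff.support,
    if 2 ≤ |e.1 / 2 ^ i - e.2 / 2 ^ i| then b.coeff e.1 * b.coeff e.2 else 0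

lemma eq_sum_coin {b : ZA} (hb : PZ b) :
    b = ∑ e ∈ b.coeff.support ×ˢ b.coeff.support, (b.coeff e.1 * b.coeff e.2) • coin e := by
  simp only [coin, smul_add, Finset.sum_add_distrib]
  rw [Finset.sum_product, Finset.sum_product_right]
  have h1 : ∀ x ∈ b.coeff.support, ∑ y ∈ b.coeff.support,
      (b.coeff x * b.coeff y) • (1 / 2 : ℝ) • dlt x = (1 / 2 : ℝ) • b.coeff x • dlt x := by
    intro x _
    rw [← Finset.sum_smul, ← Finset.mul_sum, hb.sum_coeff, mul_one, smul_comm]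
  have h2 : ∀ x ∈ b.coeff.support, ∑ y ∈ b.coeff.support,
      (b.coeff y * b.coeff x) • (1 / 2 : ℝ) • dlt x = (1 / 2 : ℝ) • b.coeff x • dlt x := by
    intro x _
    rw [← Finset.sum_smul, ← Finset.sum_mul, hb.sum_coeff, one_mul, smul_comm]
  rw [Finset.sum_congr rfl h1, Finset.sum_congr rfl h2, ← Finset.smul_sum, ← ZA_eq_sum, ← add_smul]
  norm_num

lemma sum_pair_eq_one {b : ZA} (hb : PZ b) :
    ∑ e ∈ b.coeff.support ×ˢ b.coeff.support, b.coeff e.1 * b.coeff e.2 = 1 := by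
  rw [Finset.sum_product]
  simp only [← Finset.mul_sum, hb.sum_coeff, mul_one]

lemma spread_nonneg {b : ZA} (hb : PZ b) (i : ℕ) : 0 ≤ spread b i :=
  Finset.sum_nonneg fun e _ => by
    split_ifs; exacts [mul_nonneg (hb.1 _) (hb.1 _), le_rfl]

lemma spread_le_one {b : ZA} (hb : PZ b) (i : ℕ) : spread b i ≤ 1 := by
  rw [← sum_pair_eq_one hb]
  refine Finset.sum_le_sum fun e _ => ?_
  split_ifs; exacts [le_rfl, mul_nonneg (hb.1 _) (hb.1 _)]

/-- Extracting the separated pairs one at a time from a convolution power; `j` counts the coins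
still missing. -/
lemma DD_pow_aux {b : ZA} (hb : PZ b) {i s u : ℕ} {c : ℤ}
    (hsupp : ∀ n, b.coeff n ≠ 0 → c ≤ n ∧ n < c + 2 ^ (i + s)) (hA : 0 ≤ (u : ℝ) - s - 5)
    (k : ℕ) : ∀ (j : ℕ) (l : List (ℤ × ℤ)), l.length + j = coinNum u →
      (∀ e ∈ l, 2 ^ i ≤ |e.1 - e.2| ∧ |(e.1 : ℝ) - e.2| ≤ 2 ^ (i + s)) →
      (1 - 2 ^ j * (1 - spread b i / 2) ^ k) * ((u : ℝ) - s - 5) ≤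
        DD (b ^ k * (l.map coin).prod) i u := by
  have hρ0 := spread_nonneg hb i
  have hρ1 := spread_le_one hb i
  set ρ := spread b i with hρ
  have hq : 0 ≤ 1 - ρ / 2 := by linarith
  have full : ∀ (k : ℕ) (l : List (ℤ × ℤ)), l.length + 0 = coinNum u →
      (∀ e ∈ l, 2 ^ i ≤ |e.1 - e.2| ∧ |(e.1 : ℝ) - e.2| ≤ 2 ^ (i + s)) →
      (1 - 2 ^ 0 * (1 - ρ / 2) ^ k) * ((u : ℝ) - s - 5) ≤
        DD (b ^ k * (l.map coin).prod) i u := by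
    intro k l hl h
    have h1 := coins_DD_ge l hl h
    have h2 := DD_le_mul (PZ_coins l) (hb.pow k) i u
    rw [mul_comm _ (b ^ k)] at h2
    have h3 : 0 ≤ (1 - ρ / 2) ^ k := pow_nonneg hq k
    have := mul_nonneg h3 hA
    linarith
  induction k with
  | zero =>
    intro j l hl h
    rcases Nat.eq_zero_or_pos j with rfl | hj
    · exact full 0 l hl h
    · refine le_trans ?_ (DD_nonneg ((hb.pow 0).mul (PZ_coins l)) i u)
      have : (1 : ℝ) ≤ 2 ^ j := one_le_pow₀ (by norm_num)
      rw [pow_zero, mul_one]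
      exact mul_nonpos_of_nonpos_of_nonneg (by linarith) hA
  | succ k ih =>
    intro j l hl h
    rcases Nat.eq_zero_or_pos j with rfl | hj
    · exact full (k + 1) l hl h
    obtain ⟨j, rfl⟩ : ∃ j', j = j' + 1 := ⟨j - 1, by omega⟩
    set E := b.coeff.support ×ˢ b.coeff.support with hE
    set G := (l.map coin).prod with hG
    have e1 : b ^ (k + 1) * G = ∑ e ∈ E, (b.coeff e.1 * b.coeff e.2) • (b ^ k * (coin e * G)) := by
      rw [pow_succ, mul_assoc]
      conv_lhs => rw [show b * G = (∑ e ∈ E, (b.coeff e.1 * b.coeff e.2) • coin e) * G from by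
        rw [← eq_sum_coin hb]]
      rw [Finset.sum_mul, Finset.mul_sum]
      exact Finset.sum_congr rfl fun e _ => by rw [smul_mul_assoc, mul_smul_comm]
    rw [e1]
    refine le_trans ?_ (DD_concave (fun e _ => mul_nonneg (hb.1 _) (hb.1 _)) (sum_pair_eq_one hb)
      (fun e _ => (hb.pow k).mul ((PZ_coin e).mul (PZ_coins l))) i u)
    set A : ℝ := (u : ℝ) - s - 5 with hAdef
    set Q := (1 - ρ / 2) ^ k with hQ
    have hterm : ∀ e ∈ E, (b.coeff e.1 * b.coeff e.2) * ((1 - 2 ^ (j + 1) * Q) * A) +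
        (if 2 ≤ |e.1 / 2 ^ i - e.2 / 2 ^ i| then b.coeff e.1 * b.coeff e.2 else 0) *
          (2 ^ j * Q * A) ≤
        (b.coeff e.1 * b.coeff e.2) * DD (b ^ k * (coin e * G)) i u := by
      intro e he
      have hw : 0 ≤ b.coeff e.1 * b.coeff e.2 := mul_nonneg (hb.1 _) (hb.1 _)
      split_ifs with hgood
      · have hs1 := hsupp e.1 (Finsupp.mem_support_iff.mp (Finset.mem_product.mp he).1)
        have hs2 := hsupp e.2 (Finsupp.mem_support_iff.mp (Finset.mem_product.mp he).2)
        have hg1 : 2 ^ i ≤ |e.1 - e.2| := by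
          have hpos : (0 : ℤ) < 2 ^ i := by positivity
          have d1 := Int.emod_add_mul_ediv e.1 (2 ^ i)
          have d2 := Int.emod_add_mul_ediv e.2 (2 ^ i)
          have d3 := Int.emod_nonneg e.1 hpos.ne'
          have d4 := Int.emod_lt_of_pos e.1 hpos
          have d5 := Int.emod_nonneg e.2 hpos.ne'
          have d6 := Int.emod_lt_of_pos e.2 hpos
          rcases le_abs.mp hgood with hg | hg
          · refine le_trans ?_ (le_abs_self _)
            nlinarith
          · refine le_trans ?_ (neg_le_abs _)
            nlinarith
        have hg2 : |(e.1 : ℝ) - e.2| ≤ 2 ^ (i + s) := by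
          have : |e.1 - e.2| ≤ 2 ^ (i + s) := by rw [abs_le]; constructor <;> linarith [hs1.1, hs1.2, hs2.1, hs2.2]
          exact_mod_cast this
        have := ih j (e :: l) (by rw [List.length_cons]; omega) (by
          intro e' he'
          rcases List.mem_cons.mp he' with rfl | he'
          · exact ⟨hg1, hg2⟩
          · exact h e' he')
        rw [List.map_cons, List.prod_cons, ← hG] at this
        have := mul_le_mul_of_nonneg_left this hw
        refine le_trans (le_of_eq ?_) this
        rw [pow_succ]; ring
      · rw [zero_mul, add_zero]
        refine mul_le_mul_of_nonneg_left ((ih (j + 1) l hl h).trans ?_) hw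
        have := DD_le_mul ((hb.pow k).mul (PZ_coins l)) (PZ_coin e) i u
        rwa [show b ^ k * (l.map coin).prod * coin e = b ^ k * (coin e * G) by rw [hG]; ring] at this
    refine le_trans (le_of_eq ?_) (Finset.sum_le_sum hterm)
    rw [Finset.sum_add_distrib, ← Finset.sum_mul, ← Finset.sum_mul, sum_pair_eq_one hb]
    change _ = _ + ρ * _
    rw [pow_succ, pow_succ, ← hQ]; ring

/-- A law that is spread out inside an interval of `s` binary digits above level `i` has a
convolution power which fills almost all of the `u` digits above level `i`. -/
lemma exists_pow_DD (s u : ℕ) (hs : 1 ≤ s) : ∃ k : ℕ, ∀ (b : ZA) (i : ℕ) (c : ℤ), PZ b →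
    (∀ n, b.coeff n ≠ 0 → c ≤ n ∧ n < c + 2 ^ (i + s)) → (1 : ℝ) / s ≤ spread b i →
    (u : ℝ) - s - 6 ≤ DD (b ^ k) i u := by
  have hs' : (1 : ℝ) ≤ s := by exact_mod_cast hs
  have hq0 : (0 : ℝ) ≤ 1 - 1 / s / 2 := by
    have : (1 : ℝ) / s ≤ 1 := by rw [div_le_one (by positivity)]; exact hs'
    linarith
  have hq1 : (1 - 1 / s / 2 : ℝ) < 1 := by
    have : (0 : ℝ) < 1 / s / 2 := by positivity
    linarith
  obtain ⟨k, hk⟩ := exists_pow_lt_of_lt_one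
    (show (0 : ℝ) < ((2 : ℝ) ^ coinNum u * ((u : ℝ) + 1))⁻¹ by positivity) hq1
  refine ⟨k, fun b i c hb hsupp hρ => ?_⟩
  by_cases hA : 0 ≤ (u : ℝ) - s - 5
  · have h := DD_pow_aux hb hsupp hA k (coinNum u) [] (by simp) (by simp)
    rw [List.map_nil, List.prod_nil, mul_one] at h
    refine le_trans ?_ h
    have h1 : (1 - spread b i / 2) ^ k ≤ (1 - 1 / s / 2 : ℝ) ^ k :=
      pow_le_pow_left₀ (by linarith [spread_le_one hb i]) (by linarith) k
    have h2 : 2 ^ coinNum u * (1 - spread b i / 2) ^ k ≤ ((u : ℝ) + 1)⁻¹ := by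
      have := mul_le_mul_of_nonneg_left (h1.trans hk.le) (show (0 : ℝ) ≤ 2 ^ coinNum u by positivity)
      refine this.trans (le_of_eq ?_)
      rw [mul_inv]; field_simp
    have h3 := mul_le_mul_of_nonneg_right h2 hA
    have h4 : ((u : ℝ) + 1)⁻¹ * ((u : ℝ) - s - 5) ≤ 1 := by
      rw [inv_mul_le_iff₀ (by positivity)]; linarith
    linarith
  · refine le_trans ?_ (DD_nonneg (hb.pow k) i u)
    linarith

end

/-! ### Entropy growth under convolution -/

section

/-- Mass of the level-`(i+s)` cells inside which `y` is spread out at level `i`. -/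
def goodMass (y : ZA) (i s : ℕ) : ℝ :=
  ∑ w ∈ (y.coeff.mapDomain (fun n => n / 2 ^ (i + s))).support,
    if (1 : ℝ) / s ≤ spread (cell y (fun n => n / 2 ^ (i + s)) w) i
    then y.coeff.mapDomain (fun n => n / 2 ^ (i + s)) w else 0

lemma goodMass_nonneg {y : ZA} (hy : PZ y) (i s : ℕ) : 0 ≤ goodMass y i s :=
  Finset.sum_nonneg fun w _ => by
    split_ifs; exacts [(IsP.mapDomain hy _).1 w, le_rfl]

lemma goodMass_le_one {y : ZA} (hy : PZ y) (i s : ℕ) : goodMass y i s ≤ 1 := by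
  rw [← (IsP.mapDomain hy (fun n => n / 2 ^ (i + s))).2, mass_eq_sum]
  refine Finset.sum_le_sum fun w _ => ?_
  split_ifs; exacts [le_rfl, (IsP.mapDomain hy _).1 w]

lemma cell_range {y : ZA} {m : ℕ} {w n : ℤ}
    (h : (cell y (fun n => n / 2 ^ m) w).coeff n ≠ 0) : 2 ^ m * w ≤ n ∧ n < 2 ^ m * w + 2 ^ m := by
  have h1 := (cell_ne_zero h).2
  have hpos : (0 : ℤ) < 2 ^ m := by positivity
  have h3 := Int.emod_add_mul_ediv n (2 ^ m)
  have h4 := Int.emod_nonneg n hpos.ne'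
  have h5 := Int.emod_lt_of_pos n hpos
  rw [h1] at h3
  constructor <;> linarith

/-- Convolving with a law living on an interval of length `2^(i+s)` changes the entropy at the
coarser scale `2^(i+q)` very little. -/
lemma HZ_coarse_le {x c : ZA} (hx : PZ x) (hc : PZ c) {i s q : ℕ} {z : ℤ}
    (h : ∀ n, c.coeff n ≠ 0 → z ≤ n ∧ n < z + 2 ^ (i + s)) :
    HZ (x * c * UU (i + q)) - HZ (x * UU (i + q)) ≤ Real.logb 2 (1 + 2 ^ s / 2 ^ q) := by
  have h1 := HZ_submod (PZ_UU (i + q)) hx hc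
  rw [show UU (i + q) * x * c = x * c * UU (i + q) by ring, mul_comm (UU (i + q)) x, HZ_UU] at h1
  have h2 := ent_le_logb_card ((PZ_UU (i + q)).mul hc)
    (S := Finset.Ico z (z + 2 ^ (i + s) + 2 ^ (i + q))) (N := (2 : ℝ) ^ (i + q) * (1 + 2 ^ s / 2 ^ q))
    (by
      intro n hn
      obtain ⟨a, b, ha, hb, rfl⟩ := coeff_mul_ne_zero (Finsupp.mem_support_iff.mp hn)
      have hu : 0 ≤ a ∧ a < 2 ^ (i + q) := by
        rw [UU_coeff] at ha
        by_contra h; exact ha (if_neg h)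
      have := h b hb
      rw [Finset.mem_Ico]; constructor <;> linarith [this.1, this.2, hu.1, hu.2])
    (by
      have : (z + 2 ^ (i + s) + 2 ^ (i + q) - z : ℤ).toNat = 2 ^ (i + s) + 2 ^ (i + q) := by
        rw [show (z + 2 ^ (i + s) + 2 ^ (i + q) - z : ℤ) = ((2 ^ (i + s) + 2 ^ (i + q) : ℕ) : ℤ) by
          push_cast; ring]
        exact Int.toNat_natCast _
      rw [Int.card_Ico, this]; push_cast
      rw [pow_add, pow_add]; field_simp; linarith)
  rw [Real.logb_mul (by positivity) (by positivity), logb_two_pow] at h2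
  simp only [HZ] at h1 ⊢
  linarith

/-- Entropy growth at one scale: let `k` be such that the `k`-th convolution power of any law spread
at scale `i` inside a cell of level `i + s` is nearly uniform over `u` levels above `i`. If `y` puts
mass on cells where it is spread, and `x` has scale entropy well below `u`, then convolution with
`y` strictly increases the scale entropy of `x`. On each spread cell the gain from `k` convolutions
is bounded by `k` times the gain from one, by submodularity. -/
lemma core_step {s u k : ℕ} (hs : 1 ≤ s)
    (hk : ∀ (b : ZA) (i : ℕ) (c : ℤ), PZ b →
      (∀ n, b.coeff n ≠ 0 → c ≤ n ∧ n < c + 2 ^ (i + s)) → (1 : ℝ) / s ≤ spread b i →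
      (u : ℝ) - s - 6 ≤ DD (b ^ k) i u)
    {x y : ZA} (hx : PZ x) (hy : PZ y) (i q : ℕ) :
    goodMass y i s * ((u : ℝ) - s - 6 - DD x i u) ≤
      k * (DD (x * y) i q - DD x i q + Real.logb 2 (1 + 2 ^ s / 2 ^ q)) := by
  set f : ℤ → ℤ := fun n => n / 2 ^ (i + s) with hf
  set p := y.coeff.mapDomain f with hp
  have hpP : IsP p := IsP.mapDomain hy _
  set η := Real.logb 2 (1 + 2 ^ s / 2 ^ q)
  set g : ℤ → ℝ := fun w => HZ (x * UU i * cell y f w) - HZ (x * UU i) with hg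
  have hg0 : ∀ w ∈ p.support, 0 ≤ g w := by
    intro w hw
    have := HZ_le_mul (hx.mul (PZ_UU i)) (PZ_cell hy hw)
    rw [mul_comm (cell y f w)] at this
    simp only [hg]; linarith
  have h1 : ∀ w ∈ p.support, (if (1 : ℝ) / s ≤ spread (cell y f w) i then p w else 0) *
      ((u : ℝ) - s - 6 - DD x i u) ≤ p w * (k * g w) := by
    intro w hw
    have hcw := PZ_cell hy hw
    split_ifs with hgood
    · refine mul_le_mul_of_nonneg_left ?_ (hpP.1 w)
      have a1 := hk (cell y f w) i (2 ^ (i + s) * w) hcw (fun n hn => cell_range hn) hgood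
      have a2 := HZ_mul_pow_le (hx.mul (PZ_UU i)) hcw k
      have a3 := DD_le_mul (hcw.pow k) hx i u
      have a4 := HZ_le_mul (hx.mul (PZ_UU (i + u))) (hcw.pow k)
      rw [show cell y f w ^ k * (x * UU (i + u)) = cell y f w ^ k * x * UU (i + u) by ring] at a4
      rw [show x * UU i * cell y f w ^ k = cell y f w ^ k * x * UU i by ring] at a2
      simp only [DD] at a1 a3 ⊢
      simp only [hg]
      linarith
    · rw [zero_mul]
      exact mul_nonneg (hpP.1 w) (mul_nonneg (Nat.cast_nonneg k) (hg0 w hw))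
  have h2 := Finset.sum_le_sum h1
  rw [← Finset.sum_mul] at h2
  have h3 : ∑ w ∈ p.support, p w * (k * g w) = k * ∑ w ∈ p.support, p w * g w := by
    rw [Finset.mul_sum]; exact Finset.sum_congr rfl fun w _ => by ring
  have h4 : ∑ w ∈ p.support, p w * g w ≤ DD (x * y) i q - DD x i q + η := by
    have b1 := DD_concave (S := p.support) (p := p) (A := fun w => x * cell y f w)
      (fun w _ => hpP.1 w) (by rw [← mass_eq_sum, hpP.2]) (fun w hw => hx.mul (PZ_cell hy hw)) i q
    have b2 : ∑ w ∈ p.support, p w • (x * cell y f w) = x * y := by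
      conv_rhs => rw [eq_sum_cell hy f]
      rw [Finset.mul_sum]; exact Finset.sum_congr rfl fun w _ => by rw [mul_smul_comm]
    rw [b2] at b1
    have b3 : ∑ w ∈ p.support, p w * g w ≤
        ∑ w ∈ p.support, (p w * DD (x * cell y f w) i q + p w * (η - DD x i q)) := by
      refine Finset.sum_le_sum fun w hw => ?_
      rw [← mul_add]
      refine mul_le_mul_of_nonneg_left ?_ (hpP.1 w)
      have := HZ_coarse_le hx (PZ_cell hy hw) (q := q) (fun n hn => cell_range hn)
      simp only [hg, DD, show x * UU i * cell y f w = x * cell y f w * UU i by ring]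
      linarith
    rw [Finset.sum_add_distrib, ← Finset.sum_mul, ← mass_eq_sum, hpP.2, one_mul] at b3
    linarith
  rw [h3] at h2
  exact h2.trans (mul_le_mul_of_nonneg_left h4 (Nat.cast_nonneg k))

lemma card_Ico_pow (w : ℤ) (s : ℕ) : ((Finset.Ico (2 ^ s * w) (2 ^ s * w + 2 ^ s)).card : ℝ) ≤ 2 ^ s := by
  have : (2 ^ s * w + 2 ^ s - 2 ^ s * w : ℤ).toNat = 2 ^ s := by
    rw [add_sub_cancel_left]; exact_mod_cast Int.toNat_natCast (2 ^ s)
  rw [Int.card_Ico, this]; push_cast; exact le_rfl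

/-- A law which is not spread out has bounded entropy at level `i`. -/
lemma ent_of_not_spread {c : ZA} (hc : PZ c) {i s : ℕ} (hs : 1 ≤ s) {w : ℤ}
    (hw : ∀ n, c.coeff n ≠ 0 → n / 2 ^ i ∈ Finset.Ico (2 ^ s * w) (2 ^ s * w + 2 ^ s))
    (h : spread c i < 1 / s) : ent (c.coeff.mapDomain (fun n => n / 2 ^ i)) ≤ 4 := by
  have hs0 : (0 : ℝ) < s := by exact_mod_cast hs
  obtain ⟨x0, hx0, hlt⟩ : ∃ x0 ∈ c.coeff.support, ∑ x ∈ c.coeff.support,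
      (if 2 ≤ |x / 2 ^ i - x0 / 2 ^ i| then c.coeff x else 0) < 1 / s := by
    by_contra hcon
    push Not at hcon
    have : (1 : ℝ) / s ≤ spread c i := by
      rw [spread, Finset.sum_product_right]
      have e : (1 : ℝ) / s = ∑ x0 ∈ c.coeff.support, c.coeff x0 * (1 / s) := by
        rw [← Finset.sum_mul, hc.sum_coeff, one_mul]
      rw [e]
      refine Finset.sum_le_sum fun x0 hx0 => ?_
      refine (mul_le_mul_of_nonneg_left (hcon x0 hx0) (hc.1 x0)).trans (le_of_eq ?_)
      rw [Finset.mul_sum]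
      refine Finset.sum_congr rfl fun x _ => ?_
      rw [mul_ite, mul_zero, mul_comm]
    linarith
  set B : ℤ → Bool := fun x => decide (2 ≤ |x / 2 ^ i - x0 / 2 ^ i|) with hB
  set p := c.coeff.mapDomain B with hp
  have hpP : IsP p := IsP.mapDomain hc B
  have hpt : p true < 1 / s := by
    refine lt_of_le_of_lt (le_of_eq ?_) hlt
    rw [hp, mapDomain_apply_eq_sum]
    refine Finset.sum_congr rfl fun x _ => ?_
    simp only [hB, decide_eq_true_eq]
  rw [mapDomain_eq_sum_condLaw hc.1 B]
  refine (ent_mix_le hpP fun b hb => (isP_condLaw hc hb).mapDomain _).trans ?_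
  have hent : ent p ≤ 1 := by
    have := ent_le_logb_card hpP (S := Finset.univ) (N := (2 : ℝ) ^ 1) (Finset.subset_univ _) (by simp)
    rw [logb_two_pow] at this
    simpa using this
  have hterm : ∀ b ∈ p.support, p b * ent ((condLaw c.coeff B b).mapDomain (fun n => n / 2 ^ i)) ≤
      p b * (if b then (s : ℝ) else 2) := by
    intro b hb
    refine mul_le_mul_of_nonneg_left ?_ (hpP.1 b)
    cases b with
    | true =>
      have := ent_le_logb_card ((isP_condLaw hc hb).mapDomain (fun n => n / 2 ^ i))
        (S := Finset.Ico (2 ^ s * w) (2 ^ s * w + 2 ^ s)) (N := (2 : ℝ) ^ s) (by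
          intro y hy
          obtain ⟨x, hx, rfl⟩ := exists_of_mem_support_map hy
          exact hw x (condLaw_ne_zero hx).1) (card_Ico_pow w s)
      rw [logb_two_pow] at this
      simpa using this
    | false =>
      have := ent_le_logb_card ((isP_condLaw hc hb).mapDomain (fun n => n / 2 ^ i))
        (S := Finset.Icc (x0 / 2 ^ i - 1) (x0 / 2 ^ i + 1)) (N := 3) (by
          intro y hy
          obtain ⟨x, hx, rfl⟩ := exists_of_mem_support_map hy
          have h2 := (condLaw_ne_zero hx).2
          simp only [hB, decide_eq_false_iff_not, not_le] at h2
          have h3 := abs_lt.mp h2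
          rw [Finset.mem_Icc]; omega) (by
          rw [Int.card_Icc, show (x0 / 2 ^ i + 1 + 1 - (x0 / 2 ^ i - 1)).toNat = 3 by omega]
          norm_num)
      simpa using this.trans logb_three_le
  have hsum : ∑ b ∈ p.support, p b * (if b then (s : ℝ) else 2) ≤ 3 := by
    have : ∑ b ∈ p.support, p b * (if b then (s : ℝ) else 2) ≤
        ∑ b : Bool, p b * (if b then (s : ℝ) else 2) :=
      Finset.sum_le_sum_of_subset_of_nonneg (Finset.subset_univ _) fun b _ _ =>
        mul_nonneg (hpP.1 b) (by split_ifs <;> positivity)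
    refine this.trans ?_
    rw [Fintype.sum_bool]
    have h1 := hpP.le_one false
    have h2 : p true * s ≤ 1 := by
      rw [lt_div_iff₀ hs0] at hpt; exact hpt.le
    simp only [if_true]
    norm_num
    linarith
  linarith [Finset.sum_le_sum hterm]

/-- Passing from level `i + s` to the finer level `i`, the law `y` acquires bounded entropy on cells
where it is not spread, and at most `s` on the others. -/
lemma QZ_step {y : ZA} (hy : PZ y) (i : ℕ) {s : ℕ} (hs : 1 ≤ s) :
    QZ i y ≤ QZ (i + s) y + 4 + s * goodMass y i s := by
  set f : ℤ → ℤ := fun n => n / 2 ^ (i + s) with hf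
  set p := y.coeff.mapDomain f with hp
  have hpP : IsP p := IsP.mapDomain hy _
  rw [QZ, mapDomain_eq_sum_condLaw hy.1 f]
  refine (ent_mix_le hpP fun b hb => (isP_condLaw hy hb).mapDomain _).trans ?_
  have hterm : ∀ w ∈ p.support, p w * ent ((condLaw y.coeff f w).mapDomain (fun n => n / 2 ^ i)) ≤
      p w * 4 + s * (if (1 : ℝ) / s ≤ spread (cell y f w) i then p w else 0) := by
    intro w hw
    have hrange : ∀ n, (cell y f w).coeff n ≠ 0 →
        n / 2 ^ i ∈ Finset.Ico (2 ^ s * w) (2 ^ s * w + 2 ^ s) := by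
      intro n hn
      have hpos : (0 : ℤ) < 2 ^ i := by positivity
      obtain ⟨h1, h2⟩ := cell_range hn
      rw [Finset.mem_Ico, Int.le_ediv_iff_mul_le hpos, Int.ediv_lt_iff_lt_mul hpos]
      rw [pow_add] at h1 h2
      constructor <;> nlinarith
    split_ifs with hg
    · have := ent_le_logb_card ((isP_condLaw hy hw).mapDomain (fun n => n / 2 ^ i))
        (S := Finset.Ico (2 ^ s * w) (2 ^ s * w + 2 ^ s)) (N := (2 : ℝ) ^ s) (by
          intro z hz
          obtain ⟨x, hx, rfl⟩ := exists_of_mem_support_map hz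
          exact hrange x hx) (card_Ico_pow w s)
      rw [logb_two_pow] at this
      have := mul_le_mul_of_nonneg_left this (hpP.1 w)
      linarith [hpP.1 w]
    · rw [mul_zero, add_zero]
      exact mul_le_mul_of_nonneg_left
        (ent_of_not_spread (PZ_cell hy hw) hs hrange (not_le.mp hg)) (hpP.1 w)
  have h := Finset.sum_le_sum hterm
  rw [Finset.sum_add_distrib, ← Finset.sum_mul, ← mass_eq_sum, hpP.2, ← Finset.mul_sum] at h
  change _ ≤ ent p + _ + _
  change _ ≤ 1 * 4 + s * goodMass y i s at h
  linarith

/-- Entropy not explained by the coarse level `s * N` is produced on spread cells. -/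
lemma HZ_le_goodMass {y : ZA} (hy : PZ y) {s : ℕ} (hs : 1 ≤ s) (N : ℕ) :
    HZ y ≤ QZ (s * N) y + 4 * N + s * ∑ l ∈ Finset.range N, goodMass y (s * l) s := by
  induction N with
  | zero => simp [QZ_zero]
  | succ N ih =>
    have := QZ_step hy (s * N) hs
    rw [Finset.sum_range_succ, Nat.mul_succ]
    have e : (s : ℝ) * (∑ l ∈ Finset.range N, goodMass y (s * l) s + goodMass y (s * N) s) =
        s * ∑ l ∈ Finset.range N, goodMass y (s * l) s + s * goodMass y (s * N) s := mul_add _ _ _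
    rw [e]
    push_cast
    linarith

lemma sum_window_le {d : ℕ → ℝ} (hd : ∀ l, 0 ≤ d l) (N v : ℕ) :
    ∑ l ∈ Finset.range N, ∑ j ∈ Finset.range v, d (l + j) ≤
      v * ∑ l ∈ Finset.range (N + v), d l := by
  rw [Finset.sum_comm]
  have : ∀ j ∈ Finset.range v, ∑ l ∈ Finset.range N, d (l + j) ≤ ∑ l ∈ Finset.range (N + v), d l := by
    intro j hj
    have hj := Finset.mem_range.mp hj
    have e : ∑ l ∈ Finset.range N, d (l + j) = ∑ l ∈ Finset.Ico j (N + j), d l := by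
      rw [Finset.sum_Ico_eq_sum_range]
      simp only [Nat.add_sub_cancel, add_comm]
    rw [e, Finset.range_eq_Ico]
    refine Finset.sum_le_sum_of_subset_of_nonneg (fun l hl => ?_) fun l _ _ => hd l
    rw [Finset.mem_Ico] at hl ⊢; omega
  refine (Finset.sum_le_sum this).trans (le_of_eq ?_)
  rw [Finset.sum_const, Finset.card_range, nsmul_eq_mul]

lemma DD_zero (a : ZA) (i : ℕ) : DD a i 0 = 0 := by simp [DD]

lemma DD_window (a : ZA) (s l v : ℕ) :
    DD a (s * l) (s * v) = ∑ j ∈ Finset.range v, DD a (s * (l + j)) s := by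
  induction v with
  | zero => simp [DD_zero]
  | succ v ih =>
    rw [Finset.sum_range_succ, ← ih, Nat.mul_succ, DD_add, mul_add]

lemma sum_DD_window_le {a : ZA} (ha : PZ a) {s v N b : ℕ} (hb : s * (N + v) ≤ b) :
    ∑ l ∈ Finset.range N, DD a (s * l) (s * v) ≤ v * DD a 0 b := by
  rw [Finset.sum_congr rfl fun l _ => DD_window a s l v]
  refine (sum_window_le (d := fun l => DD a (s * l) s) (fun l => DD_nonneg ha _ _) N v).trans ?_
  refine mul_le_mul_of_nonneg_left ?_ (Nat.cast_nonneg v)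
  have h := DD_window a s 0 (N + v)
  simp only [zero_add, mul_zero] at h
  rw [← h]
  obtain ⟨e, rfl⟩ := Nat.exists_eq_add_of_le hb
  rw [DD_add]
  linarith [DD_nonneg ha (0 + s * (N + v)) e]

lemma sum_DD_diff_window_le {x y : ZA} (hx : PZ x) (hy : PZ y) {s v N b : ℕ} (hb : s * (N + v) ≤ b) :
    ∑ l ∈ Finset.range N, (DD (x * y) (s * l) (s * v) - DD x (s * l) (s * v)) ≤
      v * (DD (x * y) 0 b - DD x 0 b) := by
  rw [Finset.sum_congr rfl fun l _ => by rw [DD_window x s l v, DD_window (x * y) s l v,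
    ← Finset.sum_sub_distrib]]
  refine (sum_window_le (d := fun l => DD (x * y) (s * l) s - DD x (s * l) s)
    (fun l => sub_nonneg.mpr (DD_le_mul hx hy _ _)) N v).trans ?_
  refine mul_le_mul_of_nonneg_left ?_ (Nat.cast_nonneg v)
  have h := DD_window x s 0 (N + v)
  have h' := DD_window (x * y) s 0 (N + v)
  simp only [zero_add, mul_zero] at h h'
  rw [Finset.sum_sub_distrib, ← h, ← h']
  obtain ⟨e, rfl⟩ := Nat.exists_eq_add_of_le hb
  rw [DD_add, DD_add]
  linarith [DD_le_mul hx hy (0 + s * (N + v)) e]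

/-- Summation of `core_step` over the scales `s l`, `l < N`. `A` is a lower bound for the average
scale-entropy of `x` over windows of length `s v`, valid up to the errors `e l`. -/
lemma core_sum {s v q0 k : ℕ} (hs : 1 ≤ s)
    (hk : ∀ (b : ZA) (i : ℕ) (c : ℤ), PZ b →
      (∀ n, b.coeff n ≠ 0 → c ≤ n ∧ n < c + 2 ^ (i + s)) → (1 : ℝ) / s ≤ spread b i →
      ((s * v : ℕ) : ℝ) - s - 6 ≤ DD (b ^ k) i (s * v))
    {x y : ZA} (hx : PZ x) (hy : PZ y) {N b : ℕ} (hb1 : s * (N + v) ≤ b) (hb2 : s * (N + q0) ≤ b)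
    {A : ℝ} {e : ℕ → ℝ}
    (hA : ∀ l < N, A * (s * v) - e l ≤ DD x (s * l) (s * v))
    (he : ∀ l < N, 0 ≤ e l) :
    ((s * v : ℝ) - s - 6 - A * (s * v)) * ∑ l ∈ Finset.range N, goodMass y (s * l) s ≤
      v * (DD x 0 b - A * (s * N)) + ∑ l ∈ Finset.range N, e l +
        k * (q0 * (DD (x * y) 0 b - DD x 0 b) + N * Real.logb 2 (1 + 2 ^ s / 2 ^ (s * q0))) := by
  set η := Real.logb 2 (1 + 2 ^ s / 2 ^ (s * q0))
  have h1 : ∀ l ∈ Finset.range N, ((s * v : ℝ) - s - 6 - A * (s * v)) * goodMass y (s * l) s ≤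
      (DD x (s * l) (s * v) - A * (s * v)) + e l +
        k * ((DD (x * y) (s * l) (s * q0) - DD x (s * l) (s * q0)) + η) := by
    intro l hl
    have hl := Finset.mem_range.mp hl
    have a1 := core_step hs hk hx hy (s * l) (s * q0)
    have a2 := goodMass_nonneg hy (s * l) s
    have a3 := goodMass_le_one hy (s * l) s
    have a4 := hA l hl
    have a5 := he l hl
    push_cast at a1
    have a6 : goodMass y (s * l) s * (DD x (s * l) (s * v) - A * (s * v) + e l) ≤
        DD x (s * l) (s * v) - A * (s * v) + e l :=
      mul_le_of_le_one_left (by linarith) a3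
    have a7 := mul_nonneg a2 a5
    linarith
  have h2 := Finset.sum_le_sum h1
  rw [← Finset.mul_sum, Finset.sum_add_distrib, Finset.sum_add_distrib, Finset.sum_sub_distrib,
    ← Finset.mul_sum (f := fun l => (DD (x * y) (s * l) (s * q0) - DD x (s * l) (s * q0)) + η),
    Finset.sum_add_distrib] at h2
  simp only [Finset.sum_const, Finset.card_range, nsmul_eq_mul] at h2
  have h3 := sum_DD_window_le hx (v := v) hb1
  have h4 := mul_le_mul_of_nonneg_left (sum_DD_diff_window_le hx hy (v := q0) hb2)
    (Nat.cast_nonneg (α := ℝ) k)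
  have e1 : (N : ℝ) * (A * (s * v)) = v * (A * (s * N)) := by ring
  rw [e1] at h2
  linarith

end

/-! ### Random words and affine systems -/

section

lemma abs_floor_sub_le {u v : ℝ} {k : ℕ} (h : |u - v| ≤ k) : |⌊u⌋ - ⌊v⌋| ≤ (k : ℤ) := by
  obtain ⟨h1, h2⟩ := abs_le.mp h
  have a1 : ⌊u⌋ ≤ ⌊v⌋ + k := by
    rw [← Int.floor_add_natCast]; exact Int.floor_le_floor (by linarith)
  have a2 : ⌊v⌋ ≤ ⌊u⌋ + k := by
    rw [← Int.floor_add_natCast]; exact Int.floor_le_floor (by linarith)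
  rw [abs_le]; constructor <;> linarith

/-- If `G₁` is within bounded distance of an affine function of `G₂`, the integer part of `G₁` is
nearly determined by that of `G₂`. -/
lemma ent_floor_le {Ω : Type*} {a : Ω →₀ ℝ} (ha : IsP a) {G1 G2 : Ω → ℝ} (A B : ℝ) (k : ℕ)
    (h : ∀ x, a x ≠ 0 → |G1 x - (A * G2 x + B)| + |A| ≤ k) :
    ent (a.mapDomain fun x => ⌊G1 x⌋) ≤ ent (a.mapDomain fun x => ⌊G2 x⌋) +
      Real.logb 2 (2 * k + 1) := by
  refine ent_map_le_of_near ha (fun x => ⌊G1 x⌋) (fun x => ⌊G2 x⌋)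
    (fun w => ⌊A * (w : ℝ) + B⌋) k fun x hx => abs_floor_sub_le ((?_ : _ ≤ _).trans (h x hx))
  have e : G1 x - (A * (⌊G2 x⌋ : ℝ) + B) = (G1 x - (A * G2 x + B)) + A * (G2 x - ⌊G2 x⌋) := by ring
  rw [e]
  refine (abs_add_le _ _).trans (add_le_add le_rfl ?_)
  rw [abs_mul]
  refine mul_le_of_le_one_right (abs_nonneg _) ?_
  rw [abs_of_nonneg (by linarith [Int.floor_le (G2 x)])]
  linarith [Int.lt_floor_add_one (G2 x)]

lemma ent_const {Ω κ : Type*} {a : Ω →₀ ℝ} (ha : IsP a) (c : κ) :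
    ent (a.mapDomain fun _ => c) = 0 := by
  have : a.mapDomain (fun _ => c) = Finsupp.single c 1 := by
    rw [Finsupp.mapDomain, Finsupp.sum, ← Finsupp.single_finsetSum, ← mass_eq_sum, ha.2]
  rw [this, ent_single]

/-- A bounded real random variable has few integer parts. -/
lemma ent_floor_bdd {Ω : Type*} {a : Ω →₀ ℝ} (ha : IsP a) {G : Ω → ℝ} (B : ℝ) (k : ℕ)
    (h : ∀ x, a x ≠ 0 → |G x - B| ≤ k) :
    ent (a.mapDomain fun x => ⌊G x⌋) ≤ Real.logb 2 (2 * k + 1) := by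
  have := ent_floor_le ha (G1 := G) (G2 := fun _ => 0) 0 B k (fun x hx => by simpa using h x hx)
  rwa [ent_const ha, zero_add] at this

variable {Λ : Type*} [Fintype Λ]

/-- The law of a random word of length `n` with independent letters of law `p`. -/
def WL (p : Λ → ℝ) : ℕ → List Λ →₀ ℝ
  | 0 => Finsupp.single [] 1
  | n + 1 => ∑ i, p i • (WL p n).mapDomain (List.cons i)

/-- The composition `f_I` of the maps `x ↦ r i * x + s i` along a word. -/
def wf (r s : Λ → ℝ) (I : List Λ) (x : ℝ) : ℝ := I.foldr (fun i y => r i * y + s i) x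

/-- The linear part of `f_I`. -/
def rt (r : Λ → ℝ) (I : List Λ) : ℝ := (I.map r).prod

/-- Uniform bounds on an affine contracting system with weights `p` and base point `x0`. -/
structure Good (ρ0 ρ1 R : ℝ) (p r s : Λ → ℝ) (x0 : ℝ) : Prop where
  p_pos : ∀ i, 0 < p i
  p_sum : ∑ i, p i = 1
  ρ0_pos : 0 < ρ0
  ρ1_pos : 0 < ρ1
  ρ1_lt : ρ1 < 1
  r_ge : ∀ i, ρ0 ≤ |r i|
  r_le : ∀ i, |r i| ≤ ρ1
  R_pos : 1 ≤ R
  s_le : ∀ i, |s i| ≤ (1 - ρ1) * R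
  x_le : |x0| ≤ R

section words
variable {p : Λ → ℝ}

lemma WL_zero (p : Λ → ℝ) : WL p 0 = Finsupp.single [] 1 := rfl
lemma WL_succ (p : Λ → ℝ) (n : ℕ) :
    WL p (n + 1) = ∑ i, p i • (WL p n).mapDomain (List.cons i) := rfl

lemma Ex_WL_succ (p : Λ → ℝ) (φ : List Λ → ℝ) (n : ℕ) :
    Ex φ (WL p (n + 1)) = ∑ i, p i * Ex (fun I => φ (i :: I)) (WL p n) := by
  rw [WL_succ, map_sum]
  refine Finset.sum_congr rfl fun i _ => ?_
  rw [map_smul, Ex_mapDomain, smul_eq_mul]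

lemma isP_WL (hp : ∀ i, 0 < p i) (hp1 : ∑ i, p i = 1) (n : ℕ) : IsP (WL p n) := by
  induction n with
  | zero => exact isP_single _
  | succ n ih =>
    exact isP_mix (fun w _ => (hp w).le) hp1 fun w _ => ih.mapDomain _

lemma length_of_WL {n : ℕ} {I : List Λ} (h : WL p n I ≠ 0) : I.length = n := by
  induction n generalizing I with
  | zero =>
    rw [WL_zero, Finsupp.single_apply] at h
    by_contra hne
    exact h (if_neg (by rintro rfl; exact hne rfl))
  | succ n ih =>
    rw [WL_succ, Finsupp.finsetSum_apply] at h
    obtain ⟨i, _, hi⟩ := Finset.exists_ne_zero_of_sum_ne_zero h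
    rw [Finsupp.smul_apply, smul_eq_mul] at hi
    obtain ⟨J, hJ, rfl⟩ := exists_of_mem_support_map
      (Finsupp.mem_support_iff.mpr (right_ne_zero_of_mul hi))
    simp [ih hJ]

lemma WL_apply {n : ℕ} {I : List Λ} (h : I.length = n) : WL p n I = (I.map p).prod := by
  induction n generalizing I with
  | zero => rw [List.length_eq_zero_iff] at h; subst h; simp [WL_zero]
  | succ n ih =>
    obtain ⟨j, J, rfl⟩ := List.exists_cons_of_length_eq_add_one h
    rw [WL_succ, Finsupp.finsetSum_apply, Finset.sum_eq_single j]
    · rw [Finsupp.smul_apply, Finsupp.mapDomain_apply (List.cons_injective), ih (by simpa using h)]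
      simp
    · intro i _ hij
      rw [Finsupp.smul_apply, Finsupp.mapDomain_of_notMem_range, smul_zero]
      rintro ⟨K, hK⟩
      exact hij (by simpa using (List.cons.inj hK).1)
    · simp

lemma WL_add (p : Λ → ℝ) (n M : ℕ) :
    WL p (n + M) = Finsupp.linearCombination ℝ
      (fun I => (WL p M).mapDomain (I ++ ·)) (WL p n) := by
  induction n with
  | zero =>
    rw [WL_zero, Finsupp.linearCombination_single, zero_add, one_smul]
    simp only [List.nil_append]
    exact (Finsupp.mapDomain_id).symm
  | succ n ih =>
    rw [show n + 1 + M = (n + M) + 1 by ring, WL_succ, WL_succ, map_sum, ih]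
    refine Finset.sum_congr rfl fun i _ => ?_
    rw [map_smul, Finsupp.linearCombination_mapDomain, Finsupp.linearCombination_apply,
      Finsupp.linearCombination_apply, Finsupp.sum, Finsupp.sum, Finsupp.mapDomain_finsetSum]
    congr 1
    refine Finset.sum_congr rfl fun I _ => ?_
    rw [Finsupp.mapDomain_smul, ← Finsupp.mapDomain_comp]
    rfl

lemma ent_eq_Ex {ι : Type*} (a : ι →₀ ℝ) : ent a = Ex (fun x => -Real.logb 2 (a x)) a := by
  rw [Ex_eq_sum, ent, Finsupp.sum, Finset.sum_div]
  refine Finset.sum_congr rfl fun x _ => ?_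
  rw [Real.negMulLog, Real.logb]; ring

/-- The entropy of a random word of length `n` is `n` times the entropy of a letter. -/
lemma ent_WL (hp : ∀ i, 0 < p i) (hp1 : ∑ i, p i = 1)
    (n : ℕ) : ent (WL p n) = n * (-∑ i, p i * Real.logb 2 (p i)) := by
  have key : ∀ n, Ex (fun I : List Λ => -Real.logb 2 ((I.map p).prod)) (WL p n) =
      n * (-∑ i, p i * Real.logb 2 (p i)) := by
    intro n
    induction n with
    | zero => rw [WL_zero, Ex_single]; simp
    | succ n ih =>
      rw [Ex_WL_succ]
      have : ∀ i ∈ Finset.univ, p i * Ex (fun I : List Λ => -Real.logb 2 (((i :: I).map p).prod)) (WL p n) =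
          p i * (-Real.logb 2 (p i)) + p i * (n * (-∑ i, p i * Real.logb 2 (p i))) := by
        intro i _
        rw [← mul_add, ← ih]
        congr 1
        have e : ∀ I : List Λ, -Real.logb 2 (((i :: I).map p).prod) =
            -Real.logb 2 (p i) + -Real.logb 2 ((I.map p).prod) := by
          intro I
          rw [List.map_cons, List.prod_cons, Real.logb_mul (hp i).ne', neg_add]
          exact List.prod_ne_zero (by
            intro h; obtain ⟨j, _, hj⟩ := List.mem_map.mp h; exact (hp j).ne' hj)
        simp only [e]
        rw [Ex_add_fun, Ex_const, (isP_WL hp hp1 n).2, mul_one]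
      rw [Finset.sum_congr rfl this, Finset.sum_add_distrib, ← Finset.sum_mul, hp1]
      push_cast
      simp only [mul_neg, Finset.sum_neg_distrib]
      ring
  rw [← key n, ent_eq_Ex, Ex_eq_sum, Ex_eq_sum]
  refine Finset.sum_congr rfl fun I hI => ?_
  rw [WL_apply (length_of_WL (Finsupp.mem_support_iff.mp hI))]

/-- First and second moments of an additive functional of a random word. -/
lemma moments_WL (hp : ∀ i, 0 < p i) (hp1 : ∑ i, p i = 1) (g : Λ → ℝ) (n : ℕ) :
    Ex (fun I : List Λ => (I.map g).sum - n * ∑ i, p i * g i) (WL p n) = 0 ∧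
    Ex (fun I : List Λ => ((I.map g).sum - n * ∑ i, p i * g i) ^ 2) (WL p n) =
      n * ∑ i, p i * (g i - ∑ i, p i * g i) ^ 2 := by
  set χ := ∑ i, p i * g i with hχ
  induction n with
  | zero => rw [WL_zero, Ex_single, Ex_single]; simp
  | succ n ih =>
    obtain ⟨ih1, ih2⟩ := ih
    have hm := (isP_WL hp hp1 n).2
    have e1 : ∀ i (I : List Λ), ((i :: I).map g).sum - ((n + 1 : ℕ) : ℝ) * χ =
        (g i - χ) + ((I.map g).sum - n * χ) := by
      intro i I; rw [List.map_cons, List.sum_cons]; push_cast; ring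
    have e2 : ∀ i (I : List Λ), (((i :: I).map g).sum - ((n + 1 : ℕ) : ℝ) * χ) ^ 2 =
        (g i - χ) ^ 2 + (2 * (g i - χ) * ((I.map g).sum - n * χ) + ((I.map g).sum - n * χ) ^ 2) := by
      intro i I; rw [e1]; ring
    constructor
    · rw [Ex_WL_succ]
      simp only [e1, Ex_add_fun, Ex_const, hm, ih1]
      simp only [mul_one, add_zero, mul_sub, Finset.sum_sub_distrib, ← Finset.sum_mul, hp1]
      rw [hχ]; ring
    · rw [Ex_WL_succ]
      simp only [e2, Ex_add_fun, Ex_const, Ex_smul_fun, hm, ih1, ih2]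
      simp only [mul_one, mul_zero, zero_add, mul_add, Finset.sum_add_distrib, ← Finset.sum_mul, hp1]
      push_cast; ring

lemma abs_moment_WL (hp : ∀ i, 0 < p i) (hp1 : ∑ i, p i = 1)
    (g : Λ → ℝ) {G : ℝ} (hG : ∀ i, |g i| ≤ G) (n : ℕ) :
    Ex (fun I : List Λ => |(I.map g).sum - n * ∑ i, p i * g i|) (WL p n) ≤
      (4 * G ^ 2 + 1) * Real.sqrt n := by
  rcases Nat.eq_zero_or_pos n with rfl | hn
  · rw [WL_zero, Ex_single]; simp
  set χ := ∑ i, p i * g i with hχ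
  have hs : 0 < Real.sqrt n := Real.sqrt_pos.mpr (by exact_mod_cast hn)
  have hss : Real.sqrt n * Real.sqrt n = n := Real.mul_self_sqrt (Nat.cast_nonneg n)
  have hP := isP_WL hp hp1 n
  have h1 : Ex (fun I : List Λ => |(I.map g).sum - n * χ|) (WL p n) ≤
      Ex (fun I : List Λ => (Real.sqrt n)⁻¹ * ((I.map g).sum - n * χ) ^ 2 + Real.sqrt n) (WL p n) := by
    refine Ex_mono hP.1 fun I _ => ?_
    set y := (I.map g).sum - n * χ
    have h2 : |y| * Real.sqrt n ≤ y ^ 2 + Real.sqrt n * Real.sqrt n := by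
      nlinarith [sq_nonneg (|y| - Real.sqrt n), sq_abs y, abs_nonneg y]
    have : (Real.sqrt n)⁻¹ * y ^ 2 + Real.sqrt n = (y ^ 2 + Real.sqrt n * Real.sqrt n) / Real.sqrt n := by
      field_simp
    rw [this, le_div_iff₀ hs]; exact h2
  refine h1.trans ?_
  rw [Ex_add_fun, Ex_smul_fun, (moments_WL hp hp1 g n).2, Ex_const, hP.2, mul_one]
  have hχG : |χ| ≤ G := by
    rw [hχ]
    refine (Finset.abs_sum_le_sum_abs _ _).trans ?_
    calc ∑ i, |p i * g i| ≤ ∑ i, p i * G := Finset.sum_le_sum fun i _ => by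
          rw [abs_mul, abs_of_pos (hp i)]; exact mul_le_mul_of_nonneg_left (hG i) (hp i).le
      _ = G := by rw [← Finset.sum_mul, hp1, one_mul]
  have hV : ∑ i, p i * (g i - χ) ^ 2 ≤ 4 * G ^ 2 := by
    calc ∑ i, p i * (g i - χ) ^ 2 ≤ ∑ i, p i * (4 * G ^ 2) := Finset.sum_le_sum fun i _ => by
          refine mul_le_mul_of_nonneg_left ?_ (hp i).le
          have a1 := abs_le.mp (hG i)
          have a2 := abs_le.mp hχG
          nlinarith
      _ = 4 * G ^ 2 := by rw [← Finset.sum_mul, hp1, one_mul]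
  have e : (Real.sqrt n)⁻¹ * (n * ∑ i, p i * (g i - χ) ^ 2) = Real.sqrt n * ∑ i, p i * (g i - χ) ^ 2 := by
    rw [← mul_assoc]; congr 1
    rw [inv_mul_eq_div, div_eq_iff hs.ne', hss]
  rw [e]
  nlinarith

/-- The linear parts of words of length `n` take only polynomially many values. -/
lemma ent_rt_le (hp : ∀ i, 0 < p i) (hp1 : ∑ i, p i = 1) (r : Λ → ℝ) (n : ℕ) :
    ent ((WL p n).mapDomain (rt r)) ≤ Fintype.card Λ * Real.logb 2 (n + 1) := by
  have h := ent_le_logb_card ((isP_WL hp hp1 n).mapDomain (rt r))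
    (S := (Fintype.piFinset fun _ : Λ => Finset.range (n + 1)).image
      (fun c => ∏ i, r i ^ c i)) (N := ((n : ℝ) + 1) ^ Fintype.card Λ) (by
      intro w hw
      obtain ⟨I, hI, rfl⟩ := exists_of_mem_support_map hw
      refine Finset.mem_image.mpr ⟨fun i => I.count i, ?_, ?_⟩
      · rw [Fintype.mem_piFinset]
        intro i
        rw [Finset.mem_range, Nat.lt_succ_iff]
        exact (List.count_le_length).trans (length_of_WL hI).le
      · rw [rt, Finset.prod_list_map_count]
        symm
        refine Finset.prod_subset (Finset.subset_univ _) fun i _ hi => ?_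
        rw [List.count_eq_zero_of_not_mem (by simpa using hi), pow_zero])
    (by
      refine (Nat.cast_le.mpr Finset.card_image_le).trans ?_
      rw [Fintype.card_piFinset]
      simp)
  rwa [Real.logb_pow] at h
end words

lemma wf_cons {Λ : Type*} (r s : Λ → ℝ) (i : Λ) (I : List Λ) (x : ℝ) :
    wf r s (i :: I) x = r i * wf r s I x + s i := rfl

lemma wf_append {Λ : Type*} (r s : Λ → ℝ) (I J : List Λ) (x : ℝ) :
    wf r s (I ++ J) x = wf r s I (wf r s J x) := by simp [wf]

lemma wf_sub {Λ : Type*} (r s : Λ → ℝ) (I : List Λ) (x y : ℝ) :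
    wf r s I x - wf r s I y = rt r I * (x - y) := by
  induction I with
  | nil => simp [wf, rt]
  | cons i I ih =>
    rw [wf_cons, wf_cons, rt, List.map_cons, List.prod_cons]
    rw [rt] at ih
    linear_combination r i * ih

section good
variable {ρ0 ρ1 R x0 : ℝ} {p r s : Λ → ℝ}

lemma Good.abs_wf (hg : Good ρ0 ρ1 R p r s x0)
    (I : List Λ) {x : ℝ} (hx : |x| ≤ R) : |wf r s I x| ≤ R := by
  induction I with
  | nil => simpa [wf] using hx
  | cons i I ih =>
    rw [wf_cons]
    refine (abs_add_le _ _).trans ?_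
    rw [abs_mul]
    have h1 := mul_le_mul (hg.r_le i) ih (abs_nonneg _) hg.ρ1_pos.le
    linarith [hg.s_le i]

lemma Good.isP (hg : Good ρ0 ρ1 R p r s x0) (n : ℕ) : IsP (WL p n) := isP_WL hg.p_pos hg.p_sum n

lemma Good.rt_bounds (hg : Good ρ0 ρ1 R p r s x0)
    (I : List Λ) : ρ0 ^ I.length ≤ |rt r I| ∧ |rt r I| ≤ ρ1 ^ I.length := by
  induction I with
  | nil => simp [rt]
  | cons i I ih =>
    rw [rt, List.map_cons, List.prod_cons, abs_mul, List.length_cons, pow_succ', pow_succ']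
    rw [rt] at ih
    exact ⟨mul_le_mul (hg.r_ge i) ih.1 (pow_nonneg hg.ρ0_pos.le _) (abs_nonneg _),
      mul_le_mul (hg.r_le i) ih.2 (abs_nonneg _) hg.ρ1_pos.le⟩

lemma Good.logb_rt (hg : Good ρ0 ρ1 R p r s x0) (I : List Λ) :
    Real.logb 2 |rt r I| = (I.map fun i => Real.logb 2 |r i|).sum := by
  induction I with
  | nil => simp [rt]
  | cons i I ih =>
    have h1 : 0 < |r i| := hg.ρ0_pos.trans_le (hg.r_ge i)
    have h2 : 0 < |rt r I| := (pow_pos hg.ρ0_pos _).trans_le (hg.rt_bounds I).1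
    have : rt r (i :: I) = r i * rt r I := by simp [rt]
    rw [this, abs_mul, Real.logb_mul h1.ne' h2.ne', ih, List.map_cons, List.sum_cons]
end good

/-- The entropy of `⌊2^K f_I(x₀)⌋` over random words of length `M`. -/
def Hw (p r s : Λ → ℝ) (x0 : ℝ) (M K : ℕ) : ℝ :=
  ent ((WL p M).mapDomain fun I => ⌊(2 : ℝ) ^ K * wf r s I x0⌋)

end

/-! ### Scale entropy on windows -/

section

variable {Λ : Type*} [Fintype Λ]

/-- `Hb K` is, up to `2`, the entropy of `⌊2^K f_I(x₀)⌋` for long random words. -/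
def Link (p r s : Λ → ℝ) (x0 : ℝ) (Hb : ℕ → ℝ) : Prop :=
  ∀ K, ∃ M0, ∀ M ≥ M0, |Hw p r s x0 M K - Hb K| ≤ 2

/-- The law of `⌊λ f_I(x₀) + c⌋` over random words of length `M`. -/
def FL (p r s : Λ → ℝ) (x0 : ℝ) (M : ℕ) (lam c : ℝ) : ZA :=
  law (WL p M) fun I => ⌊lam * wf r s I x0 + c⌋

lemma QZ_FL (p r s : Λ → ℝ) (x0 : ℝ) (M : ℕ) (lam c : ℝ) (i : ℕ) :
    QZ i (FL p r s x0 M lam c) =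
      ent ((WL p M).mapDomain fun I => ⌊(lam * wf r s I x0 + c) / 2 ^ i⌋) := by
  rw [FL, QZ_law]
  congr 1
  congr 1
  funext I
  exact floor_div_pow _ _

lemma law_WL_succ (p : Λ → ℝ) (M : ℕ) (F : List Λ → ℤ) :
    law (WL p (M + 1)) F = ∑ i, p i • law (WL p M) (fun I => F (i :: I)) := by
  simp only [law]
  rw [WL_succ, Finsupp.mapDomain_finsetSum, AddMonoidAlgebra.ofCoeff_sum]
  refine Finset.sum_congr rfl fun i _ => ?_
  rw [Finsupp.mapDomain_smul, AddMonoidAlgebra.ofCoeff_smul, ← Finsupp.mapDomain_comp]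
  rfl

/-- The loss in the window estimate. -/
def C0 (ρ0 R : ℝ) : ℝ :=
  6 + Real.logb 2 (2 * (⌈1 / ρ0⌉₊ : ℝ) + 1) + Real.logb 2 (2 * (⌈R⌉₊ : ℝ) + 1)

lemma logb_two_mul_add_one_nonneg (k : ℕ) : 0 ≤ Real.logb 2 (2 * (k : ℝ) + 1) :=
  Real.logb_nonneg (by norm_num) (by linarith [Nat.cast_nonneg (α := ℝ) k])

lemma C0_ge (ρ0 R : ℝ) : 6 ≤ C0 ρ0 R := by
  have h1 := logb_two_mul_add_one_nonneg ⌈1 / ρ0⌉₊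
  have h2 := logb_two_mul_add_one_nonneg ⌈R⌉₊
  rw [C0]; linarith

section
variable {ρ0 ρ1 R x0 : ℝ} {p r s : Λ → ℝ}

lemma Good.PZ_FL (hg : Good ρ0 ρ1 R p r s x0)
    (M : ℕ) (lam c : ℝ) : PZ (FL p r s x0 M lam c) := PZ_law (hg.isP M) _

/-- At a scale comparable to its diameter, a copy of the system carries the full window entropy. -/
lemma Good.win_direct (hg : Good ρ0 ρ1 R p r s x0)
    {i u M : ℕ} {lam : ℝ} (c : ℝ) (h1 : ρ0 * 2 ^ (i + u) ≤ |lam|)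
    (h2 : |lam| ≤ 2 ^ (i + u)) :
    Hw p r s x0 M u - C0 ρ0 R + 2 ≤ DD (FL p r s x0 M lam c) i u := by
  have hP := hg.PZ_FL M lam c
  have b1 := le_HZ_UU hP i
  have b2 := HZ_UU_le hP (i + u)
  have hlam : 0 < |lam| := (mul_pos hg.ρ0_pos (by positivity)).trans_le h1
  have hlam0 : lam ≠ 0 := abs_pos.mp hlam
  have b3 : Hw p r s x0 M u ≤ QZ i (FL p r s x0 M lam c) +
      Real.logb 2 (2 * (⌈1 / ρ0⌉₊ : ℝ) + 1) := by
    rw [QZ_FL, Hw]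
    refine ent_floor_le (hg.isP M) (2 ^ (i + u) / lam) (-(2 ^ u * c / lam)) _ fun I _ => ?_
    have e : (2 : ℝ) ^ u * wf r s I x0 - (2 ^ (i + u) / lam * ((lam * wf r s I x0 + c) / 2 ^ i) +
        -(2 ^ u * c / lam)) = 0 := by
      rw [pow_add]; field_simp; ring
    rw [e, abs_zero, zero_add, abs_div, abs_of_pos (by positivity : (0 : ℝ) < 2 ^ (i + u))]
    refine le_trans ?_ (Nat.le_ceil _)
    rw [div_le_div_iff₀ hlam hg.ρ0_pos]
    linarith
  have b4 : QZ (i + u) (FL p r s x0 M lam c) ≤ Real.logb 2 (2 * (⌈R⌉₊ : ℝ) + 1) := by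
    rw [QZ_FL]
    refine ent_floor_bdd (hg.isP M) (c / 2 ^ (i + u)) _ fun I _ => ?_
    have e : (lam * wf r s I x0 + c) / 2 ^ (i + u) - c / 2 ^ (i + u) =
        lam * wf r s I x0 / 2 ^ (i + u) := by ring
    rw [e, abs_div, abs_mul, abs_of_pos (by positivity : (0 : ℝ) < 2 ^ (i + u)), div_le_iff₀ (by positivity)]
    have := hg.abs_wf I hg.x_le
    have hR : R ≤ (⌈R⌉₊ : ℝ) := Nat.le_ceil R
    calc |lam| * |wf r s I x0| ≤ 2 ^ (i + u) * ⌈R⌉₊ :=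
          mul_le_mul h2 (this.trans hR) (abs_nonneg _) (by positivity)
      _ = _ := mul_comm _ _
  rw [DD, C0]
  push_cast at b2
  linarith

/-- Window estimate: a copy of the system of large diameter has, between scales `2^i` and
`2^(i+u)`, at least the entropy of the system itself at scale `2^(-u)`. -/
lemma Good.win (hg : Good ρ0 ρ1 R p r s x0)
    {i u M1 : ℕ} {B : ℝ} (hB : ∀ M ≥ M1, B ≤ Hw p r s x0 M u) (k : ℕ) :
    ∀ M ≥ M1, ∀ lam c : ℝ, ρ0 * 2 ^ (i + u) ≤ |lam| → |lam| * ρ1 ^ k ≤ 2 ^ (i + u) →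
      B - C0 ρ0 R + 2 ≤ DD (FL p r s x0 (k + M) lam c) i u := by
  induction k with
  | zero =>
    intro M hM lam c h1 h2
    rw [pow_zero, mul_one] at h2
    rw [zero_add]
    linarith [hg.win_direct (M := M) c h1 h2, hB M hM]
  | succ k ih =>
    intro M hM lam c h1 h2
    by_cases h3 : |lam| ≤ 2 ^ (i + u)
    · linarith [hg.win_direct (M := k + 1 + M) c h1 h3, hB (k + 1 + M) (by omega)]
    push Not at h3
    rw [show k + 1 + M = (k + M) + 1 by ring, FL, law_WL_succ]
    refine le_trans ?_ (DD_concave (fun w _ => (hg.p_pos w).le) hg.p_sum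
      (fun w _ => PZ_law (hg.isP _) _) i u)
    have hj : ∀ j ∈ Finset.univ, p j * (B - C0 ρ0 R + 2) ≤ p j * DD (law (WL p (k + M)) fun I =>
        ⌊lam * wf r s (j :: I) x0 + c⌋) i u := by
      intro j _
      refine mul_le_mul_of_nonneg_left ?_ (hg.p_pos j).le
      have e : (law (WL p (k + M)) fun I => ⌊lam * wf r s (j :: I) x0 + c⌋) =
          FL p r s x0 (k + M) (lam * r j) (lam * s j + c) := by
        rw [FL]; congr 1; funext I
        rw [wf_cons]; congr 1; ring
      rw [e]
      refine ih M hM _ _ ?_ ?_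
      · rw [abs_mul, mul_comm]
        exact mul_le_mul h3.le (hg.r_ge j) hg.ρ0_pos.le (abs_nonneg _)
      · rw [abs_mul]
        refine le_trans ?_ h2
        rw [pow_succ', mul_assoc]
        refine mul_le_mul_of_nonneg_left ?_ (abs_nonneg _)
        exact mul_le_mul_of_nonneg_right (hg.r_le j) (pow_nonneg hg.ρ1_pos.le _)
    have := Finset.sum_le_sum hj
    rwa [← Finset.sum_mul, hg.p_sum, one_mul] at this

/-- The window estimate in terms of the comparison sequence `Hb`: an affine image of the level-`M`
law, enlarged by `|lam| ≥ 2^(i+u)`, has scale entropy at least `Hb u - O(1)` between the levels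
`i` and `i + u`. -/
lemma Good.win_link (hg : Good ρ0 ρ1 R p r s x0)
    {Hb : ℕ → ℝ} (hl : Link p r s x0 Hb) (u : ℕ) (lam : ℝ) :
    ∃ M0, ∀ M ≥ M0, ∀ c : ℝ, ∀ i : ℕ, (2 : ℝ) ^ (i + u) ≤ |lam| →
      Hb u - C0 ρ0 R ≤ DD (FL p r s x0 M lam c) i u := by
  obtain ⟨M1, hM1⟩ := hl u
  obtain ⟨k, hk⟩ : ∃ k : ℕ, |lam| * ρ1 ^ k ≤ 1 := by
    obtain ⟨k, hk⟩ := exists_pow_lt_of_lt_one (show (0 : ℝ) < 1 / (|lam| + 1) by positivity) hg.ρ1_lt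
    refine ⟨k, ?_⟩
    have : ρ1 ^ k * (|lam| + 1) < 1 := by rwa [lt_div_iff₀ (by positivity)] at hk
    nlinarith [pow_nonneg hg.ρ1_pos.le k]
  refine ⟨k + M1, fun M hM c i hi => ?_⟩
  obtain ⟨e, rfl⟩ := Nat.exists_eq_add_of_le hM
  have := hg.win (i := i) (u := u) (M1 := M1) (B := Hb u - 2)
    (fun M hM => by linarith [(abs_le.mp (hM1 M hM)).1]) k (M1 + e) (by omega) lam c
    (by
      refine le_trans ?_ hi
      refine mul_le_of_le_one_left (by positivity) ?_
      obtain ⟨i0⟩ : Nonempty Λ := by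
        by_contra hne
        rw [not_nonempty_iff] at hne
        have := hg.p_sum
        simp at this
      exact ((hg.r_ge i0).trans (hg.r_le i0)).trans hg.ρ1_lt.le)
    (hk.trans (one_le_pow₀ (by norm_num)))
  rw [add_assoc]
  linarith

lemma Good.Hb_nonneg (hg : Good ρ0 ρ1 R p r s x0)
    {Hb : ℕ → ℝ} (hl : Link p r s x0 Hb) (K : ℕ) : -2 ≤ Hb K := by
  obtain ⟨M0, h⟩ := hl K
  have h1 := abs_le.mp (h M0 le_rfl)
  have h2 := ((hg.isP M0).mapDomain fun I => ⌊(2 : ℝ) ^ K * wf r s I x0⌋).ent_nonneg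
  rw [Hw] at h1
  linarith [h1.2]

/-- Lower bound for entropy increments obtained by adding up window estimates. -/
lemma DD_sum_win {a : ZA} (ha : PZ a) {u : ℕ} {A : ℝ} (hA1 : A ≤ 1) {J : ℕ}
    (h : ∀ i, i + u ≤ J → A * u ≤ DD a i u) (hu : 1 ≤ u) : A * J - u ≤ DD a 0 J := by
  have h1 : ∀ q, q * u ≤ J → A * (q * u) ≤ DD a 0 (q * u) := by
    intro q
    induction q with
    | zero => intro _; simp [DD_zero]
    | succ q ih =>
      intro hq
      rw [Nat.succ_mul] at hq
      rw [Nat.succ_mul, DD_add]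
      have := ih (by omega)
      have := h (q * u) hq
      push_cast
      rw [zero_add]
      nlinarith
  have h2 := h1 (J / u) (Nat.div_mul_le_self J u)
  obtain ⟨e, he⟩ := Nat.exists_eq_add_of_le (Nat.div_mul_le_self J u)
  have he' : e ≤ u := by
    have := Nat.lt_div_mul_add hu (a := J); omega
  have h3 : DD a 0 J = DD a 0 (J / u * u) + DD a (J / u * u) e := by
    conv_lhs => rw [he]
    rw [DD_add, zero_add]
  have h4 := DD_nonneg ha (J / u * u) e
  have h5 : (J : ℝ) = (J / u : ℕ) * u + e := by exact_mod_cast he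
  rw [h3, h5]
  have h6 : (e : ℝ) ≤ u := by exact_mod_cast he'
  have h7 : A * e ≤ u := by nlinarith [Nat.cast_nonneg (α := ℝ) e]
  linarith

/-- Entropy increments dominate window entropies. -/
lemma Good.increment (hg : Good ρ0 ρ1 R p r s x0)
    {Hb : ℕ → ℝ} (hl : Link p r s x0 Hb) {u : ℕ} (hu : 1 ≤ u) {A : ℝ}
    (hA1 : A ≤ 1) (hA : A * u ≤ Hb u - C0 ρ0 R) {j K : ℕ} (hj : j ≤ K) :
    A * (K - j) - u - 12 ≤ Hb K - Hb j := by
  obtain ⟨M1, hM1⟩ := hl K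
  obtain ⟨M2, hM2⟩ := hl j
  obtain ⟨M3, hM3⟩ := hg.win_link hl u (2 ^ K)
  set M := max M1 (max M2 M3)
  have b1 := (abs_le.mp (hM1 M (by omega))).2
  have b2 := (abs_le.mp (hM2 M (by omega))).1
  have hP := hg.PZ_FL M (2 ^ K) 0
  obtain ⟨J, rfl⟩ := Nat.exists_eq_add_of_le hj
  have b3 := DD_sum_win hP hA1 (J := J) (fun i hi => hA.trans (hM3 M (by omega) 0 i (by
    rw [abs_of_pos (by positivity)]
    exact pow_le_pow_right₀ (by norm_num) (by omega)))) hu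
  have b4 := le_HZ_UU hP J
  have b5 := HZ_UU_le hP 0
  have e1 : QZ 0 (FL p r s x0 M (2 ^ (j + J)) 0) = Hw p r s x0 M (j + J) := by
    rw [QZ_FL, Hw]; simp
  have e2 : QZ J (FL p r s x0 M (2 ^ (j + J)) 0) = Hw p r s x0 M j := by
    rw [QZ_FL, Hw]
    congr 2
    funext I
    congr 1
    rw [pow_add]; field_simp; ring
  rw [e1] at b5
  rw [e2] at b4
  rw [DD, zero_add] at b3
  push_cast at b5 ⊢
  have : A * ((j : ℝ) + J - j) = A * J := by ring
  linarith
end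

end

/-! ### Convolution structure of random words -/

section

variable {Λ : Type*} [Fintype Λ]

lemma law_eq_lc {Ω : Type*} (a : Ω →₀ ℝ) (F : Ω → ℤ) :
    law a F = Finsupp.linearCombination ℝ (fun x => dlt (F x)) a := by
  rw [law_eq_sum, Finsupp.linearCombination_apply]; rfl

/-- The law of `⌊2^K τ (f_J(x₀) - x₀)⌋`. -/
def XX (p r s : Λ → ℝ) (x0 : ℝ) (M K : ℕ) (τ : ℝ) : ZA :=
  FL p r s x0 M (2 ^ K * τ) (-(2 ^ K * τ * x0))

/-- The law of `⌊2^K f_I(x₀)⌋` over words of length `n` conditioned to have linear part `τ`. -/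
def YY (p r s : Λ → ℝ) (x0 : ℝ) (n K : ℕ) (τ : ℝ) : ZA :=
  law (condLaw (WL p n) (rt r) τ) (fun I => ⌊(2 : ℝ) ^ K * wf r s I x0⌋)

/-- The law of the linear part of a random word of length `n`. -/
def qq (p r : Λ → ℝ) (n : ℕ) : ℝ →₀ ℝ := (WL p n).mapDomain (rt r)

/-- Discretized `2^K f_ω(x₀)`, split after the first `n` letters. -/
def Zf (r s : Λ → ℝ) (x0 : ℝ) (n K : ℕ) (ω : List Λ) : ℤ :=
  ⌊(2 : ℝ) ^ K * wf r s (ω.take n) x0⌋ +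
    ⌊(2 : ℝ) ^ K * rt r (ω.take n) * wf r s (ω.drop n) x0 + -(2 ^ K * rt r (ω.take n) * x0)⌋

lemma sum_lc {Ω W : Type*} {a : Ω →₀ ℝ} (ha : ∀ i, 0 ≤ a i) (F : Ω → W) (c : Ω → ZA) :
    Finsupp.linearCombination ℝ c a = ∑ w ∈ (a.mapDomain F).support,
      a.mapDomain F w • Finsupp.linearCombination ℝ c (condLaw a F w) := by
  conv_lhs => rw [eq_sum_condLaw ha F]
  rw [map_sum]
  exact Finset.sum_congr rfl fun w _ => map_smul _ _ _

section
variable {ρ0 ρ1 R x0 : ℝ} {p r s : Λ → ℝ}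

/-- Self-similarity, in discretized form: conditionally on the linear part `τ` of the first `n`
letters, the law of the discretized point is a convolution. -/
lemma Good.Z_eq (hg : Good ρ0 ρ1 R p r s x0) (n M K : ℕ) : law (WL p (n + M)) (Zf r s x0 n K) =
    ∑ τ ∈ (qq p r n).support, qq p r n τ • (XX p r s x0 M K τ * YY p r s x0 n K τ) := by
  have h1 : law (WL p (n + M)) (Zf r s x0 n K) = Finsupp.linearCombination ℝ
      (fun I => dlt ⌊(2 : ℝ) ^ K * wf r s I x0⌋ * XX p r s x0 M K (rt r I)) (WL p n) := by
    rw [law_eq_lc, WL_add, Finsupp.linearCombination_apply _ (WL p n),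
      Finsupp.sum, map_sum, Finsupp.linearCombination_apply _ (WL p n), Finsupp.sum]
    refine Finset.sum_congr rfl fun I hI => ?_
    have hlen := length_of_WL (Finsupp.mem_support_iff.mp hI)
    rw [map_smul, Finsupp.linearCombination_mapDomain]
    congr 1
    rw [XX, FL, law_eq_lc, Finsupp.linearCombination_apply, Finsupp.linearCombination_apply,
      Finsupp.sum, Finsupp.sum, Finset.mul_sum]
    refine Finset.sum_congr rfl fun J _ => ?_
    rw [mul_smul_comm, dlt_mul]
    congr 2
    simp only [Function.comp_apply, Zf, List.take_left' hlen, List.drop_left' hlen]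
  rw [h1, sum_lc (hg.isP n).1 (rt r)]
  refine Finset.sum_congr rfl fun τ _ => ?_
  congr 1
  rw [YY, law_eq_lc, Finsupp.linearCombination_apply, Finsupp.linearCombination_apply,
    Finsupp.sum, Finsupp.sum, Finset.mul_sum]
  refine Finset.sum_congr rfl fun I hI => ?_
  rw [(condLaw_ne_zero (Finsupp.mem_support_iff.mp hI)).2, mul_smul_comm, mul_comm]

lemma Zf_near {Λ : Type*} (r s : Λ → ℝ) (x0 : ℝ) (n K : ℕ) (ω : List Λ) :
    |(Zf r s x0 n K ω : ℝ) - 2 ^ K * wf r s ω x0| ≤ 2 := by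
  have h : wf r s ω x0 = wf r s (ω.take n) x0 +
      rt r (ω.take n) * (wf r s (ω.drop n) x0 - x0) := by
    conv_lhs => rw [← List.take_append_drop n ω, wf_append]
    linarith [wf_sub r s (ω.take n) (wf r s (ω.drop n) x0) x0]
  set u := (2 : ℝ) ^ K * wf r s (ω.take n) x0 with hu
  set v := (2 : ℝ) ^ K * rt r (ω.take n) * wf r s (ω.drop n) x0 + -(2 ^ K * rt r (ω.take n) * x0) with hv
  have e : (2 : ℝ) ^ K * wf r s ω x0 = u + v := by rw [h, hu, hv]; ring
  have hz : (Zf r s x0 n K ω : ℝ) = (⌊u⌋ : ℝ) + ⌊v⌋ := by rw [Zf]; push_cast; rfl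
  rw [e, hz, abs_le]
  constructor <;> linarith [Int.floor_le u, Int.floor_le v, Int.lt_floor_add_one u,
    Int.lt_floor_add_one v]

lemma logb_seven_le : Real.logb 2 (2 * ((3 : ℕ) : ℝ) + 1) ≤ 3 := by
  rw [Real.logb_le_iff_le_rpow (by norm_num) (by norm_num)]
  norm_num

lemma Good.QZ_Z (hg : Good ρ0 ρ1 R p r s x0) (n M K : ℕ) {b c : ℕ} (hbc : b + c = K) :
    |QZ b (law (WL p (n + M)) (Zf r s x0 n K)) - Hw p r s x0 (n + M) c| ≤ 3 := by
  have hP := hg.isP (n + M)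
  have e1 : QZ b (law (WL p (n + M)) (Zf r s x0 n K)) =
      ent ((WL p (n + M)).mapDomain fun ω => ⌊(Zf r s x0 n K ω : ℝ) / 2 ^ b⌋) := by
    rw [QZ_law]
    congr 2
    funext ω
    rw [← floor_div_pow, Int.floor_intCast]
  have hnear : ∀ ω, |(Zf r s x0 n K ω : ℝ) / 2 ^ b - 2 ^ c * wf r s ω x0| ≤ 2 := by
    intro ω
    have h := Zf_near r s x0 n K ω
    have e : (Zf r s x0 n K ω : ℝ) / 2 ^ b - 2 ^ c * wf r s ω x0 =
        ((Zf r s x0 n K ω : ℝ) - 2 ^ K * wf r s ω x0) / 2 ^ b := by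
      rw [← hbc, pow_add]; field_simp
    rw [e, abs_div, abs_of_pos (by positivity : (0 : ℝ) < 2 ^ b)]
    exact (div_le_self (abs_nonneg _) (one_le_pow₀ (by norm_num))).trans h
  rw [e1, Hw, abs_le]
  constructor
  · have := ent_floor_le hP (G1 := fun ω => 2 ^ c * wf r s ω x0)
      (G2 := fun ω => (Zf r s x0 n K ω : ℝ) / 2 ^ b) 1 0 3 (fun ω _ => by
        rw [one_mul, add_zero, abs_sub_comm, abs_one]; push_cast; linarith [hnear ω])
    have := this.trans (add_le_add le_rfl logb_seven_le)
    linarith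
  · have := ent_floor_le hP (G2 := fun ω => 2 ^ c * wf r s ω x0)
      (G1 := fun ω => (Zf r s x0 n K ω : ℝ) / 2 ^ b) 1 0 3 (fun ω _ => by
        rw [one_mul, add_zero, abs_one]; push_cast; linarith [hnear ω])
    have := this.trans (add_le_add le_rfl logb_seven_le)
    linarith

lemma logb_five_le : Real.logb 2 (2 * ((2 : ℕ) : ℝ) + 1) ≤ 3 := by
  rw [Real.logb_le_iff_le_rpow (by norm_num) (by norm_num)]
  norm_num

lemma logb_three_le' : Real.logb 2 (2 * ((1 : ℕ) : ℝ) + 1) ≤ 3 := by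
  rw [Real.logb_le_iff_le_rpow (by norm_num) (by norm_num)]
  norm_num

lemma Good.HZ_X (hg : Good ρ0 ρ1 R p r s x0)
    (M K : ℕ) {τ : ℝ} {B : ℕ} (h1 : (2 : ℝ) ^ B / 2 ≤ 2 ^ K * |τ|)
    (h2 : 2 ^ K * |τ| ≤ 2 ^ B) :
    |HZ (XX p r s x0 M K τ) - Hw p r s x0 M B| ≤ 3 := by
  have hP := hg.isP M
  have hτ : τ ≠ 0 := by
    rintro rfl
    rw [abs_zero, mul_zero] at h1
    linarith [show (0 : ℝ) < 2 ^ B by positivity]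
  have hlam : 0 < (2 : ℝ) ^ K * |τ| := by positivity
  have habs : |(2 : ℝ) ^ K * τ| = 2 ^ K * |τ| := by
    rw [abs_mul, abs_of_pos (by positivity : (0 : ℝ) < 2 ^ K)]
  have e1 : HZ (XX p r s x0 M K τ) = ent ((WL p M).mapDomain fun J =>
      ⌊(2 : ℝ) ^ K * τ * wf r s J x0 + -(2 ^ K * τ * x0)⌋) := HZ_law _ _
  rw [e1, Hw, abs_le]
  constructor
  · have := ent_floor_le hP (G1 := fun J => 2 ^ B * wf r s J x0)
      (G2 := fun J => (2 : ℝ) ^ K * τ * wf r s J x0 + -(2 ^ K * τ * x0))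
      (2 ^ B / (2 ^ K * τ)) (2 ^ B * x0) 2 (fun J _ => by
        have e : (2 : ℝ) ^ B * wf r s J x0 - (2 ^ B / (2 ^ K * τ) *
          ((2 : ℝ) ^ K * τ * wf r s J x0 + -(2 ^ K * τ * x0)) + 2 ^ B * x0) = 0 := by
          field_simp; ring
        rw [e, abs_zero, zero_add, abs_div, habs, abs_of_pos (by positivity : (0 : ℝ) < 2 ^ B),
          div_le_iff₀ hlam]
        push_cast; linarith)
    have := this.trans (add_le_add le_rfl logb_five_le)
    linarith
  · have := ent_floor_le hP (G2 := fun J => 2 ^ B * wf r s J x0)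
      (G1 := fun J => (2 : ℝ) ^ K * τ * wf r s J x0 + -(2 ^ K * τ * x0))
      (2 ^ K * τ / 2 ^ B) (-(2 ^ K * τ * x0)) 1 (fun J _ => by
        have e : (2 : ℝ) ^ K * τ * wf r s J x0 + -(2 ^ K * τ * x0) - (2 ^ K * τ / 2 ^ B *
          (2 ^ B * wf r s J x0) + -(2 ^ K * τ * x0)) = 0 := by
          field_simp; ring
        rw [e, abs_zero, zero_add, abs_div, habs, abs_of_pos (by positivity : (0 : ℝ) < 2 ^ B),
          div_le_iff₀ (by positivity)]
        push_cast; linarith)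
    have := this.trans (add_le_add le_rfl logb_three_le')
    linarith

/-- Entropy bound for a variable of bounded size. -/
def C1 (R : ℝ) : ℝ := Real.logb 2 (4 * (⌈2 * R⌉₊ : ℝ))

lemma Good.C1_nonneg (hg : Good ρ0 ρ1 R p r s x0) : 0 ≤ C1 R := by
  have h : 1 ≤ ⌈2 * R⌉₊ := Nat.one_le_ceil_iff.mpr (by linarith [hg.R_pos])
  have h' : (1 : ℝ) ≤ ⌈2 * R⌉₊ := by exact_mod_cast h
  exact Real.logb_nonneg (by norm_num) (by linarith)

lemma Good.QZ_X (hg : Good ρ0 ρ1 R p r s x0)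
    (M K : ℕ) {τ : ℝ} {B : ℕ} (h2 : 2 ^ K * |τ| ≤ 2 ^ B) (b : ℕ) :
    QZ b (XX p r s x0 M K τ) ≤ |(B : ℝ) - b| + C1 R := by
  have hP := hg.isP M
  set d := ((B : ℤ) - b).natAbs with hd
  have hdr : (d : ℝ) = |(B : ℝ) - b| := by
    rw [hd, Nat.cast_natAbs]; push_cast; rfl
  have hBd : B ≤ b + d := by omega
  have hk1 : 1 ≤ ⌈2 * R⌉₊ := Nat.one_le_ceil_iff.mpr (by linarith [hg.R_pos])
  rw [XX, QZ_FL]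
  have := ent_floor_bdd hP (G := fun J => (2 ^ K * τ * wf r s J x0 + -(2 ^ K * τ * x0)) / 2 ^ b) 0
    (⌈2 * R⌉₊ * 2 ^ d) (fun J _ => by
      have e : (2 ^ K * τ * wf r s J x0 + -(2 ^ K * τ * x0)) / 2 ^ b - 0 =
        2 ^ K * τ * (wf r s J x0 - x0) / 2 ^ b := by ring
      rw [e, abs_div, abs_mul, abs_mul, abs_of_pos (by positivity : (0 : ℝ) < 2 ^ b),
        abs_of_pos (by positivity : (0 : ℝ) < 2 ^ K), div_le_iff₀ (by positivity)]
      have w1 : |wf r s J x0 - x0| ≤ ⌈2 * R⌉₊ := by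
        refine le_trans ?_ (Nat.le_ceil _)
        refine (abs_sub _ _).trans ?_
        linarith [hg.abs_wf J hg.x_le, hg.x_le]
      have w2 : (2 : ℝ) ^ B ≤ 2 ^ d * 2 ^ b := by
        rw [← pow_add]; exact pow_le_pow_right₀ (by norm_num) (by omega)
      calc 2 ^ K * |τ| * |wf r s J x0 - x0| ≤ (2 ^ d * 2 ^ b) * ⌈2 * R⌉₊ :=
            mul_le_mul (h2.trans w2) w1 (abs_nonneg _) (by positivity)
        _ = _ := by push_cast; ring)
  refine this.trans ?_
  rw [← hdr, C1, ← logb_two_pow d, ← Real.logb_mul (by positivity) (by positivity)]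
  refine Real.logb_le_logb_of_le (by norm_num) (by positivity) ?_
  have : (1 : ℝ) ≤ ⌈2 * R⌉₊ * 2 ^ d := by
    exact_mod_cast Nat.one_le_iff_ne_zero.mpr (by positivity)
  push_cast
  nlinarith

/-- The estimate of `core_sum` for a single value of the linear part; `B` is the scale of `X`. -/
lemma tau_bound {s v q0 k : ℕ} (hs : 1 ≤ s)
    (hk : ∀ (b : ZA) (i : ℕ) (c : ℤ), PZ b →
      (∀ n, b.coeff n ≠ 0 → c ≤ n ∧ n < c + 2 ^ (i + s)) → (1 : ℝ) / s ≤ spread b i →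
      ((s * v : ℕ) : ℝ) - s - 6 ≤ DD (b ^ k) i (s * v))
    {X Y : ZA} (hX : PZ X) (hY : PZ Y) {N b B : ℕ} (hb1 : s * (N + v) ≤ b)
    (hb2 : s * (N + q0) ≤ b) {A : ℝ} (hA1 : A ≤ 1)
    (hw : ∀ i, i + s * v + 1 ≤ B → A * ((s * v : ℕ) : ℝ) ≤ DD X i (s * v)) :
    ((s * v : ℝ) - s - 6 - A * (s * v)) * ∑ l ∈ Finset.range N, goodMass Y (s * l) s ≤
      v * (DD X 0 b - A * (s * N)) + (s * v) * |(B : ℝ) - b| +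
        k * (q0 * (DD (X * Y) 0 b - DD X 0 b) + N * Real.logb 2 (1 + 2 ^ s / 2 ^ (s * q0))) := by
  have h := core_sum hs hk hX hY hb1 hb2 (A := A)
    (e := fun l => if s * l + s * v + 1 ≤ B then 0 else (s * v : ℝ))
    (fun l _ => by
      split_ifs with h
      · have := hw (s * l) h; push_cast at this; linarith
      · have h1 := DD_nonneg hX (s * l) (s * v)
        have h2 : (0 : ℝ) ≤ s * v := by positivity
        nlinarith)
    (fun l _ => by split_ifs <;> positivity)
  refine h.trans ?_
  have hsum : ∑ l ∈ Finset.range N, (if s * l + s * v + 1 ≤ B then 0 else (s * v : ℝ)) ≤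
      (s * v) * |(B : ℝ) - b| := by
    have hflip : ∀ l, (if s * l + s * v + 1 ≤ B then 0 else (s * v : ℝ)) =
        if ¬ (s * l + s * v + 1 ≤ B) then (s * v : ℝ) else 0 := fun l => by split_ifs <;> rfl
    rw [Finset.sum_congr rfl fun l _ => hflip l, ← Finset.sum_filter, Finset.sum_const, nsmul_eq_mul, mul_comm]
    refine mul_le_mul_of_nonneg_left ?_ (by positivity)
    have hc : ((Finset.range N).filter fun l => ¬ (s * l + s * v + 1 ≤ B)).card ≤
        (Finset.Ico B b).card := by
      refine Finset.card_le_card_of_injOn (fun l => s * l + s * v) ?_ ?_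
      · intro l hl
        simp only [Finset.coe_filter, Finset.mem_range, Set.mem_ofPred_eq] at hl
        simp only [Finset.coe_Ico, Set.mem_Ico]
        have : s * (l + 1) ≤ s * N := Nat.mul_le_mul_left s hl.1
        rw [mul_add] at hb1 this
        omega
      · intro l _ l' _ h
        have h : s * l + s * v = s * l' + s * v := h
        exact Nat.eq_of_mul_eq_mul_left (by omega) (Nat.add_right_cancel h)
    rw [Nat.card_Ico] at hc
    calc _ ≤ ((b - B : ℕ) : ℝ) := by exact_mod_cast hc
      _ ≤ |(B : ℝ) - b| := by
        rcases le_total B b with hBb | hBb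
        · rw [Nat.cast_sub hBb, abs_sub_comm]; exact le_abs_self _
        · rw [Nat.sub_eq_zero_of_le hBb]; simp
  linarith
end

end

/-! ### The multiscale bound -/

section

variable {Λ : Type*} [Fintype Λ]

/-- The scale `B` with `2^(B-1) < 2^K |τ| ≤ 2^B`. -/
def BB (K : ℕ) (τ : ℝ) : ℕ := ⌈(K : ℝ) + Real.logb 2 |τ|⌉₊

lemma BB_spec {K : ℕ} {τ : ℝ} (h1 : 1 ≤ 2 ^ K * |τ|) (h2 : |τ| ≤ 1) :
    (2 : ℝ) ^ BB K τ / 2 ≤ 2 ^ K * |τ| ∧ 2 ^ K * |τ| ≤ 2 ^ BB K τ ∧ BB K τ ≤ K ∧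
      |(BB K τ : ℝ) - (K + Real.logb 2 |τ|)| ≤ 1 := by
  have hτ : 0 < |τ| := by
    by_contra h
    have : |τ| = 0 := le_antisymm (not_lt.mp h) (abs_nonneg _)
    rw [this] at h1; norm_num at h1
  have e : (2 : ℝ) ^ K * |τ| = 2 ^ ((K : ℝ) + Real.logb 2 |τ|) := by
    rw [Real.rpow_add (by norm_num), Real.rpow_natCast, Real.rpow_logb (by norm_num) (by norm_num) hτ]
  set y := (K : ℝ) + Real.logb 2 |τ| with hy
  have hy0 : 0 ≤ y := by
    rw [e] at h1
    by_contra hneg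
    have := Real.rpow_lt_one_of_one_lt_of_neg (show (1 : ℝ) < 2 by norm_num) (not_le.mp hneg)
    linarith
  have hle : y ≤ (BB K τ : ℝ) := Nat.le_ceil _
  have hlt : (BB K τ : ℝ) < y + 1 := Nat.ceil_lt_add_one hy0
  refine ⟨?_, ?_, ?_, ?_⟩
  · rw [e, ← Real.rpow_natCast, div_le_iff₀ (by norm_num)]
    calc (2 : ℝ) ^ (BB K τ : ℝ) ≤ 2 ^ (y + 1) := Real.rpow_le_rpow_of_exponent_le (by norm_num) hlt.le
      _ = _ := by rw [Real.rpow_add (by norm_num), Real.rpow_one]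
  · rw [e, ← Real.rpow_natCast]
    exact Real.rpow_le_rpow_of_exponent_le (by norm_num) hle
  · refine Nat.ceil_le.mpr ?_
    linarith [Real.logb_nonpos (show (1 : ℝ) < 2 by norm_num) hτ.le h2]
  · rw [abs_le]; constructor <;> linarith

section
variable {ρ0 ρ1 R x0 : ℝ} {p r s : Λ → ℝ}

/-- The law of `⌊2^K f_I(x₀)⌋` over words of length `n`. -/
def YA (p r s : Λ → ℝ) (x0 : ℝ) (n K : ℕ) : ZA :=
  law (WL p n) fun I => ⌊(2 : ℝ) ^ K * wf r s I x0⌋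

lemma Good.YA_eq (hg : Good ρ0 ρ1 R p r s x0) (n K : ℕ) : YA p r s x0 n K =
    ∑ τ ∈ (qq p r n).support, qq p r n τ • YY p r s x0 n K τ := by
  rw [YA, law_eq_lc, sum_lc (hg.isP n).1 (rt r)]
  exact Finset.sum_congr rfl fun τ _ => by rw [YY, law_eq_lc]; rfl

lemma Good.isP_qq (hg : Good ρ0 ρ1 R p r s x0) (n : ℕ) : IsP (qq p r n) := (hg.isP n).mapDomain _

lemma Good.PZ_YY (hg : Good ρ0 ρ1 R p r s x0)
    (n K : ℕ) {τ : ℝ} (h : τ ∈ (qq p r n).support) : PZ (YY p r s x0 n K τ) :=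
  PZ_law (isP_condLaw (hg.isP n) h) _

lemma Good.QZ_YA_ge (hg : Good ρ0 ρ1 R p r s x0) (n K b : ℕ) :
    Ex (fun τ => QZ b (YY p r s x0 n K τ)) (qq p r n) ≤ QZ b (YA p r s x0 n K) := by
  have h := ent_mix_ge (S := (qq p r n).support) (p := qq p r n)
    (A := fun τ => (condLaw (WL p n) (rt r) τ).mapDomain
      fun I => ⌊(2 : ℝ) ^ K * wf r s I x0⌋ / 2 ^ b)
    (fun τ _ => (hg.isP_qq n).1 τ) (by rw [← mass_eq_sum]; exact (hg.isP_qq n).2)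
    (fun τ hτ => (isP_condLaw (hg.isP n) hτ).mapDomain _)
  rw [qq, ← mapDomain_eq_sum_condLaw (hg.isP n).1 (rt r)] at h
  rw [YA, QZ_law, Ex_eq_sum, qq]
  simpa only [YY, QZ_law] using h

lemma Good.QZ_YA_le (hg : Good ρ0 ρ1 R p r s x0) (n K b : ℕ) :
    QZ b (YA p r s x0 n K) ≤ Ex (fun τ => QZ b (YY p r s x0 n K τ)) (qq p r n) + ent (qq p r n) := by
  have h := ent_mix_le (p := qq p r n)
    (A := fun τ => (condLaw (WL p n) (rt r) τ).mapDomain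
      fun I => ⌊(2 : ℝ) ^ K * wf r s I x0⌋ / 2 ^ b)
    (hg.isP_qq n) (fun τ hτ => (isP_condLaw (hg.isP n) hτ).mapDomain _)
  rw [qq, ← mapDomain_eq_sum_condLaw (hg.isP n).1 (rt r)] at h
  rw [YA, QZ_law, Ex_eq_sum, qq]
  simpa only [YY, QZ_law] using h

lemma Ex_add_le {ι : Type*} {q : ι →₀ ℝ} (hq : IsP q) {f g : ι → ℝ} {c d : ℝ}
    (h : ∀ x, q x ≠ 0 → f x ≤ c * g x + d) : Ex f q ≤ c * Ex g q + d := by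
  refine (Ex_mono hq.1 h).trans (le_of_eq ?_)
  rw [Ex_add_fun, Ex_smul_fun, Ex_const, hq.2, mul_one]

/-- Quantitative entropy estimate for words of length `n` at scale `2^(-K)`, `K = b + c`. -/
theorem Good.main_bound (hg : Good ρ0 ρ1 R p r s x0)
    {Hb : ℕ → ℝ} (hl : Link p r s x0 Hb) {t v q0 k : ℕ} (ht : 1 ≤ t)
    (hk : ∀ (b : ZA) (i : ℕ) (c : ℤ), PZ b →
      (∀ n, b.coeff n ≠ 0 → c ≤ n ∧ n < c + 2 ^ (i + t)) → (1 : ℝ) / t ≤ spread b i →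
      ((t * v : ℕ) : ℝ) - t - 6 ≤ DD (b ^ k) i (t * v))
    {A α E L : ℝ} (hA1 : A ≤ 1) (hα0 : 0 ≤ α) (hα1 : α ≤ 1)
    (hwin : A * ((t * v : ℕ) : ℝ) ≤ Hb (t * v) - C0 ρ0 R)
    {n K b c : ℕ} (hbc : b + c = K) (hK : 1 ≤ 2 ^ K * ρ0 ^ n)
    (hreg : ∀ j ≤ K, |Hb j - α * j| ≤ E)
    (hL : Ex (fun I => |Real.logb 2 |rt r I| + c|) (WL p n) ≤ L)
    {N w : ℕ} (hb1 : t * (N + v) ≤ b) (hb2 : t * (N + q0) ≤ b) (hw : b ≤ t * N + w) :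
    QZ b (YA p r s x0 n K) ≤ α * c + E + ent (qq p r n) + 9 ∧
    ∃ Γ : ℝ, 0 ≤ Γ ∧
      HZ (YA p r s x0 n K) ≤ QZ b (YA p r s x0 n K) + w + 4 + 4 * N + t * Γ + ent (qq p r n) ∧
      ((t * v : ℝ) - t - 6 - A * (t * v)) * Γ ≤
        v * (α * b + (L + 1) + E + 5 - A * (t * N)) + (t * v) * (L + 1) +
        k * (q0 * (3 * E + 19 + C1 R + ent (qq p r n) + 2 * (L + 1)) +
          N * Real.logb 2 (1 + 2 ^ t / 2 ^ (t * q0))) := by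
  set q := qq p r n with hq
  have hqP : IsP q := hg.isP_qq n
  set Y : ℝ → ZA := YY p r s x0 n K with hYdef
  -- properties of the possible values of the linear part
  have hτ : ∀ τ ∈ q.support, 1 ≤ 2 ^ K * |τ| ∧ |τ| ≤ 1 := by
    intro τ h
    obtain ⟨I, hI, rfl⟩ := exists_of_mem_support_map h
    obtain ⟨h1, h2⟩ := hg.rt_bounds I
    rw [length_of_WL hI] at h1 h2
    exact ⟨hK.trans (mul_le_mul_of_nonneg_left h1 (by positivity)),
      h2.trans (pow_le_one₀ hg.ρ1_pos.le hg.ρ1_lt.le)⟩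
  -- choose the length of the second part of the word
  have hM : ∃ M, |Hw p r s x0 (n + M) K - Hb K| ≤ 2 ∧ |Hw p r s x0 (n + M) c - Hb c| ≤ 2 ∧
      ∀ τ ∈ q.support, |Hw p r s x0 M (BB K τ) - Hb (BB K τ)| ≤ 2 ∧
        ∀ i, i + t * v + 1 ≤ BB K τ →
          A * ((t * v : ℕ) : ℝ) ≤ DD (XX p r s x0 M K τ) i (t * v) := by
    obtain ⟨M1, h1⟩ := hl K
    obtain ⟨M2, h2⟩ := hl c
    choose M4 h4 using fun τ : ℝ => hg.win_link hl (t * v) (2 ^ K * τ)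
    choose M3 h3 using hl
    refine ⟨M1 + M2 + ∑ τ ∈ q.support, (M3 (BB K τ) + M4 τ), h1 _ (by omega), h2 _ (by omega), ?_⟩
    intro τ h
    have hle : M3 (BB K τ) + M4 τ ≤ ∑ τ ∈ q.support, (M3 (BB K τ) + M4 τ) :=
      Finset.single_le_sum (f := fun τ => M3 (BB K τ) + M4 τ) (fun _ _ => Nat.zero_le _) h
    refine ⟨h3 _ _ (by omega), fun i hi => ?_⟩
    rw [XX]
    refine hwin.trans (h4 τ _ (by omega) _ i ?_)
    have hs := (BB_spec (hτ τ h).1 (hτ τ h).2).1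
    rw [abs_mul, abs_of_pos (by positivity : (0 : ℝ) < 2 ^ K)]
    refine le_trans ?_ hs
    rw [le_div_iff₀ (by norm_num), ← pow_succ]
    exact pow_le_pow_right₀ (by norm_num) hi
  obtain ⟨M, hMK, hMc, hMτ⟩ := hM
  set X : ℝ → ZA := XX p r s x0 M K with hXdef
  have hX : ∀ τ, PZ (X τ) := fun τ => hg.PZ_FL _ _ _
  have hY : ∀ τ ∈ q.support, PZ (Y τ) := fun τ h => hg.PZ_YY n K h
  have hXY : ∀ τ ∈ q.support, PZ (X τ * Y τ) := fun τ h => (hX τ).mul (hY τ h)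
  have hXYU : ∀ τ ∈ q.support, PZ (X τ * Y τ * UU b) := fun τ h => (hXY τ h).mul (PZ_UU b)
  -- the discretized self-similar measure
  set Z := law (WL p (n + M)) (Zf r s x0 n K) with hZ
  have hZP : PZ Z := PZ_law (hg.isP _) _
  have hZeq : Z = ∑ τ ∈ q.support, q τ • (X τ * Y τ) := hg.Z_eq n M K
  have hZUeq : Z * UU b = ∑ τ ∈ q.support, q τ • (X τ * Y τ * UU b) := by
    rw [hZeq, Finset.sum_mul]; exact Finset.sum_congr rfl fun τ _ => smul_mul_assoc _ _ _
  have z1 := abs_le.mp (hg.QZ_Z n M K hbc)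
  have z2 := abs_le.mp (hg.QZ_Z n M K (zero_add K))
  rw [← hZ] at z1 z2
  rw [QZ_zero] at z2
  have z3 := abs_le.mp hMK
  have z4 := abs_le.mp hMc
  have z5 := HZ_UU_le hZP b
  have z6 := le_HZ_UU hZP b
  have rK := abs_le.mp (hreg K le_rfl)
  have rc := abs_le.mp (hreg c (by omega))
  have hsum1 : ∑ τ ∈ q.support, q τ = 1 := by rw [← mass_eq_sum]; exact hqP.2
  have m1 : Ex (fun τ => HZ (X τ * Y τ)) q ≤ HZ Z := by
    rw [hZeq, Ex_eq_sum]; exact HZ_mix_ge (fun τ _ => hqP.1 τ) hsum1 hXY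
  have m2 : Ex (fun τ => HZ (X τ * Y τ * UU b)) q ≤ HZ (Z * UU b) := by
    rw [hZUeq, Ex_eq_sum]; exact HZ_mix_ge (fun τ _ => hqP.1 τ) hsum1 hXYU
  have m3 : HZ (Z * UU b) ≤ Ex (fun τ => HZ (X τ * Y τ * UU b)) q + ent q := by
    rw [hZUeq, Ex_eq_sum]; exact HZ_mix_le hqP hXYU
  have y1 := hg.QZ_YA_ge n K b
  have y2 := hg.QZ_YA_le n K b
  have y3 := hg.QZ_YA_le n K 0
  rw [← hq] at y1 y2 y3
  rw [QZ_zero] at y3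
  simp only [QZ_zero] at y3
  have hKr : (K : ℝ) = b + c := by exact_mod_cast hbc.symm
  refine ⟨?_, ?_⟩
  · -- coarse scale
    have y4 : Ex (fun τ => QZ b (Y τ)) q ≤ 1 * Ex (fun τ => HZ (X τ * Y τ * UU b)) q + (3 - b) := by
      refine Ex_add_le hqP fun τ h => ?_
      have h := Finsupp.mem_support_iff.mpr h
      have a1 := le_HZ_UU (hY τ h) b
      have a2 := HZ_le_mul ((hY τ h).mul (PZ_UU b)) (hX τ)
      rw [← mul_assoc] at a2
      linarith
    rw [one_mul] at y4
    linarith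
  · set Γτ : ℝ → ℝ := fun τ => ∑ l ∈ Finset.range N, goodMass (Y τ) (t * l) t with hΓ
    set dd : ℝ → ℝ := fun τ => |(BB K τ : ℝ) - b| with hdd
    have hd : Ex dd q ≤ L + 1 := by
      have : Ex dd q ≤ 1 * Ex (fun τ => |Real.logb 2 |τ| + c|) q + 1 := by
        refine Ex_add_le hqP fun τ h => ?_
        have h := Finsupp.mem_support_iff.mpr h
        have a1 := (BB_spec (hτ τ h).1 (hτ τ h).2).2.2.2
        have e : (BB K τ : ℝ) - b = (BB K τ - (K + Real.logb 2 |τ|)) + (Real.logb 2 |τ| + c) := by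
          rw [hKr]; ring
        simp only [hdd]
        rw [e]
        refine (abs_add_le _ _).trans ?_
        linarith
      rw [one_mul] at this
      have e2 : Ex (fun τ => |Real.logb 2 |τ| + c|) q =
          Ex (fun I => |Real.logb 2 |rt r I| + c|) (WL p n) := by
        rw [hq, qq, Ex_mapDomain]
      linarith
    refine ⟨Ex Γτ q, Ex_nonneg hqP.1 fun τ h => Finset.sum_nonneg fun l _ =>
      goodMass_nonneg (hY τ (Finsupp.mem_support_iff.mpr h)) _ _, ?_, ?_⟩
    · have a1 : Ex (fun τ => HZ (Y τ)) q ≤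
          1 * Ex (fun τ => QZ b (Y τ) + t * Γτ τ) q + (w + 4 + 4 * N) := by
        refine Ex_add_le hqP fun τ h => ?_
        have hYτ := hY τ (Finsupp.mem_support_iff.mpr h)
        have b1 := HZ_le_goodMass hYτ ht N
        have b2 := le_HZ_UU hYτ (t * N)
        have b3 := HZ_UU_le hYτ b
        obtain ⟨e, rfl⟩ := Nat.exists_eq_add_of_le (show t * N ≤ b by
          rw [mul_add] at hb1; omega)
        have b4 := DD_le hYτ (t * N) e
        rw [DD] at b4
        have b5 : (e : ℝ) ≤ w := by
          have : e ≤ w := by omega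
          exact_mod_cast this
        push_cast at b3 b2
        simp only [hΓ]
        linarith
      rw [one_mul, Ex_add_fun, Ex_smul_fun] at a1
      linarith
    · -- sum the estimates for the individual linear parts
      set η := Real.logb 2 (1 + 2 ^ t / 2 ^ (t * q0)) with hη
      have hXs : ∀ τ ∈ q.support, |HZ (X τ) - Hb (BB K τ)| ≤ 5 ∧
          |Hb (BB K τ) - α * BB K τ| ≤ E := by
        intro τ h
        obtain ⟨s1, s2, s3, _⟩ := BB_spec (hτ τ h).1 (hτ τ h).2
        have c1 := abs_le.mp (hg.HZ_X M K s1 s2)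
        have c2 := abs_le.mp (hMτ τ h).1
        refine ⟨?_, hreg _ s3⟩
        rw [abs_le]
        constructor <;> linarith
      have hbB : ∀ τ, α * (BB K τ : ℝ) ≤ α * b + dd τ ∧ α * b ≤ α * (BB K τ : ℝ) + dd τ := by
        intro τ
        have h1 := abs_le.mp (le_refl (dd τ))
        simp only [hdd] at h1 ⊢
        have h2 := abs_nonneg ((BB K τ : ℝ) - b)
        have h3 : |α * ((BB K τ : ℝ) - b)| ≤ |(BB K τ : ℝ) - b| := by
          rw [abs_mul, abs_of_nonneg hα0]; exact mul_le_of_le_one_left h2 hα1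
        have h4 := abs_le.mp h3
        constructor <;> linarith [h4.1, h4.2]
      have hU0 : UU 0 = 1 := by
        rw [UU]; simp [dlt_zero]
      have hDX : ∀ τ ∈ q.support, DD (X τ) 0 b ≤ α * b + dd τ + E + 5 := by
        intro τ h
        obtain ⟨c1, c2⟩ := hXs τ h
        have c1 := abs_le.mp c1
        have c2 := abs_le.mp c2
        have c3 := HZ_le_mul (PZ_UU b) (hX τ)
        rw [HZ_UU] at c3
        rw [DD, hU0, mul_one, zero_add]
        linarith [(hbB τ).1]
      have hDX' : ∀ τ ∈ q.support, α * b - 2 * dd τ - E - 6 - C1 R ≤ DD (X τ) 0 b := by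
        intro τ h
        obtain ⟨c1, c2⟩ := hXs τ h
        have c1 := abs_le.mp c1
        have c2 := abs_le.mp c2
        obtain ⟨_, s2, _, _⟩ := BB_spec (hτ τ h).1 (hτ τ h).2
        have c3 := hg.QZ_X M K s2 b
        have c4 := HZ_UU_le (hX τ) b
        rw [DD, hU0, mul_one, zero_add]
        have : dd τ = |(BB K τ : ℝ) - b| := rfl
        linarith [(hbB τ).2]
      have hG : Ex (fun τ => DD (X τ * Y τ) 0 b - DD (X τ) 0 b) q ≤
          3 * E + 19 + C1 R + ent q + 2 * (L + 1) := by
        have g1 : Ex (fun τ => DD (X τ * Y τ) 0 b - DD (X τ) 0 b) q ≤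
            1 * Ex (fun τ => (HZ (X τ * Y τ) + (-1) * HZ (X τ * Y τ * UU b)) + 2 * dd τ) q +
            (b - α * b + E + 6 + C1 R) := by
          refine Ex_add_le hqP fun τ h => ?_
          have := hDX' τ (Finsupp.mem_support_iff.mpr h)
          have e : DD (X τ * Y τ) 0 b = HZ (X τ * Y τ) - HZ (X τ * Y τ * UU b) + b := by
            rw [DD, hU0, mul_one, zero_add]
          linarith
        rw [one_mul, Ex_add_fun, Ex_add_fun, Ex_smul_fun, Ex_smul_fun] at g1
        have : α * (K : ℝ) = α * b + α * c := by rw [hKr]; ring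
        linarith
      have hmain : Ex (fun τ => ((t * v : ℝ) - t - 6 - A * (t * v)) * Γτ τ) q ≤
          1 * Ex (fun τ => (v + t * v) * dd τ +
            (k * q0 : ℝ) * (DD (X τ * Y τ) 0 b - DD (X τ) 0 b)) q +
          (v * (α * b + E + 5 - A * (t * N)) + k * (N * η)) := by
        refine Ex_add_le hqP fun τ h => ?_
        have h := Finsupp.mem_support_iff.mpr h
        have t1 := tau_bound ht hk (hX τ) (hY τ h) hb1 hb2 hA1 (hMτ τ h).2
        have t2 := mul_le_mul_of_nonneg_left (hDX τ h) (Nat.cast_nonneg (α := ℝ) v)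
        have : dd τ = |(BB K τ : ℝ) - b| := rfl
        rw [← this] at t1
        simp only [hΓ]
        refine t1.trans ?_
        linarith
      rw [one_mul, Ex_smul_fun, Ex_add_fun, Ex_smul_fun, Ex_smul_fun] at hmain
      have f1 := mul_le_mul_of_nonneg_left hd (show (0 : ℝ) ≤ v + t * v by positivity)
      have f2 := mul_le_mul_of_nonneg_left hG (show (0 : ℝ) ≤ k * q0 by positivity)
      have f3 : (v : ℝ) * (α * b + (L + 1) + E + 5 - A * (t * N)) + (t * v) * (L + 1) +
        k * (q0 * (3 * E + 19 + C1 R + ent q + 2 * (L + 1)) + N * η) =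
          (v * (α * b + E + 5 - A * (t * N)) + k * (N * η)) + (v + t * v) * (L + 1) +
          k * q0 * (3 * E + 19 + C1 R + ent q + 2 * (L + 1)) := by ring
      rw [f3]
      linarith
end

end

/-! ### The asymptotic estimate -/

section

variable {Λ : Type*} [Fintype Λ]
variable {ρ0 ρ1 R x0 : ℝ} {p r s : Λ → ℝ}

/-- A window estimate together with an upper bound at scale `K` makes the scale entropies
uniformly close to the linear function `α j` for all `j ≤ K`. -/
lemma Good.regular (hg : Good ρ0 ρ1 R p r s x0) {Hb : ℕ → ℝ} (hl : Link p r s x0 Hb)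
    {u : ℕ} (hu : 1 ≤ u) {α κ δ : ℝ} (hα : α ≤ 1) (hκ : 0 ≤ κ) (hδ : 0 ≤ δ)
    (hA : (α - κ) * u ≤ Hb u - C0 ρ0 R) {K : ℕ} (hK : Hb K ≤ (α + δ) * K) :
    ∀ j ≤ K, |Hb j - α * j| ≤ (κ + δ) * K + u + 14 := by
  intro j hj
  have h1 := hg.increment hl hu (by linarith) hA (Nat.zero_le j)
  have h2 := hg.increment hl hu (by linarith) hA hj
  have h3 := hg.Hb_nonneg hl 0
  have hj' : (j : ℝ) ≤ K := by exact_mod_cast hj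
  have h0 : (0 : ℝ) ≤ j := Nat.cast_nonneg j
  have e1 : κ * j ≤ κ * K := mul_le_mul_of_nonneg_left hj' hκ
  have e2 : 0 ≤ κ * j := mul_nonneg hκ h0
  have e3 : 0 ≤ δ * K := mul_nonneg hδ (h0.trans hj')
  push_cast at h1
  rw [abs_le]
  constructor <;> nlinarith

/-- The Lyapunov exponent `-∑ p_i log₂ |r_i|`. -/
def chi (p r : Λ → ℝ) : ℝ := -∑ i, p i * Real.logb 2 |r i|

/-- The first absolute moment of `log |r_I|` about its mean. -/
lemma Good.log_moment (hg : Good ρ0 ρ1 R p r s x0) {n c : ℕ}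
    (hc : |(c : ℝ) - n * chi p r| ≤ 1) :
    Ex (fun I => |Real.logb 2 |rt r I| + c|) (WL p n) ≤
      (4 * (Real.logb 2 ρ0) ^ 2 + 1) * Real.sqrt n + 1 := by
  have hG : ∀ i, |Real.logb 2 (|r i|)| ≤ |Real.logb 2 ρ0| := by
    intro i
    have h1 : Real.logb 2 ρ0 ≤ Real.logb 2 |r i| :=
      Real.logb_le_logb_of_le (by norm_num) hg.ρ0_pos (hg.r_ge i)
    have h2 : Real.logb 2 |r i| ≤ 0 :=
      Real.logb_nonpos (by norm_num) (abs_nonneg _) ((hg.r_le i).trans hg.ρ1_lt.le)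
    rw [abs_of_nonpos h2, abs_of_nonpos (h1.trans h2)]
    linarith
  have h := abs_moment_WL hg.p_pos hg.p_sum (fun i => Real.logb 2 |r i|) hG n
  rw [sq_abs] at h
  have := Ex_add_le (hg.isP n) (f := fun I => |Real.logb 2 |rt r I| + c|)
    (g := fun I : List Λ => |(I.map fun i => Real.logb 2 |r i|).sum -
      n * ∑ i, p i * Real.logb 2 (|r i|)|) (c := 1) (d := 1) (by
      intro I _
      rw [hg.logb_rt]
      set S := (I.map fun i => Real.logb 2 |r i|).sum
      have e : S + (c : ℝ) = (S - n * ∑ i, p i * Real.logb 2 |r i|) +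
        (c - n * chi p r) := by rw [chi]; ring
      rw [e, one_mul]
      exact (abs_add_le _ _).trans (by linarith))
  linarith

/-- Sublinear error terms. -/
lemma eventually_sublinear (G C D : ℝ) (q : ℕ) {ζ : ℝ} (hζ : 0 < ζ) : ∃ n0 : ℕ, ∀ n ≥ n0,
    (G * Real.sqrt n + 2 ≤ ζ * n) ∧ (q : ℝ) * Real.logb 2 (n + 1) ≤ ζ * n ∧ C ≤ ζ * n ∧
      D ≤ (n : ℝ) := by
  have hs : Tendsto (fun n : ℕ => Real.sqrt n) atTop atTop :=
    Real.tendsto_sqrt_atTop.comp tendsto_natCast_atTop_atTop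
  have e1 := hs.eventually_ge_atTop (((|G| + 4 * q) + 2 + |C| + |D|) / ζ + |D| + 1)
  obtain ⟨n0, h⟩ := eventually_atTop.mp e1
  refine ⟨n0, fun n hn => ?_⟩
  have h1 := h n hn
  set x := Real.sqrt n with hx
  have hxn : x * x = n := Real.mul_self_sqrt (Nat.cast_nonneg n)
  have hq : (0 : ℝ) ≤ q := Nat.cast_nonneg q
  have a1 : 0 ≤ ((|G| + 4 * q) + 2 + |C| + |D|) / ζ := by positivity
  have hD := abs_nonneg D
  have hC := abs_nonneg C
  have hGa := abs_nonneg G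
  have hx1 : 1 ≤ x := by linarith
  have a2 : (|G| + 4 * q) + 2 + |C| + |D| ≤ ζ * x := by
    have : ((|G| + 4 * q) + 2 + |C| + |D|) / ζ ≤ x := by linarith
    rw [div_le_iff₀ hζ] at this
    linarith
  have a3 : ((|G| + 4 * q) + 2 + |C| + |D|) * x ≤ ζ * n := by
    rw [← hxn, ← mul_assoc]
    exact mul_le_mul_of_nonneg_right a2 (by linarith)
  have hlog : Real.logb 2 (n + 1) ≤ 4 * x := by
    have b1 : (n : ℝ) + 1 ≤ (1 + x) ^ 2 := by nlinarith
    have b2 : Real.logb 2 (n + 1) ≤ Real.logb 2 ((1 + x) ^ 2) :=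
      Real.logb_le_logb_of_le (by norm_num) (by positivity) b1
    have b3 : Real.log (1 + x) ≤ x := by
      have := Real.log_le_sub_one_of_pos (show 0 < 1 + x by linarith)
      linarith
    have b4 := Real.log_two_gt_d9
    have b5 : Real.logb 2 ((1 + x) ^ 2) ≤ 4 * x := by
      rw [Real.logb, Real.log_pow, div_le_iff₀ (by linarith)]
      push_cast
      nlinarith
    linarith
  refine ⟨?_, ?_, ?_, ?_⟩
  · have : G * x ≤ |G| * x := mul_le_mul_of_nonneg_right (le_abs_self G) (by linarith)
    nlinarith [mul_nonneg hq (by linarith : (0 : ℝ) ≤ x), mul_nonneg hC (by linarith : (0 : ℝ) ≤ x),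
      mul_nonneg hD (by linarith : (0 : ℝ) ≤ x)]
  · have : (q : ℝ) * Real.logb 2 (n + 1) ≤ q * (4 * x) := mul_le_mul_of_nonneg_left hlog hq
    nlinarith [mul_nonneg hGa (by linarith : (0 : ℝ) ≤ x), mul_nonneg hC (by linarith : (0 : ℝ) ≤ x),
      mul_nonneg hD (by linarith : (0 : ℝ) ≤ x)]
  · have := le_abs_self C
    nlinarith [mul_nonneg hGa (by linarith : (0 : ℝ) ≤ x), mul_nonneg hq (by linarith : (0 : ℝ) ≤ x),
      mul_nonneg hD (by linarith : (0 : ℝ) ≤ x), mul_le_mul_of_nonneg_left hx1 hC]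
  · have := le_abs_self D
    nlinarith

lemma exists_window {Hb0 : ℕ → ℝ} {α : ℝ} (h0 : Tendsto (fun j => Hb0 j / j) atTop (nhds α))
    {κ : ℝ} (hκ : 0 < κ) (C : ℝ) : ∃ u0 : ℕ, ∀ u ≥ u0, (α - κ) * u ≤ Hb0 u - C := by
  have e1 := h0.eventually (lt_mem_nhds (show α - κ / 2 < α by linarith))
  have e2 := (tendsto_natCast_atTop_atTop (R := ℝ)).eventually_ge_atTop (2 * C / κ)
  have e3 := eventually_ge_atTop 1
  obtain ⟨u0, h⟩ := eventually_atTop.mp (e1.and (e2.and e3))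
  refine ⟨u0, fun u hu => ?_⟩
  obtain ⟨h1, h2, h3⟩ := h u hu
  have hu' : (0 : ℝ) < u := by exact_mod_cast h3
  rw [lt_div_iff₀ hu'] at h1
  rw [div_le_iff₀ hκ] at h2
  nlinarith

lemma exists_small_log {t : ℕ} (ht : 1 ≤ t) {η : ℝ} (hη : 0 < η) :
    ∃ q0 : ℕ, Real.logb 2 (1 + 2 ^ t / 2 ^ (t * q0)) ≤ η := by
  have h1 : Tendsto (fun q0 : ℕ => (1 : ℝ) + 2 ^ t * ((1 / 2) ^ t) ^ q0) atTop
      (nhds (1 + 2 ^ t * 0)) := by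
    refine tendsto_const_nhds.add (Tendsto.const_mul _ ?_)
    refine tendsto_pow_atTop_nhds_zero_of_lt_one (by positivity) ?_
    exact pow_lt_one₀ (by norm_num) (by norm_num) (by omega)
  have h2 : Tendsto (fun q0 : ℕ => Real.logb 2 ((1 : ℝ) + 2 ^ t * ((1 / 2) ^ t) ^ q0)) atTop
      (nhds (Real.logb 2 (1 + 2 ^ t * 0))) :=
    ((Real.continuousAt_logb (by norm_num)).tendsto).comp h1
  rw [mul_zero, add_zero, Real.logb_one] at h2
  obtain ⟨q0, h⟩ := (h2.eventually (ge_mem_nhds hη)).exists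
  refine ⟨q0, ?_⟩
  have e : (2 : ℝ) ^ t / 2 ^ (t * q0) = 2 ^ t * ((1 / 2) ^ t) ^ q0 := by
    rw [← pow_mul, one_div, inv_pow, div_eq_mul_inv]
  rw [e]
  exact h

/-- Bookkeeping of the error terms in `Good.main_bound`. -/
lemma error_arith {t v k q0 m n K b w N E L1 e C α A κ ζ η ε Γ B : ℝ}
    (ht : 1 ≤ t) (hv : 1 ≤ v) (hk : 0 ≤ k) (hq0 : 0 ≤ q0) (hm : 1 ≤ m) (hn : 0 ≤ n)
    (hK : K = 3 * n * m) (hbK : b ≤ K) (htN : t * N ≤ b) (hbw : b ≤ t * N + w) (hN : 0 ≤ N)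
    (hα0 : 0 ≤ α) (hα1 : α < 1) (hε : 0 < ε) (hA : A = α - κ) (hκ : κ * (96 * m) = ε * (1 - α))
    (hv1 : 2 * (t + 6) ≤ (1 - α) * (t * v)) (htε : 96 * m ≤ ε * t) (hη : k * η ≤ κ)
    (hB : B = v * (2 + 7 * m + t) + k * q0 * (21 * m + 4)) (hζ : ζ * (16 * B) = ε * (1 - α))
    (hζ0 : 0 < ζ)
    (hL1 : L1 ≤ ζ * n) (he : e ≤ ζ * n) (hE : E ≤ 7 * ζ * m * n) (hw : w + 9 ≤ ζ * n)
    (hw0 : 0 ≤ w) (hC : 19 + C ≤ ζ * n) (hΓ : 0 ≤ Γ)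
    (h : (t * v - t - 6 - A * (t * v)) * Γ ≤
        v * (α * b + L1 + E + 5 - A * (t * N)) + (t * v) * L1 +
        k * (q0 * (3 * E + 19 + C + e + 2 * L1) + N * η)) :
    w + 4 + 4 * N + t * Γ + e ≤ ε * n ∧ E + e + 9 ≤ ε * n := by
  have hg : 0 < 1 - α := by linarith
  have hκ0 : 0 < κ := by
    by_contra hc
    have h1 : κ * (96 * m) ≤ 0 := mul_nonpos_of_nonpos_of_nonneg (not_lt.mp hc) (by linarith)
    linarith [mul_pos hε hg]
  have hzn : 0 ≤ ζ * n := by positivity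
  have htv : 0 ≤ t * v := by positivity
  have hkq : 0 ≤ k * q0 := by positivity
  have hBge : 2 + 7 * m ≤ B := by
    have h1 : 0 ≤ k * q0 * (21 * m + 4) := by positivity
    have h2 : 2 + 7 * m + t ≤ v * (2 + 7 * m + t) := le_mul_of_one_le_left (by positivity) hv
    linarith
  have hzB : 16 * (ζ * (2 + 7 * m)) ≤ ε := by
    have h1 : ζ * (2 + 7 * m) ≤ ζ * B := mul_le_mul_of_nonneg_left hBge hζ0.le
    have h2 : 0 ≤ ε * α := by positivity
    linarith
  have hz7 : 16 * (ζ * n * (2 + 7 * m)) ≤ ε * n := by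
    linarith [mul_le_mul_of_nonneg_right hzB hn]
  have hNK : N ≤ K := (le_mul_of_one_le_left hN ht).trans (htN.trans hbK)
  have hK0 : 0 ≤ K := hN.trans hNK
  have hKn : κ * K * 32 = ε * (1 - α) * n := by
    rw [hK]; linear_combination n * hκ
  have r1 : α * b + 5 - A * (t * N) ≤ κ * K + (w + 5) := by
    have : κ * (t * N) ≤ κ * K := mul_le_mul_of_nonneg_left (htN.trans hbK) hκ0.le
    have h2 : α * b ≤ α * (t * N + w) := mul_le_mul_of_nonneg_left hbw hα0
    have h3 : α * w ≤ w := mul_le_of_le_one_left hw0 hα1.le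
    rw [hA]; linarith
  have r2 : v * (α * b + L1 + E + 5 - A * (t * N)) + (t * v) * L1 ≤
      v * (κ * K + (2 + 7 * m + t) * (ζ * n)) := by
    have : t * L1 ≤ t * (ζ * n) := mul_le_mul_of_nonneg_left hL1 (by linarith)
    have h2 : α * b + L1 + E + 5 - A * (t * N) + t * L1 ≤ κ * K + (2 + 7 * m + t) * (ζ * n) := by
      linarith
    have := mul_le_mul_of_nonneg_left h2 (by linarith : (0 : ℝ) ≤ v)
    linarith
  have r3 : k * q0 * (3 * E + 19 + C + e + 2 * L1) ≤ k * q0 * ((21 * m + 4) * (ζ * n)) :=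
    mul_le_mul_of_nonneg_left (by linarith) hkq
  have r4 : k * (N * η) ≤ v * (κ * K) := by
    have a1 : k * η * N ≤ κ * N := mul_le_mul_of_nonneg_right hη hN
    have a2 : κ * N ≤ κ * K := mul_le_mul_of_nonneg_left hNK hκ0.le
    have a3 : κ * K ≤ v * (κ * K) := le_mul_of_one_le_left (by positivity) hv
    linarith
  have r5 : (1 - α) * (t * v) / 2 * Γ ≤ (t * v - t - 6 - A * (t * v)) * Γ := by
    refine mul_le_mul_of_nonneg_right ?_ hΓ
    have := mul_nonneg hκ0.le htv
    rw [hA]; linarith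
  have r6 : (1 - α) * (t * v) / 2 * Γ ≤ 2 * v * (κ * K) + B * (ζ * n) := by
    rw [hB]; linarith
  have r7 : 16 * (B * (ζ * n)) = ε * (1 - α) * n := by linear_combination n * hζ
  have r8 : ((1 - α) * v) * (t * Γ) ≤ ((1 - α) * v) * (ε * n / 4) := by
    have : ε * (1 - α) * n ≤ v * (ε * (1 - α) * n) := le_mul_of_one_le_left (by positivity) hv
    have h2 : v * (κ * K * 32) = v * (ε * (1 - α) * n) := by rw [hKn]
    linarith
  have r9 : t * Γ ≤ ε * n / 4 := le_of_mul_le_mul_left r8 (by positivity)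
  have r10 : 32 * N ≤ ε * n := by
    have a1 : 96 * m * N ≤ ε * t * N := mul_le_mul_of_nonneg_right htε hN
    have a2 : ε * (t * N) ≤ ε * K := mul_le_mul_of_nonneg_left (htN.trans hbK) hε.le
    rw [hK] at a2
    have a3 : (3 * m) * (32 * N) ≤ (3 * m) * (ε * n) := by linarith
    exact le_of_mul_le_mul_left a3 (by linarith)
  have hzm : ζ * n ≤ ζ * n * m := le_mul_of_one_le_right hzn hm
  constructor <;> linarith

/-- Asymptotic form of the entropy estimate, uniform over systems with prescribed bounds: if the
scale entropies are close to those of a system of dimension `α < 1` at two fixed scales and the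
entropy at scale `K = 3nm` is at most `(α + δ) K`, then the level-`n` approximation has almost no
entropy between the scale of its cylinders and scale `K`. -/
theorem asymptotic (p : Λ → ℝ) {ρ0 : ℝ} (ρ1 R : ℝ) {α : ℝ} {m : ℕ} (hρ0 : 0 < ρ0) (hm : 1 ≤ m)
    (hmρ : 1 ≤ 2 ^ m * ρ0) (hα0 : 0 ≤ α) (hα1 : α < 1) {Hb0 : ℕ → ℝ}
    (h0 : Tendsto (fun j => Hb0 j / j) atTop (nhds α)) {ε : ℝ} (hε : 0 < ε) :
    ∃ u1 u2 : ℕ, ∃ δ > 0, ∃ n0 : ℕ, ∀ (r s : Λ → ℝ) (x0 : ℝ) (Hb : ℕ → ℝ),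
      Good ρ0 ρ1 R p r s x0 → Link p r s x0 Hb →
      |Hb u1 - Hb0 u1| ≤ 10 → |Hb u2 - Hb0 u2| ≤ 10 →
      ∀ n ≥ n0, ∀ b c : ℕ, b + c = 3 * n * m → c ≤ n * m → |(c : ℝ) - n * chi p r| ≤ 1 →
        Hb (3 * n * m) ≤ (α + δ) * (3 * n * m : ℕ) →
        HZ (YA p r s x0 n (3 * n * m)) ≤ QZ b (YA p r s x0 n (3 * n * m)) + ε * n ∧
          QZ b (YA p r s x0 n (3 * n * m)) ≤ α * c + ε * n := by
  have hg : 0 < 1 - α := by linarith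
  have hm' : (1 : ℝ) ≤ m := by exact_mod_cast hm
  -- the block length `t`
  obtain ⟨t, ht⟩ := exists_nat_ge (96 * m / ε + 1)
  have htε : 96 * (m : ℝ) ≤ ε * t := by
    have : 96 * (m : ℝ) / ε ≤ t := by linarith
    rw [div_le_iff₀ hε] at this; linarith
  have ht1' : (1 : ℝ) ≤ t := by
    have : 0 ≤ 96 * (m : ℝ) / ε := by positivity
    linarith
  have ht1 : 1 ≤ t := by exact_mod_cast ht1'
  set κ := ε * (1 - α) / (96 * m) with hκd
  have hκ : κ * (96 * m) = ε * (1 - α) := by rw [hκd]; field_simp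
  have hκ0 : 0 < κ := by positivity
  -- the window length `t * v`
  obtain ⟨v0, hv0⟩ := exists_window h0 hκ0 (C0 ρ0 R + 10)
  obtain ⟨v1, hv1⟩ := exists_nat_ge (2 * (t + 6 : ℝ) / (1 - α))
  set v := v0 + v1 + 1 with hv
  have hvv : (1 : ℝ) ≤ v := by rw [hv]; push_cast; linarith [Nat.cast_nonneg (α := ℝ) v0, Nat.cast_nonneg (α := ℝ) v1]
  have hv2 : 2 * (t + 6 : ℝ) ≤ (1 - α) * (t * v) := by
    rw [div_le_iff₀ hg] at hv1
    have a1 : (v1 : ℝ) ≤ v := by rw [hv]; push_cast; linarith [Nat.cast_nonneg (α := ℝ) v0]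
    have a2 : (v : ℝ) ≤ t * v := le_mul_of_one_le_left (by linarith) ht1'
    have := mul_le_mul_of_nonneg_left (a1.trans a2) hg.le
    linarith
  have hwin := hv0 (t * v) (by
    have : v ≤ t * v := Nat.le_mul_of_pos_left _ ht1
    omega)
  obtain ⟨k, hk⟩ := exists_pow_DD t (t * v) ht1
  obtain ⟨q0, hq0⟩ := exists_small_log ht1 (show 0 < κ / (k + 1) by positivity)
  have hη : k * Real.logb 2 (1 + 2 ^ t / 2 ^ (t * q0)) ≤ κ := by
    refine (mul_le_mul_of_nonneg_left hq0 (Nat.cast_nonneg k)).trans ?_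
    rw [mul_div_assoc', div_le_iff₀ (by positivity)]
    linarith
  set B : ℝ := v * (2 + 7 * m + t) + k * q0 * (21 * m + 4) with hB
  have hB0 : 0 < B := by positivity
  set ζ := ε * (1 - α) / (16 * B) with hζd
  have hζ : ζ * (16 * B) = ε * (1 - α) := by rw [hζd]; field_simp
  have hζ0 : 0 < ζ := by positivity
  obtain ⟨u2, hu2⟩ := exists_window h0 hζ0 (C0 ρ0 R + 10)
  set w := t * (max v q0 + 1) with hw
  obtain ⟨n0, hn0⟩ := eventually_sublinear (4 * (Real.logb 2 ρ0) ^ 2 + 1)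
    (w + 9 + 19 + |C1 R| + (u2 + 1) + 14) (t * max v q0) (Fintype.card Λ) hζ0
  refine ⟨t * v, u2 + 1, ζ, hζ0, n0, ?_⟩
  intro r s x0 Hb hgood hl hH1 hH2 n hn b c hbc hc hcχ hHK
  obtain ⟨s1, s2, s3, s4⟩ := hn0 n hn
  have hwin1 : (α - κ) * ((t * v : ℕ) : ℝ) ≤ Hb (t * v) - C0 ρ0 R := by
    linarith [(abs_le.mp hH1).1]
  have hwin2 : (α - ζ) * ((u2 + 1 : ℕ) : ℝ) ≤ Hb (u2 + 1) - C0 ρ0 R := by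
    linarith [(abs_le.mp hH2).1, hu2 (u2 + 1) (by omega)]
  have hreg := hgood.regular hl (by omega) hα1.le hζ0.le hζ0.le hwin2 hHK
  have hLm := hgood.log_moment hcχ
  have hent : ent (qq p r n) ≤ ζ * n := (ent_rt_le hgood.p_pos hgood.p_sum r n).trans s2
  have hK1 : (1 : ℝ) ≤ 2 ^ (3 * n * m) * ρ0 ^ n := by
    have a1 : (1 : ℝ) ≤ (2 ^ m * ρ0) ^ n := one_le_pow₀ hmρ
    rw [mul_pow, ← pow_mul] at a1
    refine a1.trans (mul_le_mul_of_nonneg_right ?_ (by positivity))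
    exact pow_le_pow_right₀ (by norm_num) (by rw [mul_assoc, mul_comm m n]; omega)
  have hnm : 3 * n * m = 3 * (n * m) := by ring
  have hb2 : 2 * (n * m) ≤ b := by omega
  have hnb : n ≤ b := by
    have := Nat.le_mul_of_pos_right n hm
    omega
  have hbt : max v q0 ≤ b / t := by
    rw [Nat.le_div_iff_mul_le (by omega)]
    have : t * max v q0 ≤ n := by exact_mod_cast s4
    rw [mul_comm]
    omega
  set N := b / t - max v q0 with hN
  have hdm := Nat.div_add_mod b t
  have hml := Nat.mod_lt b (show t > 0 by omega)
  have hNt : t * (N + max v q0) = t * (b / t) := by rw [hN, Nat.sub_add_cancel hbt]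
  have hb1 : t * (N + max v q0) ≤ b := by omega
  have hbv : t * (N + v) ≤ b := (Nat.mul_le_mul_left t (by omega)).trans hb1
  have hbq : t * (N + q0) ≤ b := (Nat.mul_le_mul_left t (by omega)).trans hb1
  have hbw : b ≤ t * N + w := by
    rw [hw]
    have : t * N + t * (max v q0 + 1) = t * (N + max v q0) + t := by ring
    omega
  have htN : t * N ≤ b := (Nat.mul_le_mul_left t (by omega)).trans hb1
  obtain ⟨c1, Γ, hΓ, c2, c3⟩ := hgood.main_bound hl ht1 hk (by linarith : α - κ ≤ 1) hα0 hα1.le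
    hwin1 hbc hK1 hreg hLm hbv hbq hbw
  have hbK : b ≤ 3 * n * m := by omega
  have hC1 := le_abs_self (C1 R)
  have hC1' := abs_nonneg (C1 R)
  have hu2' := Nat.cast_nonneg (α := ℝ) u2
  have hw' := Nat.cast_nonneg (α := ℝ) w
  have hnn : (0 : ℝ) ≤ n := Nat.cast_nonneg n
  have hfin := error_arith (t := t) (v := v) (k := k) (q0 := q0) (m := m) (n := n)
    (K := (3 * n * m : ℕ)) (b := b) (w := w) (N := N) (C := C1 R)
    (L1 := (4 * (Real.logb 2 ρ0) ^ 2 + 1) * Real.sqrt n + 1 + 1) (Γ := Γ) (e := ent (qq p r n))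
    (E := (ζ + ζ) * ((3 * n * m : ℕ) : ℝ) + ((u2 + 1 : ℕ) : ℝ) + 14)
    ht1' hvv (Nat.cast_nonneg k) (Nat.cast_nonneg q0) hm' hnn (by push_cast; ring)
    (by exact_mod_cast hbK) (by exact_mod_cast htN) (by exact_mod_cast hbw) (Nat.cast_nonneg N)
    hα0 hα1 hε rfl hκ hv2 htε hη hB hζ hζ0 (by linarith) hent
    (by
      push_cast
      have : ζ * n ≤ ζ * m * n := by
        have := le_mul_of_one_le_right (show 0 ≤ ζ * n by positivity) hm'
        linarith
      linarith)
    (by linarith) hw' (by linarith) hΓ c3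
  constructor <;> linarith [hfin.1, hfin.2]

end

/-! ### Self-similar measures and random words -/

section

variable {Λ : Type*} [Fintype Λ]
variable {ρ0 ρ1 R x0 : ℝ} {p r s : Λ → ℝ} {ν : Measure ℝ}

/-- The dyadic cell `{y : ⌊2^K y⌋ = j}`. -/
def dcell (K : ℕ) (j : ℤ) : Set ℝ := {y : ℝ | ⌊(2 : ℝ) ^ K * y⌋ = j}

lemma measurableSet_dcell (K : ℕ) (j : ℤ) : MeasurableSet (dcell K j) := by
  have : Measurable fun y : ℝ => ⌊(2 : ℝ) ^ K * y⌋ :=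
    Int.measurable_floor.comp (measurable_const.mul measurable_id)
  exact this (measurableSet_singleton j)

lemma selfsim_real [IsProbabilityMeasure ν] (hp : ∀ i, 0 < p i)
    (hν : ν = ∑ i : Λ, ENNReal.ofReal (p i) • ν.map (fun x => r i * x + s i))
    {S : Set ℝ} (hS : MeasurableSet S) :
    ν.real S = ∑ i, p i * ν.real ((fun x => r i * x + s i) ⁻¹' S) := by
  have hm : ∀ i, Measurable fun x : ℝ => r i * x + s i := fun i => by fun_prop
  have h1 : ν S = ∑ i, ENNReal.ofReal (p i) * ν ((fun x => r i * x + s i) ⁻¹' S) := by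
    conv_lhs => rw [hν]
    rw [Measure.finsetSum_apply]
    refine Finset.sum_congr rfl fun i _ => ?_
    rw [Measure.smul_apply, Measure.map_apply (hm i) hS, smul_eq_mul]
  rw [Measure.real, h1, ENNReal.toReal_sum (fun i _ => ENNReal.mul_ne_top ENNReal.ofReal_ne_top
    (measure_ne_top _ _))]
  refine Finset.sum_congr rfl fun i _ => ?_
  rw [ENNReal.toReal_mul, ENNReal.toReal_ofReal (hp i).le, Measure.real]

lemma measurable_wf {Λ : Type*} (r s : Λ → ℝ) (I : List Λ) : Measurable (wf r s I) := by
  induction I with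
  | nil => exact measurable_id
  | cons i I ih =>
    have : wf r s (i :: I) = fun x => r i * wf r s I x + s i := by
      funext x; exact wf_cons ..
    rw [this]
    exact (measurable_const.mul ih).add measurable_const

/-- Iterated self-similarity. -/
lemma selfsim_iter [IsProbabilityMeasure ν] (hp : ∀ i, 0 < p i)
    (hν : ν = ∑ i : Λ, ENNReal.ofReal (p i) • ν.map (fun x => r i * x + s i)) (M : ℕ)
    {S : Set ℝ} (hS : MeasurableSet S) :
    ν.real S = Ex (fun I => ν.real (wf r s I ⁻¹' S)) (WL p M) := by
  induction M generalizing S with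
  | zero => rw [WL_zero, Ex_single, one_mul]; rfl
  | succ M ih =>
    rw [selfsim_real hp hν hS, Ex_WL_succ]
    refine Finset.sum_congr rfl fun i _ => ?_
    have hm : Measurable fun x : ℝ => r i * x + s i := by fun_prop
    rw [ih (hm hS)]
    rfl

/-- A self-similar measure is carried by any ball mapped into itself by all the maps. -/
lemma Good.support_bdd (hg : Good ρ0 ρ1 R p r s x0) [IsProbabilityMeasure ν]
    (hν : ν = ∑ i : Λ, ENNReal.ofReal (p i) • ν.map (fun x => r i * x + s i)) :
    ν {x | R < |x|} = 0 := by
  have hmeas : ∀ y : ℝ, MeasurableSet {x : ℝ | y < |x|} := fun y =>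
    measurableSet_lt measurable_const (by fun_prop)
  have step : ∀ z : ℝ, ν.real {x | R + z < |x|} ≤ ν.real {x | R + z / ρ1 < |x|} := by
    intro z
    rw [selfsim_real hg.p_pos hν (hmeas _)]
    have : ∀ i ∈ Finset.univ, p i * ν.real ((fun x => r i * x + s i) ⁻¹' {x | R + z < |x|}) ≤
        p i * ν.real {x | R + z / ρ1 < |x|} := by
      intro i _
      refine mul_le_mul_of_nonneg_left (measureReal_mono ?_) (hg.p_pos i).le
      intro x hx
      have hx : R + z < |r i * x + s i| := hx
      change R + z / ρ1 < |x|
      have h1 := abs_add_le (r i * x) (s i)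
      rw [abs_mul] at h1
      have h2 := mul_le_mul_of_nonneg_right (hg.r_le i) (abs_nonneg x)
      have h3 := hg.s_le i
      have h4 : z < ρ1 * (|x| - R) := by linarith
      have h5 : z / ρ1 < |x| - R := by rw [div_lt_iff₀ hg.ρ1_pos]; linarith
      linarith
    refine (Finset.sum_le_sum this).trans ?_
    rw [← Finset.sum_mul, hg.p_sum, one_mul]
  have iter : ∀ (z : ℝ) (k : ℕ), ν.real {x | R + z < |x|} ≤ ν.real {x | R + z / ρ1 ^ k < |x|} := by
    intro z k
    induction k with
    | zero => simp
    | succ k ih =>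
      refine ih.trans ((step _).trans (le_of_eq ?_))
      rw [pow_succ, div_div]
  have hzero : ∀ z : ℝ, 0 < z → ν {x | R + z < |x|} = 0 := by
    intro z hz
    have hlim : Tendsto (fun k : ℕ => ν {x : ℝ | (k : ℝ) < |x|}) atTop (nhds 0) := by
      have h := tendsto_measure_iInter_atTop (μ := ν) (s := fun k : ℕ => {x : ℝ | (k : ℝ) < |x|})
        (fun k => (hmeas _).nullMeasurableSet) (by
          intro a b hab x hx
          have hx : (b : ℝ) < |x| := hx
          have : (a : ℝ) ≤ b := by exact_mod_cast hab
          exact lt_of_le_of_lt this hx) ⟨0, measure_ne_top _ _⟩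
      have e : (⋂ k : ℕ, {x : ℝ | (k : ℝ) < |x|}) = ∅ := by
        rw [eq_empty_iff_forall_notMem]
        intro x hx
        obtain ⟨k, hk⟩ := exists_nat_ge |x|
        have : (k : ℝ) < |x| := mem_iInter.mp hx k
        linarith
      rwa [e, measure_empty] at h
    have hgrow : Tendsto (fun k : ℕ => R + z / ρ1 ^ k) atTop atTop := by
      refine tendsto_atTop_add_const_left _ _ ?_
      have h1 : Tendsto (fun k : ℕ => (ρ1⁻¹) ^ k) atTop atTop :=
        tendsto_pow_atTop_atTop_of_one_lt ((one_lt_inv₀ hg.ρ1_pos).mpr hg.ρ1_lt)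
      have h2 := h1.const_mul_atTop hz
      refine h2.congr fun k => ?_
      rw [inv_pow, div_eq_mul_inv]
    have hle : ∀ j : ℕ, ν {x | R + z < |x|} ≤ ν {x : ℝ | (j : ℝ) < |x|} := by
      intro j
      obtain ⟨k, hk⟩ := (hgrow.eventually_ge_atTop (j : ℝ)).exists
      have h1 := iter z k
      rw [Measure.real, Measure.real, ENNReal.toReal_le_toReal (measure_ne_top _ _)
        (measure_ne_top _ _)] at h1
      refine h1.trans (measure_mono fun x hx => ?_)
      exact lt_of_le_of_lt hk hx
    exact le_antisymm (ge_of_tendsto' hlim hle) zero_le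
  have e : {x : ℝ | R < |x|} = ⋃ k : ℕ, {x : ℝ | R + 1 / ((k : ℝ) + 1) < |x|} := by
    ext x
    simp only [mem_iUnion]
    constructor
    · intro hx
      have hx : R < |x| := hx
      obtain ⟨k, hk⟩ := exists_nat_one_div_lt (sub_pos.mpr hx)
      exact ⟨k, by change R + 1 / ((k : ℝ) + 1) < |x|; linarith⟩
    · rintro ⟨k, hk⟩
      have hk : R + 1 / ((k : ℝ) + 1) < |x| := hk
      have : (0 : ℝ) < 1 / ((k : ℝ) + 1) := by positivity
      change R < |x|
      linarith
  rw [e]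
  exact measure_iUnion_null fun k => hzero _ (by positivity)

lemma Good.dcell_null (hg : Good ρ0 ρ1 R p r s x0) [IsProbabilityMeasure ν]
    (hν : ν {x | R < |x|} = 0) {K : ℕ} {j : ℤ}
    (hj : j ∉ Finset.Icc (-(⌈(2 : ℝ) ^ K * R⌉ + 1)) (⌈(2 : ℝ) ^ K * R⌉ + 1)) (I : List Λ) :
    ν (wf r s I ⁻¹' dcell K j) = 0 := by
  refine measure_mono_null (fun x hx => ?_) hν
  change R < |x|
  by_contra hc
  apply hj
  have hw := abs_le.mp (hg.abs_wf I (not_lt.mp hc))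
  have hx : ⌊(2 : ℝ) ^ K * wf r s I x⌋ = j := hx
  have h2 : (0 : ℝ) < 2 ^ K := by positivity
  have h3 := Int.le_ceil ((2 : ℝ) ^ K * R)
  have h4 := mul_le_mul_of_nonneg_left hw.1 h2.le
  have h5 := mul_le_mul_of_nonneg_left hw.2 h2.le
  have h6 := Int.floor_le ((2 : ℝ) ^ K * wf r s I x)
  have h7 := Int.lt_floor_add_one ((2 : ℝ) ^ K * wf r s I x)
  rw [hx] at h6 h7
  rw [Finset.mem_Icc]
  constructor
  · have : (-(⌈(2 : ℝ) ^ K * R⌉ + 1) : ℝ) ≤ j := by linarith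
    exact_mod_cast this
  · have : (j : ℝ) ≤ ⌈(2 : ℝ) ^ K * R⌉ + 1 := by linarith
    exact_mod_cast this

lemma Good.sum_dcell (hg : Good ρ0 ρ1 R p r s x0) [IsProbabilityMeasure ν]
    (hν : ν {x | R < |x|} = 0) (K : ℕ) (I : List Λ) :
    ∑ j ∈ Finset.Icc (-(⌈(2 : ℝ) ^ K * R⌉ + 1)) (⌈(2 : ℝ) ^ K * R⌉ + 1),
      ν.real (wf r s I ⁻¹' dcell K j) = 1 := by
  rw [← measureReal_biUnion_finset]
  · rw [measureReal_def, ← ENNReal.toReal_one]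
    congr 1
    rw [← prob_compl_eq_zero_iff]
    · refine measure_mono_null (t := ⋃ j ∈ {j : ℤ | j ∉ Finset.Icc (-(⌈(2 : ℝ) ^ K * R⌉ + 1))
        (⌈(2 : ℝ) ^ K * R⌉ + 1)}, wf r s I ⁻¹' dcell K j) ?_ ?_
      · intro x hx
        simp only [mem_compl_iff, mem_iUnion, not_exists] at hx
        simp only [mem_iUnion]
        exact ⟨⌊(2 : ℝ) ^ K * wf r s I x⌋, fun h => hx _ h rfl, rfl⟩
      · rw [measure_biUnion_null_iff (Set.to_countable _)]
        intro j hj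
        exact hg.dcell_null hν hj I
    · exact Finset.measurableSet_biUnion _ fun j _ =>
        measurable_wf r s I (measurableSet_dcell K j)
  · intro i _ j _ hij
    rw [Function.onFun, Set.disjoint_left]
    intro x hx hy
    have hx : ⌊(2 : ℝ) ^ K * wf r s I x⌋ = i := hx
    have hy : ⌊(2 : ℝ) ^ K * wf r s I x⌋ = j := hy
    exact hij (hx.symm.trans hy)
  · exact fun j _ => measurable_wf r s I (measurableSet_dcell K j)

/-- The law of `⌊2^K y⌋` under `ν`, for `ν` carried by `[-R, R]`. -/
def dlaw (ν : Measure ℝ) (R : ℝ) (K : ℕ) : ℤ →₀ ℝ :=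
  ∑ j ∈ Finset.Icc (-(⌈(2 : ℝ) ^ K * R⌉ + 1)) (⌈(2 : ℝ) ^ K * R⌉ + 1),
    Finsupp.single j (ν.real (dcell K j))

lemma dlaw_apply (ν : Measure ℝ) (R : ℝ) (K : ℕ) (j : ℤ) : dlaw ν R K j =
    if j ∈ Finset.Icc (-(⌈(2 : ℝ) ^ K * R⌉ + 1)) (⌈(2 : ℝ) ^ K * R⌉ + 1) then
      ν.real (dcell K j) else 0 := by
  rw [dlaw, Finsupp.finsetSum_apply]
  simp only [Finsupp.single_apply, Finset.sum_ite_eq']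

lemma dlaw_ent (hg : Good ρ0 ρ1 R p r s x0) [IsProbabilityMeasure ν]
    (hν : ν {x | R < |x|} = 0) (K : ℕ) : ent1 ν K = ent (dlaw ν R K) := by
  have hz : ∀ j ∉ Finset.Icc (-(⌈(2 : ℝ) ^ K * R⌉ + 1)) (⌈(2 : ℝ) ^ K * R⌉ + 1),
      negMulLog2 (ν {y : ℝ | ⌊(2 : ℝ) ^ K * y⌋ = j}) = 0 := by
    intro j hj
    have : ν {y : ℝ | ⌊(2 : ℝ) ^ K * y⌋ = j} = 0 := hg.dcell_null hν hj []
    rw [this]; simp [negMulLog2]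
  rw [ent1, tsum_eq_sum hz, ent_eq_of_subset (S := Finset.Icc (-(⌈(2 : ℝ) ^ K * R⌉ + 1))
    (⌈(2 : ℝ) ^ K * R⌉ + 1)), Finset.sum_div]
  · refine Finset.sum_congr rfl fun j hj => ?_
    rw [dlaw_apply, if_pos hj, negMulLog2, Real.negMulLog, Real.logb, Measure.real, dcell]
    ring
  · intro j hj
    by_contra hc
    rw [Finsupp.mem_support_iff, dlaw_apply, if_neg hc] at hj
    exact hj rfl

lemma isP_dlaw (hg : Good ρ0 ρ1 R p r s x0) [IsProbabilityMeasure ν]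
    (hν : ν {x | R < |x|} = 0) (K : ℕ) : IsP (dlaw ν R K) := by
  refine ⟨fun j => ?_, ?_⟩
  · rw [dlaw_apply]; split_ifs
    · exact measureReal_nonneg
    · exact le_rfl
  · have := hg.sum_dcell hν K []
    rw [dlaw, map_sum]
    simp only [mass, Ex_single, mul_one]
    exact this

/-- The scale entropies of a self-similar measure are those of its discrete approximations. -/
theorem Good.link (hg : Good ρ0 ρ1 R p r s x0) [IsProbabilityMeasure ν]
    (hν : ν = ∑ i : Λ, ENNReal.ofReal (p i) • ν.map (fun x => r i * x + s i)) :
    Link p r s x0 (ent1 ν) := by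
  have hb := hg.support_bdd hν
  intro K
  have hlim : Tendsto (fun M : ℕ => ρ1 ^ M * (2 ^ K * (2 * R))) atTop (nhds (0 * (2 ^ K * (2 * R)))) :=
    (tendsto_pow_atTop_nhds_zero_of_lt_one hg.ρ1_pos.le hg.ρ1_lt).mul_const _
  rw [zero_mul] at hlim
  obtain ⟨M0, hM0⟩ := eventually_atTop.mp (hlim.eventually (ge_mem_nhds one_pos))
  refine ⟨M0, fun M hM => ?_⟩
  have hM1 := hM0 M hM
  set a := WL p M with ha
  have haP : IsP a := hg.isP M
  set S := Finset.Icc (-(⌈(2 : ℝ) ^ K * R⌉ + 1)) (⌈(2 : ℝ) ^ K * R⌉ + 1) with hS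
  set G : List Λ → ℤ := fun I => ⌊(2 : ℝ) ^ K * wf r s I x0⌋ with hG
  -- joint law of the word and of the cell of a random point of its cylinder
  set J : List Λ × ℤ →₀ ℝ := ∑ I ∈ a.support, ∑ j ∈ S,
    Finsupp.single (I, j) (a I * ν.real (wf r s I ⁻¹' dcell K j)) with hJ
  have hsupp : ∀ x, J x ≠ 0 → |G x.1 - x.2| ≤ ((1 : ℕ) : ℤ) := by
    intro x hx
    rw [hJ, Finsupp.finsetSum_apply] at hx
    obtain ⟨I, hI, hx⟩ := Finset.exists_ne_zero_of_sum_ne_zero hx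
    rw [Finsupp.finsetSum_apply] at hx
    obtain ⟨j, hj, hx2⟩ := Finset.exists_ne_zero_of_sum_ne_zero hx
    rw [Finsupp.single_apply] at hx2
    split_ifs at hx2 with he
    swap
    · exact absurd rfl hx2
    subst he
    have hne : ν (wf r s I ⁻¹' dcell K j) ≠ 0 := by
      intro h0
      apply hx2
      rw [measureReal_def, h0]; simp
    have : ∃ y, |y| ≤ R ∧ y ∈ wf r s I ⁻¹' dcell K j := by
      by_contra hc
      push Not at hc
      apply hne
      refine measure_mono_null (fun y hy => ?_) hb
      change R < |y|
      by_contra h'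
      exact hc y (not_lt.mp h') hy
    obtain ⟨y, hyR, hy⟩ := this
    have hy : ⌊(2 : ℝ) ^ K * wf r s I y⌋ = j := hy
    simp only [hG]
    rw [← hy]
    refine abs_floor_sub_le ?_
    rw [← mul_sub, wf_sub, abs_mul, abs_mul, abs_of_pos (by positivity : (0 : ℝ) < 2 ^ K)]
    have h1 := (hg.rt_bounds I).2
    rw [length_of_WL (Finsupp.mem_support_iff.mp hI)] at h1
    have h2 : |x0 - y| ≤ 2 * R := by
      refine (abs_sub _ _).trans ?_
      linarith [hg.x_le]
    have h3 : |rt r I| * |x0 - y| ≤ ρ1 ^ M * (2 * R) :=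
      mul_le_mul h1 h2 (abs_nonneg _) (pow_nonneg hg.ρ1_pos.le _)
    have h4 := mul_le_mul_of_nonneg_left h3 (by positivity : (0 : ℝ) ≤ 2 ^ K)
    push_cast
    linarith
  have hJ1 : J.mapDomain (fun x => G x.1) = a.mapDomain G := by
    rw [hJ, Finsupp.mapDomain_finsetSum]
    simp only [Finsupp.mapDomain_finsetSum, Finsupp.mapDomain_single]
    rw [Finsupp.mapDomain, Finsupp.sum]
    refine Finset.sum_congr rfl fun I _ => ?_
    rw [← Finsupp.single_finsetSum, ← Finset.mul_sum, hg.sum_dcell hb K I, mul_one]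
  have hJ2 : J.mapDomain Prod.snd = dlaw ν R K := by
    rw [hJ, Finsupp.mapDomain_finsetSum]
    simp only [Finsupp.mapDomain_finsetSum, Finsupp.mapDomain_single]
    rw [Finset.sum_comm, dlaw]
    refine Finset.sum_congr rfl fun j _ => ?_
    rw [← Finsupp.single_finsetSum, selfsim_iter hg.p_pos hν M (measurableSet_dcell K j), Ex_eq_sum]
  have hJP : IsP J := by
    refine ⟨fun x => ?_, ?_⟩
    · rw [hJ, Finsupp.finsetSum_apply]
      refine Finset.sum_nonneg fun I _ => ?_
      rw [Finsupp.finsetSum_apply]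
      refine Finset.sum_nonneg fun j _ => ?_
      rw [Finsupp.single_apply]
      split_ifs
      · exact mul_nonneg (haP.1 I) measureReal_nonneg
      · exact le_rfl
    · rw [← mass_mapDomain (fun x : List Λ × ℤ => G x.1), hJ1, mass_mapDomain, haP.2]
  have e1 := ent_map_le_of_near hJP (fun x => G x.1) Prod.snd id 1 hsupp
  have e2 := ent_map_le_of_near hJP Prod.snd (fun x => G x.1) id 1 (fun x hx => by
    rw [abs_sub_comm]; exact hsupp x hx)
  rw [hJ1, hJ2] at e1 e2
  rw [Hw, dlaw_ent hg hb]
  have h3 := logb_three_le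
  norm_num at e1 e2
  rw [abs_le]
  constructor <;> linarith

end

/-! ### Exact dimension and entropy dimension -/

section

variable {Λ : Type*} [Fintype Λ]
variable {ρ0 ρ1 R x0 : ℝ} {p r s : Λ → ℝ} {ν : Measure ℝ}

lemma tendsto_half_pow : Tendsto (fun j : ℕ => ((1 / 2 : ℝ)) ^ j) atTop (nhdsWithin 0 (Ioi 0)) := by
  rw [tendsto_nhdsWithin_iff]
  refine ⟨tendsto_pow_atTop_nhds_zero_of_lt_one (by norm_num) (by norm_num),
    Eventually.of_forall fun j => ?_⟩
  show (0 : ℝ) < (1 / 2) ^ j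
  positivity

lemma exactDim_nonneg [IsProbabilityMeasure ν] {α : ℝ} (h : ExactDim ν α) : 0 ≤ α := by
  obtain ⟨x, hx⟩ := h.exists
  have h1 := hx.comp tendsto_half_pow
  refine ge_of_tendsto' h1 fun j => ?_
  have a1 : Real.log (ν (Metric.ball x ((1 / 2 : ℝ) ^ j))).toReal ≤ 0 :=
    Real.log_nonpos ENNReal.toReal_nonneg (by
      rw [← ENNReal.toReal_one]
      exact ENNReal.toReal_mono ENNReal.one_ne_top prob_le_one)
  have a2 : Real.log ((1 / 2 : ℝ) ^ j) ≤ 0 :=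
    Real.log_nonpos (by positivity) (pow_le_one₀ (by norm_num) (by norm_num))
  exact div_nonneg_of_nonpos a1 a2

/-- The set of points whose dyadic balls have the expected measure from generation `j0` on. -/
def egorov (ν : Measure ℝ) (α ε : ℝ) (j0 : ℕ) : Set ℝ :=
  {x | ∀ j ≥ j0, 0 < ν.real (Metric.ball x ((1 / 2 : ℝ) ^ j)) ∧
    |Real.logb 2 (ν.real (Metric.ball x ((1 / 2 : ℝ) ^ j))) + j * α| ≤ j * ε}

/-- The sets on which the local dimension has converged up to `ε` exhaust almost all of the mass. -/
lemma exists_egorov [IsProbabilityMeasure ν] {α ε : ℝ} (h : ExactDim ν α) (hε : 0 < ε) :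
    ∃ j0, 1 - ε ≤ ν.real (egorov ν α ε j0) := by
  have hmono : Monotone (egorov ν α ε) := fun a b hab x hx j hj => hx j (hab.trans hj)
  have hfull : ν (⋃ j0, egorov ν α ε j0) = 1 := by
    refine (measure_congr (ae_eq_univ.mpr ?_)).trans measure_univ
    have hae : ∀ᵐ x ∂ν, x ∈ ⋃ j0, egorov ν α ε j0 := by
      filter_upwards [h, (Measure.support_mem_ae : ν.support ∈ ae ν)] with x hx hs
      have h1 := (hx.comp tendsto_half_pow).eventually (Metric.ball_mem_nhds α hε)
      obtain ⟨j0, hj0⟩ := eventually_atTop.mp h1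
      refine mem_iUnion.mpr ⟨j0 + 1, fun j hj => ?_⟩
      have hpos : 0 < ν (Metric.ball x ((1 / 2 : ℝ) ^ j)) :=
        (Measure.mem_support_iff_forall x).mp hs _ (Metric.ball_mem_nhds x (by positivity))
      have hpos' : 0 < ν.real (Metric.ball x ((1 / 2 : ℝ) ^ j)) :=
        ENNReal.toReal_pos hpos.ne' (measure_ne_top _ _)
      refine ⟨hpos', ?_⟩
      have h2 := hj0 j (by omega)
      rw [Real.dist_eq] at h2
      simp only [Function.comp] at h2
      change |Real.log (ν.real (Metric.ball x ((1 / 2 : ℝ) ^ j))) / Real.log ((1 / 2 : ℝ) ^ j) - α| < ε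
        at h2
      set y := ν.real (Metric.ball x ((1 / 2 : ℝ) ^ j))
      have hj' : (0 : ℝ) < j := by
        have : 0 < j := by omega
        exact_mod_cast this
      have e : Real.logb 2 y + j * α =
          -(j * (Real.log y / Real.log ((1 / 2 : ℝ) ^ j) - α)) := by
        rw [Real.log_pow, one_div, Real.log_inv, Real.logb]
        have := log2_pos.ne'
        field_simp
        ring
      rw [e, abs_neg, abs_mul, abs_of_pos hj']
      exact mul_le_mul_of_nonneg_left h2.le hj'.le
    exact hae
  have hlim := tendsto_measure_iUnion_atTop (μ := ν) hmono
  rw [hfull] at hlim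
  have hlim' := (ENNReal.tendsto_toReal ENNReal.one_ne_top).comp hlim
  rw [ENNReal.toReal_one] at hlim'
  obtain ⟨j0, hj0⟩ := (hlim'.eventually (le_mem_nhds (show 1 - ε < 1 by linarith))).exists
  exact ⟨j0, hj0⟩

lemma dcell_subset_ball {K : ℕ} {c : ℤ} {x : ℝ} (hx : x ∈ dcell K c) :
    dcell K c ⊆ Metric.ball x ((1 / 2 : ℝ) ^ K) := by
  intro y hy
  have hx : ⌊(2 : ℝ) ^ K * x⌋ = c := hx
  have hy : ⌊(2 : ℝ) ^ K * y⌋ = c := hy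
  have h2 : (0 : ℝ) < 2 ^ K := by positivity
  have := Int.abs_sub_lt_one_of_floor_eq_floor (hy.trans hx.symm)
  rw [← mul_sub, abs_mul, abs_of_pos h2] at this
  rw [Metric.mem_ball, Real.dist_eq, one_div, inv_pow, ← one_div, lt_div_iff₀ h2]
  linarith

lemma ball_subset_dcell {K : ℕ} {c : ℤ} {x : ℝ} (hx : x ∈ dcell K c) :
    Metric.ball x ((1 / 2 : ℝ) ^ K) ⊆ dcell K (c - 1) ∪ dcell K c ∪ dcell K (c + 1) := by
  intro y hy
  have hx : ⌊(2 : ℝ) ^ K * x⌋ = c := hx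
  have h2 : (0 : ℝ) < 2 ^ K := by positivity
  rw [Metric.mem_ball, Real.dist_eq, one_div, inv_pow, ← one_div, lt_div_iff₀ h2] at hy
  have h3 := abs_floor_sub_le (u := (2 : ℝ) ^ K * y) (v := 2 ^ K * x) (k := 1) (by
    rw [← mul_sub, abs_mul, abs_of_pos h2]; push_cast; linarith)
  rw [hx, abs_le] at h3
  have h4 : ⌊(2 : ℝ) ^ K * y⌋ = c - 1 ∨ ⌊(2 : ℝ) ^ K * y⌋ = c ∨ ⌊(2 : ℝ) ^ K * y⌋ = c + 1 := by
    push_cast at h3; omega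
  rcases h4 with h | h | h
  · exact Or.inl (Or.inl h)
  · exact Or.inl (Or.inr h)
  · exact Or.inr h

lemma sum_dcell_le_one [IsProbabilityMeasure ν] (K : ℕ) (T : Finset ℤ) {f : ℤ → ℤ}
    (hf : Function.Injective f) : ∑ c ∈ T, ν.real (dcell K (f c)) ≤ 1 := by
  rw [← measureReal_biUnion_finset]
  · exact measureReal_le_one
  · intro i _ j _ hij
    rw [Function.onFun, Set.disjoint_left]
    intro x hx hy
    have hx : ⌊(2 : ℝ) ^ K * x⌋ = f i := hx
    have hy : ⌊(2 : ℝ) ^ K * x⌋ = f j := hy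
    exact hij (hf (hx.symm.trans hy))
  · exact fun j _ => measurableSet_dcell K _

/-- Quantitative comparison of scale entropy and dimension. -/
lemma ent1_near (hg : Good ρ0 ρ1 R p r s x0) [IsProbabilityMeasure ν]
    (hν : ν {x | R < |x|} = 0) {α ε : ℝ} (hα0 : 0 ≤ α) (hα1 : α ≤ 1) (hε : 0 < ε) (hε1 : ε ≤ 1)
    {j0 : ℕ} (hE : 1 - ε ≤ ν.real (egorov ν α ε j0)) {K : ℕ} (hK : j0 ≤ K) :
    |ent1 ν K - α * K| ≤ 2 * ε * K + 5 + Real.logb 2 (2 * R + 5) := by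
  rw [dlaw_ent hg hν]
  set S := Finset.Icc (-(⌈(2 : ℝ) ^ K * R⌉ + 1)) (⌈(2 : ℝ) ^ K * R⌉ + 1) with hS
  set q : ℤ → ℝ := fun c => ν.real (dcell K c) with hq
  set d := dlaw ν R K with hd
  have hdP : IsP d := isP_dlaw hg hν K
  have hdq : ∀ c ∈ S, d c = q c := fun c hc => by rw [hd, dlaw_apply, if_pos hc]
  have hsub : d.support ⊆ S := by
    intro c hc
    by_contra hn
    rw [Finsupp.mem_support_iff, hd, dlaw_apply, if_neg hn] at hc
    exact hc rfl
  have hq0 : ∀ c, 0 ≤ q c := fun c => measureReal_nonneg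
  have hq1 : ∀ c, q c ≤ 1 := fun c => measureReal_le_one
  have hsum : ∑ c ∈ S, q c = 1 := by
    have := hdP.2
    rw [mass_eq_sum_of_subset d hsub] at this
    rw [← this]
    exact Finset.sum_congr rfl fun c hc => (hdq c hc).symm
  -- cells meeting the set of typical points
  set T := S.filter fun c => (dcell K c ∩ egorov ν α ε j0).Nonempty with hT
  have hTS : T ⊆ S := Finset.filter_subset _ _
  have hTsum : 1 - ε ≤ ∑ c ∈ T, q c := by
    have h1 : ν.real (egorov ν α ε j0) ≤ ν.real ({x | R < |x|} ∪ ⋃ c ∈ T, dcell K c) := by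
      refine measureReal_mono fun x hx => ?_
      by_cases hxR : R < |x|
      · exact Or.inl hxR
      · right
        simp only [mem_iUnion]
        refine ⟨⌊(2 : ℝ) ^ K * x⌋, ?_, rfl⟩
        rw [hT, Finset.mem_filter]
        refine ⟨?_, x, rfl, hx⟩
        have h2 : (0 : ℝ) < 2 ^ K := by positivity
        have hw := abs_le.mp (not_lt.mp hxR)
        have h3 := Int.le_ceil ((2 : ℝ) ^ K * R)
        have h4 := mul_le_mul_of_nonneg_left hw.1 h2.le
        have h5 := mul_le_mul_of_nonneg_left hw.2 h2.le
        have h6 := Int.floor_le ((2 : ℝ) ^ K * x)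
        have h7 := Int.lt_floor_add_one ((2 : ℝ) ^ K * x)
        rw [hS, Finset.mem_Icc]
        constructor
        · have : (-(⌈(2 : ℝ) ^ K * R⌉ + 1) : ℝ) ≤ ⌊(2 : ℝ) ^ K * x⌋ := by linarith
          exact_mod_cast this
        · have : (⌊(2 : ℝ) ^ K * x⌋ : ℝ) ≤ ⌈(2 : ℝ) ^ K * R⌉ + 1 := by linarith
          exact_mod_cast this
    have h2 : ν.real {x | R < |x|} = 0 := by rw [measureReal_def, hν]; simp
    have h3 := measureReal_union_le (μ := ν) {x | R < |x|} (⋃ c ∈ T, dcell K c)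
    have h4 := measureReal_biUnion_finset_le (μ := ν) T (dcell K)
    linarith
  have hK0 : (0 : ℝ) ≤ K := Nat.cast_nonneg K
  have hTlow : ∀ c ∈ T, K * (α - ε) * q c ≤ Real.negMulLog (q c) / Real.log 2 := by
    intro c hc
    obtain ⟨x, hxc, hxE⟩ := (Finset.mem_filter.mp hc).2
    obtain ⟨a1, a2⟩ := hxE K hK
    rcases (hq0 c).eq_or_lt with h | h
    · rw [← h]; simp
    · have a3 : Real.logb 2 (q c) ≤ Real.logb 2 (ν.real (Metric.ball x ((1 / 2 : ℝ) ^ K))) :=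
        Real.logb_le_logb_of_le (by norm_num) h (measureReal_mono (dcell_subset_ball hxc))
      have a4 : K * (α - ε) ≤ -Real.logb 2 (q c) := by linarith [(abs_le.mp a2).2]
      have e : Real.negMulLog (q c) / Real.log 2 = -Real.logb 2 (q c) * q c := by
        rw [Real.negMulLog, Real.logb]; ring
      rw [e]
      exact mul_le_mul_of_nonneg_right a4 h.le
  have hlow : α * K - 2 * ε * K ≤ ent d := by
    have hnn := hdP.ent_nonneg
    by_cases hαε : α < ε
    · have : α * K ≤ ε * K := mul_le_mul_of_nonneg_right hαε.le hK0
      have : 0 ≤ ε * K := by positivity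
      linarith
    · have b1 : ∑ c ∈ T, K * (α - ε) * q c ≤ ent d := by
        rw [ent_eq_of_subset d hsub, Finset.sum_div]
        refine (Finset.sum_le_sum hTlow).trans ?_
        have : ∑ c ∈ S, Real.negMulLog (d c) / Real.log 2 =
            ∑ c ∈ S, Real.negMulLog (q c) / Real.log 2 :=
          Finset.sum_congr rfl fun c hc => by rw [hdq c hc]
        rw [this]
        exact Finset.sum_le_sum_of_subset_of_nonneg hTS fun c _ _ =>
          div_nonneg (Real.negMulLog_nonneg (hq0 c) (hq1 c)) log2_pos.le
      rw [← Finset.mul_sum] at b1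
      have b2 := mul_le_mul_of_nonneg_left hTsum
        (mul_nonneg hK0 (show 0 ≤ α - ε by linarith))
      have b3 : K * ε * (α - ε) ≤ K * ε * 1 :=
        mul_le_mul_of_nonneg_left (by linarith) (by positivity)
      linarith
  -- the upper bound, by comparison with a smoothed distribution
  set g : ℤ → ℝ := fun c => (q (c - 1) + q c + q (c + 1)) / 6 + 1 / (2 * (S.card : ℝ)) with hgdef
  have hScard : (0 : ℝ) < S.card := by
    have : S.Nonempty := by
      by_contra h
      rw [Finset.not_nonempty_iff_eq_empty.mp h] at hsum
      simp at hsum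
    exact_mod_cast this.card_pos
  have hg0 : ∀ c ∈ S, 0 < g c := by
    intro c _
    have h1 := hq0 (c - 1); have h2 := hq0 c; have h3 := hq0 (c + 1)
    have : (0 : ℝ) < 1 / (2 * (S.card : ℝ)) := by positivity
    simp only [hgdef]
    linarith
  have hg1 : ∑ c ∈ S, g c ≤ 1 := by
    simp only [hgdef]
    rw [Finset.sum_add_distrib, ← Finset.sum_div, Finset.sum_add_distrib, Finset.sum_add_distrib,
      Finset.sum_const, nsmul_eq_mul]
    have h1 := sum_dcell_le_one (ν := ν) K S (f := fun c => c - 1) (sub_left_injective)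
    have h2 := sum_dcell_le_one (ν := ν) K S (f := fun c => c + 1) (add_left_injective 1)
    have h3 : (S.card : ℝ) * (1 / (2 * (S.card : ℝ))) = 1 / 2 := by field_simp
    rw [h3, hsum]
    simp only [hq]
    linarith
  have hgibbs := ent_gibbs hdP hsub hg0 hg1
  have hcard : Real.logb 2 (2 * S.card) ≤ K + 1 + Real.logb 2 (2 * R + 5) := by
    have c1 : (S.card : ℝ) ≤ 2 ^ K * (2 * R + 5) := by
      have hR : 0 ≤ (2 : ℝ) ^ K * R := by have := hg.R_pos; positivity
      have c0 : (0 : ℤ) ≤ ⌈(2 : ℝ) ^ K * R⌉ := Int.ceil_nonneg hR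
      have c2 : (S.card : ℤ) = 2 * ⌈(2 : ℝ) ^ K * R⌉ + 3 := by
        rw [hS, Int.card_Icc, Int.toNat_of_nonneg (by linarith)]; ring
      have c3 : (S.card : ℝ) = 2 * ⌈(2 : ℝ) ^ K * R⌉ + 3 := by exact_mod_cast c2
      have c4 := Int.ceil_lt_add_one ((2 : ℝ) ^ K * R)
      have c5 : (1 : ℝ) ≤ 2 ^ K := one_le_pow₀ (by norm_num)
      linarith
    have hR := hg.R_pos
    have c6 : Real.logb 2 (2 * S.card) ≤ Real.logb 2 (2 ^ (K + 1) * (2 * R + 5)) :=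
      Real.logb_le_logb_of_le (by norm_num) (by positivity) (by rw [pow_succ]; linarith)
    have e : Real.logb 2 (2 ^ (K + 1) * (2 * R + 5)) = (K + 1) + Real.logb 2 (2 * R + 5) := by
      rw [Real.logb_mul (by positivity) (by positivity), Real.logb_pow,
        Real.logb_self_eq_one (by norm_num)]
      push_cast
      ring
    linarith
  have hC : 0 ≤ Real.logb 2 (2 * R + 5) :=
    Real.logb_nonneg (by norm_num) (by linarith [hg.R_pos])
  have hTup : ∀ c ∈ S, d c * (-Real.logb 2 (g c)) ≤
      q c * (K * (α + ε) + 3) + (if c ∈ T then 0 else q c * (K + 1 + Real.logb 2 (2 * R + 5))) := by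
    intro c hc
    rw [hdq c hc]
    have h1 := hq0 (c - 1); have h2 := hq0 c; have h3 := hq0 (c + 1)
    have hpos : (0 : ℝ) < 1 / (2 * (S.card : ℝ)) := by positivity
    split_ifs with hcT
    · rw [add_zero]
      refine mul_le_mul_of_nonneg_left ?_ h2
      obtain ⟨x, hxc, hxE⟩ := (Finset.mem_filter.mp hcT).2
      obtain ⟨a1, a2⟩ := hxE K hK
      set y := ν.real (Metric.ball x ((1 / 2 : ℝ) ^ K)) with hy
      have a3 : y ≤ q (c - 1) + q c + q (c + 1) := by
        refine (measureReal_mono (ball_subset_dcell hxc)).trans ?_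
        refine (measureReal_union_le _ _).trans ?_
        have := measureReal_union_le (μ := ν) (dcell K (c - 1)) (dcell K c)
        simp only [hq]
        linarith
      have a4 : Real.logb 2 (y / 2 ^ 3) ≤ Real.logb 2 (g c) :=
        Real.logb_le_logb_of_le (by norm_num) (by positivity) (by simp only [hgdef]; linarith)
      rw [Real.logb_div a1.ne' (by norm_num), Real.logb_pow,
        Real.logb_self_eq_one (by norm_num)] at a4
      push_cast at a4
      linarith [(abs_le.mp a2).1]
    · rw [← mul_add]
      refine mul_le_mul_of_nonneg_left ?_ h2
      have a4 : Real.logb 2 (1 / (2 * (S.card : ℝ))) ≤ Real.logb 2 (g c) :=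
        Real.logb_le_logb_of_le (by norm_num) hpos (by simp only [hgdef]; linarith)
      rw [one_div, Real.logb_inv] at a4
      have : 0 ≤ K * (α + ε) := by positivity
      linarith
  have hup : ent d ≤ K * (α + ε) + 3 + ε * (K + 1 + Real.logb 2 (2 * R + 5)) := by
    refine hgibbs.trans ((Finset.sum_le_sum hTup).trans ?_)
    rw [Finset.sum_add_distrib, ← Finset.sum_mul, hsum, one_mul]
    refine add_le_add_right ?_ _
    have e : ∑ c ∈ S, (if c ∈ T then 0 else q c * (K + 1 + Real.logb 2 (2 * R + 5))) =
        (∑ c ∈ S \ T, q c) * (K + 1 + Real.logb 2 (2 * R + 5)) := by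
      rw [Finset.sum_mul, ← Finset.filter_notMem_eq_sdiff, Finset.sum_filter]
      refine Finset.sum_congr rfl fun c _ => ?_
      by_cases hcT : c ∈ T <;> simp [hcT]
    rw [e]
    refine mul_le_mul_of_nonneg_right ?_ (by linarith)
    have := Finset.sum_sdiff hTS (f := q)
    linarith
  have hlast : ε * (1 + Real.logb 2 (2 * R + 5)) ≤ 1 * (1 + Real.logb 2 (2 * R + 5)) :=
    mul_le_mul_of_nonneg_right hε1 (by linarith)
  rw [abs_le]
  constructor <;> linarith

/-- For an exact dimensional self-similar measure the normalized scale entropies converge to the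
dimension. -/
theorem ent1_tendsto (hg : Good ρ0 ρ1 R p r s x0) [IsProbabilityMeasure ν]
    (hν : ν {x | R < |x|} = 0) {α : ℝ} (h : ExactDim ν α) (hα1 : α ≤ 1) :
    Tendsto (fun j : ℕ => ent1 ν j / j) atTop (nhds α) := by
  have hα0 := exactDim_nonneg h
  rw [Metric.tendsto_atTop]
  intro e he
  set ε := min (e / 8) 1 with hεd
  have hε : 0 < ε := lt_min (by linarith) one_pos
  have hε1 : ε ≤ 1 := min_le_right _ _
  have hε2 : ε ≤ e / 8 := min_le_left _ _
  obtain ⟨j0, hj0⟩ := exists_egorov h hε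
  obtain ⟨N, hN⟩ := exists_nat_ge (2 * (5 + Real.logb 2 (2 * R + 5)) / e)
  refine ⟨j0 + N + 1, fun j hj => ?_⟩
  have hj' : (0 : ℝ) < j := by
    have : 0 < j := by omega
    exact_mod_cast this
  have hjN : (N : ℝ) ≤ j := by
    have : N ≤ j := by omega
    exact_mod_cast this
  have h1 := ent1_near hg hν hα0 hα1 hε hε1 hj0 (show j0 ≤ j by omega)
  have h2 := hN.trans hjN
  rw [div_le_iff₀ he] at h2
  rw [Real.dist_eq]
  have e1 : ent1 ν j / j - α = (ent1 ν j - α * j) / j := by field_simp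
  rw [e1, abs_div, abs_of_pos hj', div_lt_iff₀ hj']
  have h3 : ε * j ≤ e / 8 * j := mul_le_mul_of_nonneg_right hε2 hj'.le
  have h4 : 0 < e * j := by positivity
  linarith

end

/-! ### Dependence on the parameter -/

section

variable {Λ : Type*}

/-- Uniform bounds, on a set `N` of parameters, for a family of affine systems: contraction ratios
in `[ρ0, ρ1]`, bounded translations, and coefficients that are `ℓ`-Lipschitz in the parameter. -/
structure Loc (ρ0 ρ1 R ℓ : ℝ) (r s : Λ → ℝ → ℝ) (N : Set ℝ) : Prop where
  ρ0_pos : 0 < ρ0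
  ρ1_pos : 0 < ρ1
  ρ1_lt : ρ1 < 1
  R_pos : 1 ≤ R
  ℓ_nonneg : 0 ≤ ℓ
  r_ge : ∀ t ∈ N, ∀ i, ρ0 ≤ |r i t|
  r_le : ∀ t ∈ N, ∀ i, |r i t| ≤ ρ1
  s_le : ∀ t ∈ N, ∀ i, |s i t| ≤ (1 - ρ1) * R
  r_lip : ∀ t ∈ N, ∀ u ∈ N, ∀ i, |r i t - r i u| ≤ ℓ * |t - u|
  s_lip : ∀ t ∈ N, ∀ u ∈ N, ∀ i, |s i t - s i u| ≤ ℓ * |t - u|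

/-- Uniform bounds on contraction ratios, translations and their Lipschitz constants hold near
every parameter. -/
lemma exists_loc [Fintype Λ] [Nonempty Λ] {a b : ℝ} {r s : Λ → ℝ → ℝ}
    (hcontr : ∀ i, ∀ t ∈ Ioo a b, 0 < |r i t| ∧ |r i t| < 1)
    (hC2 : ∀ i, ContDiffOn ℝ 2 (r i) (Ioo a b) ∧ ContDiffOn ℝ 2 (s i) (Ioo a b))
    {t0 : ℝ} (ht0 : t0 ∈ Ioo a b) :
    ∃ ρ0 ρ1 R ℓ η : ℝ, 0 < η ∧ Metric.ball t0 η ⊆ Ioo a b ∧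
      Loc ρ0 ρ1 R ℓ r s (Metric.ball t0 η) := by
  have hnb : Ioo a b ∈ nhds t0 := isOpen_Ioo.mem_nhds ht0
  have hr : ∀ i, ContDiffAt ℝ 1 (r i) t0 := fun i =>
    ((hC2 i).1.contDiffAt hnb).of_le (by norm_num)
  have hs : ∀ i, ContDiffAt ℝ 1 (s i) t0 := fun i =>
    ((hC2 i).2.contDiffAt hnb).of_le (by norm_num)
  choose Kr Ur hUr hLr using fun i => (hr i).exists_lipschitzOnWith
  choose Ks Us hUs hLs using fun i => (hs i).exists_lipschitzOnWith
  obtain ⟨i0, hi0⟩ := Finite.exists_min fun i => |r i t0|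
  obtain ⟨i1, hi1⟩ := Finite.exists_max fun i => |r i t0|
  obtain ⟨i2, hi2⟩ := Finite.exists_max fun i => |s i t0|
  have b0 := (hcontr i0 t0 ht0).1
  have b1 := hcontr i1 t0 ht0
  set ρ1 := (1 + |r i1 t0|) / 2 with hρ1
  set R := (|s i2 t0| + 1) / (1 - ρ1) with hR
  have hρ1' : 0 < 1 - ρ1 := by rw [hρ1]; linarith [b1.2]
  have hRm : (1 - ρ1) * R = |s i2 t0| + 1 := by rw [hR]; field_simp
  have ev : ∀ᶠ t in nhds t0, t ∈ Ioo a b ∧ ∀ i, (|r i0 t0| / 2 ≤ |r i t| ∧ |r i t| ≤ ρ1 ∧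
      |s i t| ≤ (1 - ρ1) * R) ∧ t ∈ Ur i ∧ t ∈ Us i := by
    refine (eventually_mem_set.mpr hnb).and (eventually_all.mpr fun i => ?_)
    have cr : Tendsto (fun t => |r i t|) (nhds t0) (nhds (|r i t0|)) :=
      (hr i).continuousAt.abs
    have cs : Tendsto (fun t => |s i t|) (nhds t0) (nhds (|s i t0|)) :=
      (hs i).continuousAt.abs
    have c1 := hi0 i; have c2 := hi1 i; have c3 := hi2 i
    refine (Eventually.and ?_ (Eventually.and ?_ ?_)).and
      ((eventually_mem_set.mpr (hUr i)).and (eventually_mem_set.mpr (hUs i)))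
    · exact cr.eventually (le_mem_nhds (by linarith))
    · exact cr.eventually (ge_mem_nhds (by rw [hρ1]; linarith))
    · exact cs.eventually (ge_mem_nhds (by rw [hRm]; linarith))
  obtain ⟨η, hη, hball⟩ := Metric.eventually_nhds_iff_ball.mp ev
  have hℓ : ∀ i, ((Kr i : ℝ) ≤ ∑ i, ((Kr i : ℝ) + Ks i)) ∧ ((Ks i : ℝ) ≤ ∑ i, ((Kr i : ℝ) + Ks i)) := by
    intro i
    have := Finset.single_le_sum (f := fun i => (Kr i : ℝ) + Ks i) (fun i _ => by positivity)
      (Finset.mem_univ i)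
    have h1 : (0 : ℝ) ≤ Kr i := (Kr i).2
    have h2 : (0 : ℝ) ≤ Ks i := (Ks i).2
    constructor <;> linarith
  refine ⟨|r i0 t0| / 2, ρ1, R, ∑ i, ((Kr i : ℝ) + Ks i), η, hη, fun t ht => (hball t ht).1,
    by linarith, by rw [hρ1]; linarith [b1.1], by linarith, ?_,
    Finset.sum_nonneg fun i _ => by positivity, fun t ht i => ((hball t ht).2 i).1.1,
    fun t ht i => ((hball t ht).2 i).1.2.1, fun t ht i => ((hball t ht).2 i).1.2.2, ?_, ?_⟩
  · rw [hR, le_div_iff₀ hρ1']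
    have : 0 ≤ |s i2 t0| := abs_nonneg _
    have : 0 ≤ ρ1 := by rw [hρ1]; linarith [b1.1]
    linarith
  · intro t ht u hu i
    have := (hLr i).dist_le_mul t ((hball t ht).2 i).2.1 u ((hball u hu).2 i).2.1
    rw [Real.dist_eq, Real.dist_eq] at this
    exact this.trans (mul_le_mul_of_nonneg_right (hℓ i).1 (abs_nonneg _))
  · intro t ht u hu i
    have := (hLs i).dist_le_mul t ((hball t ht).2 i).2.2 u ((hball u hu).2 i).2.2
    rw [Real.dist_eq, Real.dist_eq] at this
    exact this.trans (mul_le_mul_of_nonneg_right (hℓ i).2 (abs_nonneg _))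

variable {ρ0 ρ1 R ℓ : ℝ} {r s : Λ → ℝ → ℝ} {N : Set ℝ}

lemma Loc.term_le (h : Loc ρ0 ρ1 R ℓ r s N) {t : ℝ} (ht : t ∈ N) (x : ℕ → Λ) (n : ℕ) :
    ‖(∏ k ∈ Finset.range n, r (x k) t) * s (x n) t‖ ≤ ρ1 ^ n * ((1 - ρ1) * R) := by
  rw [norm_mul, Real.norm_eq_abs, Real.norm_eq_abs]
  refine mul_le_mul ?_ (h.s_le t ht _) (abs_nonneg _) (pow_nonneg h.ρ1_pos.le _)
  rw [Finset.abs_prod]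
  calc ∏ k ∈ Finset.range n, |r (x k) t| ≤ ∏ k ∈ Finset.range n, ρ1 :=
        Finset.prod_le_prod (fun _ _ => abs_nonneg _) fun _ _ => h.r_le t ht _
    _ = ρ1 ^ n := by simp

lemma Loc.hasSum (h : Loc ρ0 ρ1 R ℓ r s N) :
    HasSum (fun n : ℕ => ρ1 ^ n * ((1 - ρ1) * R)) R := by
  have := (hasSum_geometric_of_lt_one h.ρ1_pos.le h.ρ1_lt).mul_right ((1 - ρ1) * R)
  have h1 : 1 - ρ1 ≠ 0 := by linarith [h.ρ1_lt]
  rwa [← mul_assoc, inv_mul_cancel₀ h1, one_mul] at this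

lemma Loc.abs_coding (h : Loc ρ0 ρ1 R ℓ r s N) {t : ℝ} (ht : t ∈ N) (x : ℕ → Λ) :
    |codingPoint r s x t| ≤ R :=
  tsum_of_norm_bounded h.hasSum (h.term_le ht x)

lemma Loc.coding_cons (h : Loc ρ0 ρ1 R ℓ r s N) {t : ℝ} (ht : t ∈ N) (x : ℕ → Λ) :
    codingPoint r s x t = r (x 0) t * codingPoint r s (fun k => x (k + 1)) t + s (x 0) t := by
  have hsum : Summable fun n : ℕ => (∏ k ∈ Finset.range n, r (x k) t) * s (x n) t :=
    Summable.of_norm_bounded h.hasSum.summable (h.term_le ht x)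
  rw [codingPoint, hsum.tsum_eq_zero_add, codingPoint, ← tsum_mul_left]
  simp only [Finset.range_zero, Finset.prod_empty, one_mul]
  rw [add_comm]
  congr 1
  refine tsum_congr fun n => ?_
  rw [Finset.prod_range_succ', ← mul_assoc, mul_comm (r (x 0) t)]

/-- Coding points are Lipschitz in the parameter, uniformly over sequences. -/
lemma Loc.coding_lip (h : Loc ρ0 ρ1 R ℓ r s N) {t u : ℝ} (ht : t ∈ N) (hu : u ∈ N) (x : ℕ → Λ) :
    |codingPoint r s x t - codingPoint r s x u| ≤ ℓ * (1 + R) / (1 - ρ1) * |t - u| := by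
  have h1 : 0 < 1 - ρ1 := by linarith [h.ρ1_lt]
  set E := ℓ * (1 + R) / (1 - ρ1) * |t - u| with hE
  have hE1 : (1 - ρ1) * E = ℓ * (1 + R) * |t - u| := by rw [hE]; field_simp
  have hR := h.R_pos
  have hE0 : 0 ≤ E := by
    have := h.ℓ_nonneg; positivity
  have step : ∀ k : ℕ, ∀ x : ℕ → Λ,
      |codingPoint r s x t - codingPoint r s x u| ≤ ρ1 ^ k * (2 * R) + E := by
    intro k
    induction k with
    | zero =>
      intro x
      have := abs_sub (codingPoint r s x t) (codingPoint r s x u)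
      have a1 := h.abs_coding ht x
      have a2 := h.abs_coding hu x
      rw [pow_zero]; linarith
    | succ k ih =>
      intro x
      rw [h.coding_cons ht, h.coding_cons hu]
      set A := codingPoint r s (fun k => x (k + 1)) t
      set B := codingPoint r s (fun k => x (k + 1)) u
      have e : r (x 0) t * A + s (x 0) t - (r (x 0) u * B + s (x 0) u) =
        r (x 0) t * (A - B) + (r (x 0) t - r (x 0) u) * B + (s (x 0) t - s (x 0) u) := by ring
      rw [e]
      refine (abs_add_three _ _ _).trans ?_
      rw [abs_mul, abs_mul]
      have c1 : |r (x 0) t| * |A - B| ≤ ρ1 * (ρ1 ^ k * (2 * R) + E) :=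
        mul_le_mul (h.r_le t ht _) (ih _) (abs_nonneg _) h.ρ1_pos.le
      have c2 : |r (x 0) t - r (x 0) u| * |B| ≤ ℓ * |t - u| * R :=
        mul_le_mul (h.r_lip t ht u hu _) (h.abs_coding hu _) (abs_nonneg _)
          (mul_nonneg h.ℓ_nonneg (abs_nonneg _))
      have c3 := h.s_lip t ht u hu (x 0)
      rw [pow_succ']
      nlinarith
  have hlim : Tendsto (fun k : ℕ => ρ1 ^ k * (2 * R) + E) atTop (nhds (0 * (2 * R) + E)) :=
    ((tendsto_pow_atTop_nhds_zero_of_lt_one h.ρ1_pos.le h.ρ1_lt).mul_const _).add_const _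
  rw [zero_mul, zero_add] at hlim
  exact ge_of_tendsto' hlim fun k => step k x

/-- The infinite sequence `I i i i …`. -/
def extSeq (i : Λ) (I : List Λ) : ℕ → Λ := fun k => I.getD k i

lemma Loc.wf_eq (h : Loc ρ0 ρ1 R ℓ r s N) {t : ℝ} (ht : t ∈ N) (i : Λ) (I : List Λ) :
    wf (fun j => r j t) (fun j => s j t) I (codingPoint r s (extSeq i []) t) =
      codingPoint r s (extSeq i I) t := by
  induction I with
  | nil => rfl
  | cons j I ih =>
    rw [wf_cons, ih, h.coding_cons ht (extSeq i (j :: I))]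
    rfl

lemma Loc.good [Fintype Λ] (h : Loc ρ0 ρ1 R ℓ r s N) {t : ℝ} (ht : t ∈ N) {p : Λ → ℝ} (hp : ∀ i, 0 < p i)
    (hp1 : ∑ i, p i = 1) (x : ℕ → Λ) :
    Good ρ0 ρ1 R p (fun j => r j t) (fun j => s j t) (codingPoint r s x t) :=
  ⟨hp, hp1, h.ρ0_pos, h.ρ1_pos, h.ρ1_lt, h.r_ge t ht, h.r_le t ht, h.R_pos, h.s_le t ht,
    h.abs_coding ht x⟩

lemma seqDist_ext (i : Λ) {I J : List Λ} {n : ℕ} (hI : I.length = n) (hJ : J.length = n)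
    (hne : I ≠ J) : extSeq i I ≠ extSeq i J ∧ (2 : ℝ) ^ (-(n : ℝ)) ≤ seqDist (extSeq i I) (extSeq i J) := by
  have hex : ∃ k < n, extSeq i I k ≠ extSeq i J k := by
    by_contra hcon
    push Not at hcon
    refine hne (List.ext_getElem (by omega) fun k h1 h2 => ?_)
    have := hcon k (by omega)
    simpa [extSeq, List.getD_eq_getElem, h1, h2] using this
  obtain ⟨k, hk, hkne⟩ := hex
  have hne' : extSeq i I ≠ extSeq i J := fun e => hkne (by rw [e])
  refine ⟨hne', ?_⟩
  rw [seqDist, if_neg hne', ← Real.rpow_intCast]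
  refine Real.rpow_le_rpow_of_exponent_le (by norm_num) ?_
  have : sInf {k : ℕ | extSeq i I k ≠ extSeq i J k} ≤ n :=
    (Nat.sInf_le (show k ∈ {k : ℕ | extSeq i I k ≠ extSeq i J k} from hkne)).trans hk.le
  push_cast
  have : ((sInf {k : ℕ | extSeq i I k ≠ extSeq i J k} : ℕ) : ℝ) ≤ n := by exact_mod_cast this
  linarith

end

/-! ### Transversality and the comparison of entropies -/

section

variable {Λ : Type*}

lemma mvt_lower {f : ℝ → ℝ} {a b D : ℝ} (hD : 0 < D) (h : ∀ u ∈ uIcc a b, D ≤ |deriv f u|) :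
    D * |b - a| ≤ |f b - f a| := by
  wlog hab : a < b generalizing a b with H
  · rcases eq_or_lt_of_le (not_lt.mp hab) with e | e
    · simp [e]
    · rw [abs_sub_comm b a, abs_sub_comm (f b)]
      exact H (by rwa [uIcc_comm]) e
  rw [uIcc_of_le hab.le] at h
  have hdiff : ∀ u ∈ Icc a b, DifferentiableAt ℝ f u := fun u hu =>
    differentiableAt_of_deriv_ne_zero fun e => by
      have := h u hu
      rw [e, abs_zero] at this
      linarith
  obtain ⟨c, hc, e⟩ := exists_deriv_eq_slope f hab
    (fun u hu => (hdiff u hu).continuousAt.continuousWithinAt)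
    (fun u hu => (hdiff u (Ioo_subset_Icc_self hu)).differentiableWithinAt)
  have h1 := h c (Ioo_subset_Icc_self hc)
  have hpos : 0 < |b - a| := abs_pos.mpr (by linarith)
  rwa [e, abs_div, le_div_iff₀ hpos] at h1

variable {ρ0 ρ1 R ℓ : ℝ} {r s : Λ → ℝ → ℝ} {N : Set ℝ}

/-- Transversality: two words of length `n` whose coding points are very close at `t0` are
separated at `t`, at a rate proportional to `|t - t0|`. -/
lemma Loc.separation (h : Loc ρ0 ρ1 R ℓ r s N) (hN : N.OrdConnected) {Cβ β : ℝ} (hC : 0 < Cβ)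
    (hβ : 0 ≤ β)
    (htr : ∀ t ∈ N, ∀ x y : ℕ → Λ, x ≠ y →
      |codingPoint r s x t - codingPoint r s y t| ≤ Cβ * seqDist x y ^ β →
      Cβ * seqDist x y ^ β ≤ |deriv (fun u => codingPoint r s x u - codingPoint r s y u) t|)
    {t t0 : ℝ} (ht : t ∈ N) (ht0 : t0 ∈ N) (i : Λ) {I J : List Λ} {n : ℕ} (hI : I.length = n)
    (hJ : J.length = n) (hne : I ≠ J) {e : ℝ}
    (he : |codingPoint r s (extSeq i I) t0 - codingPoint r s (extSeq i J) t0| ≤ e)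
    (h1 : e + 2 * (ℓ * (1 + R) / (1 - ρ1)) * |t - t0| ≤ Cβ * ((2 : ℝ) ^ (-(n : ℝ))) ^ β) :
    Cβ * ((2 : ℝ) ^ (-(n : ℝ))) ^ β * |t - t0| - e ≤
      |codingPoint r s (extSeq i I) t - codingPoint r s (extSeq i J) t| := by
  obtain ⟨hne', hdist⟩ := seqDist_ext i hI hJ hne
  set x := extSeq i I
  set y := extSeq i J
  set L := ℓ * (1 + R) / (1 - ρ1) with hL
  have hL0 : 0 ≤ L := by
    have := h.ℓ_nonneg; have := h.R_pos; have := h.ρ1_lt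
    exact div_nonneg (by positivity) (by linarith)
  set D := Cβ * ((2 : ℝ) ^ (-(n : ℝ))) ^ β with hD
  have hDD : D ≤ Cβ * seqDist x y ^ β :=
    mul_le_mul_of_nonneg_left (Real.rpow_le_rpow (by positivity) hdist hβ) hC.le
  have hder : ∀ u ∈ uIcc t0 t,
      D ≤ |deriv (fun u => codingPoint r s x u - codingPoint r s y u) u| := by
    intro u hu
    have huN : u ∈ N := hN.uIcc_subset ht0 ht hu
    refine hDD.trans (htr u huN x y hne' (le_trans ?_ hDD))
    have a1 := h.coding_lip huN ht0 x
    have a2 := h.coding_lip huN ht0 y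
    have a3 : |u - t0| ≤ |t - t0| := abs_sub_left_of_mem_uIcc hu
    rw [← hL] at a1 a2
    have a4 : L * |u - t0| ≤ L * |t - t0| := mul_le_mul_of_nonneg_left a3 hL0
    have e1 : codingPoint r s x u - codingPoint r s y u =
      (codingPoint r s x u - codingPoint r s x t0) - (codingPoint r s y u - codingPoint r s y t0) +
      (codingPoint r s x t0 - codingPoint r s y t0) := by ring
    rw [e1]
    refine (abs_add_le _ _).trans ?_
    have := abs_sub (codingPoint r s x u - codingPoint r s x t0)
      (codingPoint r s y u - codingPoint r s y t0)
    linarith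
  have hm := mvt_lower (by positivity) hder
  have := abs_sub (codingPoint r s x t - codingPoint r s y t)
    (codingPoint r s x t0 - codingPoint r s y t0)
  linarith

variable [Fintype Λ] {p : Λ → ℝ}

/-- Entropies of nearby self-similar measures at a fixed scale are close. -/
lemma Loc.ent_close (h : Loc ρ0 ρ1 R ℓ r s N) (hp : ∀ i, 0 < p i) (hp1 : ∑ i, p i = 1)
    {t t0 : ℝ} (ht : t ∈ N) (ht0 : t0 ∈ N) (i : Λ) {Hb Hb0 : ℕ → ℝ}
    (hl : Link p (fun j => r j t) (fun j => s j t) (codingPoint r s (extSeq i []) t) Hb)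
    (hl0 : Link p (fun j => r j t0) (fun j => s j t0) (codingPoint r s (extSeq i []) t0) Hb0)
    {u : ℕ} (hu : 2 ^ u * (ℓ * (1 + R) / (1 - ρ1) * |t - t0|) ≤ 1) : |Hb u - Hb0 u| ≤ 10 := by
  obtain ⟨M1, h1⟩ := hl u
  obtain ⟨M2, h2⟩ := hl0 u
  have a1 := h1 (max M1 M2) (le_max_left _ _)
  have a2 := h2 (max M1 M2) (le_max_right _ _)
  set M := max M1 M2
  have hlog : Real.logb 2 (2 * ((2 : ℕ) : ℝ) + 1) ≤ 3 := by
    rw [Real.logb_le_iff_le_rpow (by norm_num) (by positivity)]; norm_num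
  have hP : IsP (WL p M) := isP_WL hp hp1 M
  have near : ∀ I : List Λ,
      |(2 : ℝ) ^ u * codingPoint r s (extSeq i I) t - 2 ^ u * codingPoint r s (extSeq i I) t0| ≤ 1 := by
    intro I
    rw [← mul_sub, abs_mul, abs_of_pos (by positivity)]
    exact (mul_le_mul_of_nonneg_left (h.coding_lip ht ht0 _) (by positivity)).trans hu
  have b1 : Hw p (fun j => r j t) (fun j => s j t) (codingPoint r s (extSeq i []) t) M u ≤
      Hw p (fun j => r j t0) (fun j => s j t0) (codingPoint r s (extSeq i []) t0) M u +
        Real.logb 2 (2 * ((2 : ℕ) : ℝ) + 1) := by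
    refine ent_floor_le hP 1 0 2 fun I _ => ?_
    rw [h.wf_eq ht, h.wf_eq ht0, one_mul, add_zero, abs_one]
    have := near I
    push_cast
    linarith
  have b2 : Hw p (fun j => r j t0) (fun j => s j t0) (codingPoint r s (extSeq i []) t0) M u ≤
      Hw p (fun j => r j t) (fun j => s j t) (codingPoint r s (extSeq i []) t) M u +
        Real.logb 2 (2 * ((2 : ℕ) : ℝ) + 1) := by
    refine ent_floor_le hP 1 0 2 fun I _ => ?_
    rw [h.wf_eq ht, h.wf_eq ht0, one_mul, add_zero, abs_one]
    have := near I
    rw [abs_sub_comm] at this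
    push_cast
    linarith
  rw [abs_le] at a1 a2 ⊢
  constructor <;> linarith [a1.1, a1.2, a2.1, a2.2]

/-- If the integer parts of `2^K F₀` and `2^K F` jointly determine the outcome, while `F` is within
`O(2^{-c})` of `F₀`, then the full entropy is at most that of `⌊2^K F₀⌋` plus the entropy of
`⌊2^K F⌋` lying strictly between the scales `2^{-c}` and `2^{-K}`. -/
lemma ent_le_of_pair {Ω : Type*} {a : Ω →₀ ℝ} (ha : IsP a) {F0 F : Ω → ℝ} {b c K k : ℕ}
    (hbc : b + c = K)
    (hinj : ∀ x y, a x ≠ 0 → a y ≠ 0 → ⌊(2 : ℝ) ^ K * F0 x⌋ = ⌊(2 : ℝ) ^ K * F0 y⌋ →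
      ⌊(2 : ℝ) ^ K * F x⌋ = ⌊(2 : ℝ) ^ K * F y⌋ → x = y)
    (hnear : ∀ x, a x ≠ 0 → 2 ^ c * |F x - F0 x| ≤ k) :
    ent a + QZ b (law a fun x => ⌊(2 : ℝ) ^ K * F x⌋) ≤
      HZ (law a fun x => ⌊(2 : ℝ) ^ K * F0 x⌋) + Real.logb 2 (2 * k + 1) +
        HZ (law a fun x => ⌊(2 : ℝ) ^ K * F x⌋) := by
  rw [HZ_law, HZ_law, QZ_law]
  have h1 := ent_le_of_inj ha (fun x => (⌊(2 : ℝ) ^ K * F0 x⌋, ⌊(2 : ℝ) ^ K * F x⌋))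
    fun x y hx hy e => by
      rw [Prod.mk.injEq] at e
      exact hinj x y hx hy e.1 e.2
  have h2 := ent_submod ha (fun x => ⌊(2 : ℝ) ^ K * F0 x⌋) (fun x => ⌊(2 : ℝ) ^ K * F x⌋)
    (fun z => z / 2 ^ b)
  have scale : ∀ G : ℝ, ⌊(2 : ℝ) ^ K * G⌋ / 2 ^ b = ⌊(2 : ℝ) ^ c * G⌋ := by
    intro G
    rw [floor_div_pow]
    congr 1
    rw [← hbc, pow_add]
    field_simp
  have h3 : ent (a.mapDomain fun x => (⌊(2 : ℝ) ^ K * F0 x⌋, ⌊(2 : ℝ) ^ K * F x⌋ / 2 ^ b)) ≤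
      ent (a.mapDomain fun x => ⌊(2 : ℝ) ^ K * F0 x⌋) + Real.logb 2 (2 * k + 1) := by
    refine ent_map_le_of_fiber ha _ _ fun w =>
      ⟨(Finset.Icc (w / 2 ^ b - k) (w / 2 ^ b + k)).image fun z => (w, z), ?_, ?_⟩
    · refine (Nat.cast_le.mpr Finset.card_image_le).trans ?_
      have : (w / 2 ^ b + k + 1 - (w / 2 ^ b - k)).toNat = 2 * k + 1 := by omega
      rw [Int.card_Icc, this]; push_cast; exact le_rfl
    · rintro x hx rfl
      refine Finset.mem_image.mpr ⟨_, Finset.mem_Icc.mpr ?_, rfl⟩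
      rw [scale, scale]
      have := abs_le.mp (abs_floor_sub_le (k := k) (u := (2 : ℝ) ^ c * F x) (v := 2 ^ c * F0 x) (by
        rw [← mul_sub, abs_mul, abs_of_pos (by positivity)]
        exact hnear x hx))
      constructor <;> linarith [this.1, this.2]
  linarith

lemma chi_pos [Nonempty Λ] (hp : ∀ i, 0 < p i) {r : Λ → ℝ} (hr : ∀ i, 0 < |r i| ∧ |r i| < 1) :
    0 < chi p r := by
  rw [chi, ← Finset.sum_neg_distrib]
  refine Finset.sum_pos (fun i _ => ?_) Finset.univ_nonempty
  have := mul_pos (hp i) (neg_pos.mpr (Real.logb_neg (by norm_num : (1 : ℝ) < 2) (hr i).1 (hr i).2))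
  linarith

lemma Good.chi_le {ρ0 ρ1 R x0 : ℝ} {p r s : Λ → ℝ} (hg : Good ρ0 ρ1 R p r s x0) {m : ℕ}
    (hm : 1 ≤ 2 ^ m * ρ0) : chi p r ≤ m := by
  have hl : -Real.logb 2 ρ0 ≤ m := by
    have h1 : Real.logb 2 1 ≤ Real.logb 2 (2 ^ m * ρ0) :=
      Real.logb_le_logb_of_le (by norm_num) (by norm_num) hm
    rw [Real.logb_one, Real.logb_mul (by positivity) hg.ρ0_pos.ne', Real.logb_pow,
      Real.logb_self_eq_one (by norm_num)] at h1
    linarith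
  rw [chi, ← Finset.sum_neg_distrib]
  calc ∑ i, -(p i * Real.logb 2 |r i|) ≤ ∑ i, p i * m := by
        refine Finset.sum_le_sum fun i _ => ?_
        have : Real.logb 2 ρ0 ≤ Real.logb 2 |r i| :=
          Real.logb_le_logb_of_le (by norm_num) hg.ρ0_pos (hg.r_ge i)
        have := mul_le_mul_of_nonneg_left (show -Real.logb 2 |r i| ≤ m by linarith) (hg.p_pos i).le
        linarith
    _ = m := by rw [← Finset.sum_mul, hg.p_sum, one_mul]

lemma lt_simDim [Nonempty Λ] (hp : ∀ i, 0 < p i) {t0 : ℝ} (hr : ∀ i, 0 < |r i t0| ∧ |r i t0| < 1)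
    {α : ℝ} (h : α < simDim p r t0) :
    α * chi p (fun j => r j t0) < -∑ i, p i * Real.logb 2 (p i) := by
  have hχ := chi_pos hp hr
  have e1 : ∑ i, p i * Real.log |r i t0| = -(chi p (fun j => r j t0) * Real.log 2) := by
    rw [chi, neg_mul, neg_neg, Finset.sum_mul]
    refine Finset.sum_congr rfl fun i _ => ?_
    rw [Real.logb, mul_assoc, div_mul_cancel₀ _ (Real.log_pos (by norm_num)).ne']
  have e2 : ∑ i, p i * Real.log (p i) = -((-∑ i, p i * Real.logb 2 (p i)) * Real.log 2) := by
    rw [neg_mul, neg_neg, Finset.sum_mul]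
    refine Finset.sum_congr rfl fun i _ => ?_
    rw [Real.logb, mul_assoc, div_mul_cancel₀ _ (Real.log_pos (by norm_num)).ne']
  rw [simDim, e1, e2, neg_div_neg_eq, mul_div_mul_right _ _ (Real.log_pos (by norm_num)).ne',
    lt_div_iff₀ hχ] at h
  exact h

end

/-! ### Entropy at nearby parameters -/

section

/-- The comparison of scales behind the separation of coding points, for `d ≈ 2^{-nm}`: points in a
common cell of size `2^{-3nm}` stay below the transversality threshold `Cβ 2^{-nβ}` while moving at
speed `2L` for time `d`, and the separation `Cβ 2^{-nβ} d` gained in that time exceeds the size of a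
cell. -/
lemma scales {n m : ℕ} {β Cβ L d : ℝ} (hm : β + 3 ≤ m) (hC : 0 < Cβ) (hL : 0 ≤ L)
    (hd1 : (2 : ℝ) ^ (-((n * m : ℕ) : ℝ) - (m : ℝ)) ≤ d)
    (hd2 : d ≤ (2 : ℝ) ^ (-((n * m : ℕ) : ℝ) + (m : ℝ)))
    (hz1 : (1 / 2 : ℝ) ^ (3 * n) * (1 + 2 * L * 2 ^ m) ≤ Cβ)
    (hz2 : (1 / 2 : ℝ) ^ (3 * n) * (2 * 2 ^ m) < Cβ) :
    1 / 2 ^ (3 * n * m) + 2 * L * d ≤ Cβ * ((2 : ℝ) ^ (-(n : ℝ))) ^ β ∧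
      1 / 2 ^ (3 * n * m) < Cβ * ((2 : ℝ) ^ (-(n : ℝ))) ^ β * d - 1 / 2 ^ (3 * n * m) ∧
      2 ^ (n * m) * d ≤ 2 ^ m := by
  set q : ℝ := 1 / 2 ^ (n * m) with hq
  set w : ℝ := ((2 : ℝ) ^ (-(n : ℝ))) ^ β with hw
  set z : ℝ := (1 / 2 : ℝ) ^ (3 * n) with hz
  have hq0 : 0 < q := by positivity
  have hw0 : 0 < w := by positivity
  have hz0 : 0 < z := by positivity
  have hq1 : q ≤ 1 := by
    rw [hq, div_le_one (by positivity)]; exact one_le_pow₀ (by norm_num)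
  have eq1 : (2 : ℝ) ^ (-((n * m : ℕ) : ℝ)) = q := by
    rw [Real.rpow_neg (by norm_num), Real.rpow_natCast, hq, one_div]
  have eK : (1 : ℝ) / 2 ^ (3 * n * m) = q * q * q := by
    rw [hq]
    have : 3 * n * m = n * m + n * m + n * m := by ring
    rw [this, pow_add, pow_add]
    field_simp
  have hqwz : q ≤ w * z := by
    rw [← eq1, hw, hz, ← Real.rpow_mul (by norm_num), ← Real.rpow_natCast (1 / 2) (3 * n), one_div,
      Real.inv_rpow (by norm_num), ← Real.rpow_neg (by norm_num), ← Real.rpow_add (by norm_num)]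
    refine Real.rpow_le_rpow_of_exponent_le (by norm_num) ?_
    push_cast
    have : (0 : ℝ) ≤ n := Nat.cast_nonneg _
    nlinarith
  have hP : (0 : ℝ) < 2 ^ m := by positivity
  rw [Real.rpow_add (by norm_num), eq1, Real.rpow_natCast] at hd2
  rw [Real.rpow_sub (by norm_num), eq1, Real.rpow_natCast, div_le_iff₀ hP] at hd1
  rw [eK]
  have hqqq : q * q * q ≤ q := by
    have : q * q ≤ 1 := by nlinarith
    nlinarith
  refine ⟨?_, ?_, ?_⟩
  · have a1 : 2 * L * d ≤ 2 * L * (q * 2 ^ m) := mul_le_mul_of_nonneg_left hd2 (by positivity)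
    have a2 : q * (1 + 2 * L * 2 ^ m) ≤ w * z * (1 + 2 * L * 2 ^ m) :=
      mul_le_mul_of_nonneg_right hqwz (by positivity)
    have a3 : w * (z * (1 + 2 * L * 2 ^ m)) ≤ w * Cβ := mul_le_mul_of_nonneg_left hz1 hw0.le
    linarith
  · have b1 : q * q * q ≤ q * (w * z) := by
      have : q * q ≤ w * z := by nlinarith
      nlinarith
    have b2 : q * w * (z * (2 * 2 ^ m)) < q * w * Cβ := mul_lt_mul_of_pos_left hz2 (by positivity)
    have b3 : Cβ * w * q ≤ Cβ * w * (d * 2 ^ m) := mul_le_mul_of_nonneg_left hd1 (by positivity)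
    have b4 : 2 * (q * q * q) * 2 ^ m ≤ 2 * (q * (w * z)) * 2 ^ m := by gcongr
    have b5 : 2 * (q * q * q) * 2 ^ m < Cβ * w * d * 2 ^ m := by linarith
    have b6 := lt_of_mul_lt_mul_right b5 hP.le
    linarith
  · have : (2 : ℝ) ^ (n * m) * d ≤ 2 ^ (n * m) * (q * 2 ^ m) :=
      mul_le_mul_of_nonneg_left hd2 (by positivity)
    have e : (2 : ℝ) ^ (n * m) * (q * 2 ^ m) = 2 ^ m := by rw [hq]; field_simp
    linarith

/-- The splitting `3nm = b + c` at the level `c ≈ nχ` of a typical cylinder of generation `n`. -/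
lemma exists_ceil {n m : ℕ} {χ : ℝ} (h0 : 0 ≤ χ) (h1 : χ ≤ m) :
    ∃ b c : ℕ, b + c = 3 * n * m ∧ c ≤ n * m ∧ |(c : ℝ) - n * χ| ≤ 1 := by
  have hn : (0 : ℝ) ≤ n * χ := by positivity
  have hc : ⌈(n : ℝ) * χ⌉₊ ≤ n * m := by
    rw [Nat.ceil_le]; push_cast; gcongr
  refine ⟨3 * n * m - ⌈(n : ℝ) * χ⌉₊, ⌈(n : ℝ) * χ⌉₊, ?_, hc, ?_⟩
  · have : n * m ≤ 3 * n * m := by nlinarith [Nat.zero_le (n * m)]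
    omega
  · have a1 := Nat.le_ceil ((n : ℝ) * χ)
    have a2 := Nat.ceil_lt_add_one hn
    rw [abs_le]; constructor <;> linarith

end

/-- if `dim μ_{t₀} < min(1, sd μ_{t₀})`, then nearby parameters
`t` with `|t - t₀| = 2^{-nm±m}` have normalized entropy at scale `2^{-3nm}` exceeding
`dim μ_{t₀}` by a definite amount. -/
theorem stmt8 {Λ : Type*} [Fintype Λ] [Nonempty Λ] (a b : ℝ)
    (r s : Λ → ℝ → ℝ)
    (hcontr : ∀ i, ∀ t ∈ Ioo a b, 0 < |r i t| ∧ |r i t| < 1)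
    (hC2 : ∀ i, ContDiffOn ℝ 2 (r i) (Ioo a b) ∧ ContDiffOn ℝ 2 (s i) (Ioo a b))
    (hreg : ∀ J' ⊆ Ioo a b, IsCompact J' →
      ∃ C : ℝ, ∀ x : ℕ → Λ, ∀ t ∈ J',
        |deriv (codingPoint r s x) t| ≤ C ∧ |deriv (deriv (codingPoint r s x)) t| ≤ C)
    (β : ℝ) (hβ : 0 ≤ β)
    (htrans : ∃ Cβ : ℝ, 0 < Cβ ∧ ∀ t ∈ Ioo a b, ∀ x y : ℕ → Λ, x ≠ y →
      |codingPoint r s x t - codingPoint r s y t| ≤ Cβ * seqDist x y ^ β →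
      Cβ * seqDist x y ^ β ≤ |deriv (fun u => codingPoint r s x u - codingPoint r s y u) t|)
    (p : Λ → ℝ) (hp : ∀ i, 0 < p i) (hp1 : ∑ i : Λ, p i = 1)
    (μ : ℝ → Measure ℝ) (hμ : ∀ t ∈ Ioo a b, IsSelfSimilarMeasure r s p t (μ t))
    (t0 : ℝ) (ht0 : t0 ∈ Ioo a b)
    (dimf : ℝ → ℝ) (hdim : ∀ t ∈ Ioo a b, ExactDim (μ t) (dimf t))
    (hlt : dimf t0 < min 1 (simDim p r t0)) :
    ∃ m : ℕ, β + 3 ≤ (m : ℝ) ∧ ∃ δ3 : ℝ, 0 < δ3 ∧ ∃ ε0 : ℝ, 0 < ε0 ∧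
      ∀ t ∈ Ioo a b, t ≠ t0 → |t - t0| < ε0 →
        ∀ n : ℕ,
          (2 : ℝ) ^ (-((n * m : ℕ) : ℝ) - (m : ℝ)) ≤ |t - t0| →
          |t - t0| ≤ (2 : ℝ) ^ (-((n * m : ℕ) : ℝ) + (m : ℝ)) →
          dimf t0 + δ3 ≤ (1 / ((3 * n * m : ℕ) : ℝ)) * ent1 (μ t) (3 * n * m) := by
  obtain ⟨Cβ, hC, htr⟩ := htrans
  obtain ⟨ρ0, ρ1, R, ℓ, η, hη, hsub, hloc⟩ := exists_loc hcontr hC2 ht0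
  set N := Metric.ball t0 η with hN
  have hNc : N.OrdConnected := (convex_ball t0 η).ordConnected
  have ht0N : t0 ∈ N := Metric.mem_ball_self hη
  have htrN := fun t (ht : t ∈ N) => htr t (hsub ht)
  set L := ℓ * (1 + R) / (1 - ρ1) with hL
  have hL0 : 0 ≤ L := by
    have := hloc.ℓ_nonneg; have := hloc.R_pos; have := hloc.ρ1_lt
    exact div_nonneg (by positivity) (by linarith)
  let i : Λ := Classical.arbitrary Λ
  have good := fun t (ht : t ∈ N) => hloc.good ht hp hp1 (extSeq i [])
  have link : ∀ t ∈ N, Link p (fun j => r j t) (fun j => s j t)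
      (codingPoint r s (extSeq i []) t) (ent1 (μ t)) := by
    intro t ht
    obtain ⟨hprob, hself⟩ := hμ t (hsub ht)
    exact (good t ht).link hself
  obtain ⟨hprob0, hself0⟩ := hμ t0 ht0
  set α := dimf t0 with hα
  have hα0 : 0 ≤ α := exactDim_nonneg (hdim t0 ht0)
  have hα1 : α < 1 := hlt.trans_le (min_le_left _ _)
  have htend := ent1_tendsto (good t0 ht0N) ((good t0 ht0N).support_bdd hself0) (hdim t0 ht0) hα1.le
  set χ := chi p (fun j => r j t0) with hχ
  set h := -∑ i, p i * Real.logb 2 (p i) with hh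
  have hγ : α * χ < h := lt_simDim hp (fun i => hcontr i t0 ht0) (hlt.trans_le (min_le_right _ _))
  -- the exponent `m`
  obtain ⟨m1, hm1⟩ := exists_nat_ge (β + 3)
  obtain ⟨m2, hm2⟩ := pow_unbounded_of_one_lt (1 / ρ0) (one_lt_two : (1 : ℝ) < 2)
  set m := m1 + m2 with hm
  have hm3 : β + 3 ≤ (m : ℝ) := by
    rw [hm]; push_cast; linarith [Nat.cast_nonneg (α := ℝ) m2]
  have hm4 : 1 ≤ m := by
    have : (1 : ℝ) ≤ m := by linarith
    exact_mod_cast this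
  have hmρ : 1 ≤ 2 ^ m * ρ0 := by
    have h1 : (2 : ℝ) ^ m2 ≤ 2 ^ m := pow_le_pow_right₀ (by norm_num) (by omega)
    have h2 : 1 / ρ0 ≤ 2 ^ m := hm2.le.trans h1
    rwa [div_le_iff₀ hloc.ρ0_pos] at h2
  set ε := (h - α * χ) / 8 with hε
  have hε0 : 0 < ε := by rw [hε]; linarith
  obtain ⟨u1, u2, δ, hδ, n0, hasym⟩ :=
    asymptotic p ρ1 R hloc.ρ0_pos hm4 hmρ hα0 hα1 htend hε0
  obtain ⟨n1, hn1⟩ := eventually_atTop.mp (htend.eventually (ge_mem_nhds (by linarith : α < α + δ)))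
  -- the constant lost when comparing cells at `t` and at `t0`
  set k := ⌈L * 2 ^ m⌉₊ with hk
  set κ := Real.logb 2 (2 * (k : ℝ) + 1) with hκ
  have hev : ∀ᶠ n : ℕ in atTop, (1 / 2 : ℝ) ^ (3 * n) * (1 + 2 * L * 2 ^ m) ≤ Cβ ∧
      (1 / 2 : ℝ) ^ (3 * n) * (2 * 2 ^ m) < Cβ ∧ α + κ < 5 * ε * n := by
    have hz : Tendsto (fun n : ℕ => (1 / 2 : ℝ) ^ (3 * n)) atTop (nhds 0) := by
      refine (tendsto_pow_atTop_nhds_zero_of_lt_one (by norm_num) (by norm_num)).comp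
        (tendsto_atTop_mono (fun n => ?_) tendsto_id)
      simp only [id]; omega
    have z1 := hz.mul_const (1 + 2 * L * 2 ^ m)
    have z2 := hz.mul_const (2 * (2 : ℝ) ^ m)
    rw [zero_mul] at z1 z2
    have z3 : Tendsto (fun n : ℕ => 5 * ε * (n : ℝ)) atTop atTop :=
      tendsto_natCast_atTop_atTop.const_mul_atTop (by positivity)
    exact (z1.eventually (ge_mem_nhds hC)).and ((z2.eventually (gt_mem_nhds hC)).and
      (z3.eventually (eventually_gt_atTop _)))
  obtain ⟨n2, hn2⟩ := eventually_atTop.mp hev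
  set n3 := n0 + n1 + n2 + 1 with hn3
  refine ⟨m, hm3, δ, hδ, min η (min ((2 : ℝ) ^ (-((n3 * m : ℕ) : ℝ) - (m : ℝ)))
    (1 / (2 ^ (u1 + u2) * (L + 1)))), by positivity, ?_⟩
  intro t ht htne htε n hd1 hd2
  have htN : t ∈ N := by
    rw [hN, Metric.mem_ball, Real.dist_eq]; exact htε.trans_le (min_le_left _ _)
  have hn : n3 ≤ n := by
    by_contra hcon
    push Not at hcon
    have c1 : |t - t0| < (2 : ℝ) ^ (-((n3 * m : ℕ) : ℝ) - (m : ℝ)) :=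
      htε.trans_le ((min_le_right _ _).trans (min_le_left _ _))
    have c2 : (2 : ℝ) ^ (-((n3 * m : ℕ) : ℝ) - (m : ℝ)) ≤
        (2 : ℝ) ^ (-((n * m : ℕ) : ℝ) - (m : ℝ)) := by
      refine Real.rpow_le_rpow_of_exponent_le (by norm_num) ?_
      have : ((n * m : ℕ) : ℝ) ≤ ((n3 * m : ℕ) : ℝ) := by
        exact_mod_cast Nat.mul_le_mul_right m hcon.le
      linarith
    linarith
  obtain ⟨hz1, hz2, hbig⟩ := hn2 n (by omega)
  have hclose : ∀ u ≤ u1 + u2, |ent1 (μ t) u - ent1 (μ t0) u| ≤ 10 := by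
    intro u hu
    refine hloc.ent_close hp hp1 htN ht0N i (link t htN) (link t0 ht0N) ?_
    rw [← hL]
    have c1 : |t - t0| ≤ 1 / (2 ^ (u1 + u2) * (L + 1)) :=
      (htε.trans_le ((min_le_right _ _).trans (min_le_right _ _))).le
    rw [le_div_iff₀ (by positivity)] at c1
    have c2 : (2 : ℝ) ^ u ≤ 2 ^ (u1 + u2) := pow_le_pow_right₀ (by norm_num) hu
    calc (2 : ℝ) ^ u * (L * |t - t0|) ≤ 2 ^ (u1 + u2) * ((L + 1) * |t - t0|) := by
          gcongr; linarith
      _ ≤ 1 := by linarith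
  by_contra hcon
  push Not at hcon
  have hKpos : 0 < 3 * n * m := by
    have : 0 < n := by omega
    positivity
  have hKpos' : (0 : ℝ) < (3 * n * m : ℕ) := by exact_mod_cast hKpos
  have hlow : ent1 (μ t) (3 * n * m) ≤ (α + δ) * (3 * n * m : ℕ) := by
    rw [one_div, inv_mul_lt_iff₀ hKpos'] at hcon
    linarith
  have hlow0 : ent1 (μ t0) (3 * n * m) ≤ (α + δ) * (3 * n * m : ℕ) := by
    have := hn1 (3 * n * m) (by nlinarith)
    rwa [div_le_iff₀ hKpos'] at this
  -- the multiscale estimates at `t` and at `t0`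
  obtain ⟨b', c, hbc, hc, hcχ⟩ := exists_ceil (n := n) (chi_pos hp fun i => hcontr i t ht).le
    ((good t htN).chi_le hmρ)
  obtain ⟨b0, c0, hbc0, hc0, hcχ0⟩ := exists_ceil (n := n) (chi_pos hp fun i => hcontr i t0 ht0).le
    ((good t0 ht0N).chi_le hmρ)
  have A := (hasym _ _ _ _ (good t htN) (link t htN) (hclose u1 (by omega)) (hclose u2 (by omega)) n
    (by omega) b' c hbc hc hcχ hlow).1
  have A0 := hasym _ _ _ _ (good t0 ht0N) (link t0 ht0N) (by simp) (by simp) n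
    (by omega) b0 c0 hbc0 hc0 hcχ0 hlow0
  obtain ⟨s1, s2, s3⟩ := scales hm3 hC hL0 hd1 hd2 hz1 hz2
  have hK2 : (0 : ℝ) < 2 ^ (3 * n * m) := by positivity
  have cell : ∀ x y : ℝ, ⌊(2 : ℝ) ^ (3 * n * m) * x⌋ = ⌊(2 : ℝ) ^ (3 * n * m) * y⌋ →
      |x - y| ≤ 1 / 2 ^ (3 * n * m) := by
    intro x y e
    have := Int.abs_sub_lt_one_of_floor_eq_floor e
    rw [← mul_sub, abs_mul, abs_of_pos hK2] at this
    rw [le_div_iff₀ hK2]; linarith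
  have main := ent_le_of_pair (isP_WL hp hp1 n)
    (F0 := fun I => wf (fun j => r j t0) (fun j => s j t0) I (codingPoint r s (extSeq i []) t0))
    (F := fun I => wf (fun j => r j t) (fun j => s j t) I (codingPoint r s (extSeq i []) t))
    (k := k) hbc
    (by
      intro I J hI hJ e0 e
      by_contra hne
      simp only [hloc.wf_eq htN, hloc.wf_eq ht0N] at e0 e
      have := hloc.separation hNc hC hβ htrN htN ht0N i (length_of_WL hI) (length_of_WL hJ) hne
        (cell _ _ e0) (by rw [← hL]; exact s1)
      linarith [cell _ _ e])
    (by
      intro I _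
      rw [hloc.wf_eq htN, hloc.wf_eq ht0N]
      have l1 := hloc.coding_lip htN ht0N (extSeq i I)
      rw [← hL] at l1
      have l2 : (2 : ℝ) ^ c ≤ 2 ^ (n * m) := pow_le_pow_right₀ (by norm_num) hc
      calc (2 : ℝ) ^ c * |codingPoint r s (extSeq i I) t - codingPoint r s (extSeq i I) t0|
          ≤ 2 ^ (n * m) * (L * |t - t0|) := by gcongr
        _ = L * (2 ^ (n * m) * |t - t0|) := by ring
        _ ≤ L * 2 ^ m := by gcongr
        _ ≤ k := Nat.le_ceil _)
  rw [ent_WL hp hp1 n, ← hh, ← hκ] at main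
  rw [YA] at A
  simp only [YA] at A0
  have hc0' : (c0 : ℝ) ≤ n * χ + 1 := by linarith [(abs_le.mp hcχ0).2]
  have : α * c0 ≤ α * (n * χ + 1) := mul_le_mul_of_nonneg_left hc0' hα0
  have e8 : h = α * χ + 8 * ε := by rw [hε]; ring
  have : (n : ℝ) * h = n * (α * χ) + 8 * (ε * n) := by rw [e8]; ring
  linarith [A0.1, A0.2]

end
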